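/- For every integer k ≥ 1 there exists a finite simple graph G_k with n_k = 8k vertices that admits an IC-planar straight-line drawing, such that every straight-line drawing of G_k that is simultaneously IC-planar and RAC and in which every edge segment has length at least 1 has a bounding box of area at least (1.09)^{n_k}. Hence IC-planar straight-line RAC drawings may require area exponential in the number of vertices. -/

import Mathlib

/-- The open straight-line segment representing an edge (an unordered pair of
vertices) in a straight-line drawing `ρ`. -/
def edgeSeg {V : Type*} (ρ : V → ℝ × ℝ) : Sym2 V → Set (ℝ × ℝ) :=
  Sym2.lift ⟨fun u v => openSegment ℝ (ρ u) (ρ v),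
    fun u v => openSegment_symm ℝ (ρ u) (ρ v)⟩

/-- Two edges *cross* in the drawing `ρ`: they share no endpoint and
their open segments meet. -/
def Crosses {V : Type*} (ρ : V → ℝ × ℝ) (e f : Sym2 V) : Prop :=
  (∀ v : V, v ∈ e → v ∉ f) ∧ (edgeSeg ρ e ∩ edgeSeg ρ f).Nonempty

/-- `ρ` is a straight-line drawing of the simple graph `G`. -/
structure IsStraightLineDrawing {V : Type*} (G : SimpleGraph V) (ρ : V → ℝ × ℝ) : Prop where
  inj : Function.Injective ρ
  no_vertex_on_edge : ∀ e ∈ G.edgeSet, ∀ v : V, v ∉ e → ρ v ∉ edgeSeg ρ e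
  meet_at_most_once : ∀ e ∈ G.edgeSet, ∀ f ∈ G.edgeSet, (∀ v : V, v ∈ e → v ∉ f) →
    (edgeSeg ρ e ∩ edgeSeg ρ f).Subsingleton

/-- `ρ` is an IC-planar straight-line drawing of `G`: it is a straight-line drawing,
each edge crosses at most one other edge, and the crossed edges form a matching. -/
def IsICPlanarDrawing {V : Type*} (G : SimpleGraph V) (ρ : V → ℝ × ℝ) : Prop :=
  IsStraightLineDrawing G ρ ∧
  (∀ e ∈ G.edgeSet, ∀ f ∈ G.edgeSet, ∀ g ∈ G.edgeSet,
    Crosses ρ e f → Crosses ρ e g → f = g) ∧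
  (∀ e ∈ G.edgeSet, ∀ f ∈ G.edgeSet,
    (∃ e' ∈ G.edgeSet, Crosses ρ e e') → (∃ f' ∈ G.edgeSet, Crosses ρ f f') →
    e ≠ f → ∀ v : V, v ∈ e → v ∉ f)

/-- All vertices are placed at integer coordinates. -/
def IsGridDrawing {V : Type*} (ρ : V → ℝ × ℝ) : Prop :=
  ∀ v : V, ∃ a b : ℤ, ρ v = ((a : ℝ), (b : ℝ))

/-- `ρ` is a RAC drawing of `G`: any two crossing edges are perpendicular. -/
def IsRACDrawing {V : Type*} (G : SimpleGraph V) (ρ : V → ℝ × ℝ) : Prop :=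
  ∀ e ∈ G.edgeSet, ∀ f ∈ G.edgeSet, Crosses ρ e f →
    ∀ a b c d : V, e = s(a, b) → f = s(c, d) →
      ((ρ b).1 - (ρ a).1) * ((ρ d).1 - (ρ c).1)
        + ((ρ b).2 - (ρ a).2) * ((ρ d).2 - (ρ c).2) = 0

theorem step_core (p a t : ℝ) (hp : 0 < p) (hp1 : p < 1) (ha : 1 < a) (ht : 0 < t)
    (hD : 0 < p^2*a*(a-1) - t*p*(1-p)) :
    2*p*(p^2*a*(a-1) - t*p*(1-p))*(1+p^2+t+t/a^2) ≤
      (2*(p^2*a*(a-1) - t*p*(1-p))+p^2+t)*(a*p+t) := by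
  set D := p^2*a*(a-1) - t*p*(1-p) with hDdef
  have hDle : D ≤ p^2*a*(a-1) := by
    have : 0 ≤ t*p*(1-p) := by have := sub_pos.2 hp1; positivity
    linarith
  set w := 1/a^2 with hw
  have hw0 : 0 < w := by positivity
  have hwa : w * a^2 = 1 := by rw [hw]; field_simp
  have e : t/a^2 = t*w := by rw [hw]; ring
  rw [e]
  have key : 0 ≤ 2*D*(p*(a-1) - p^3 + t*(1-p-p*w)) + (p^2+t)*(a*p+t) := by
    by_cases hB : 0 ≤ p*(a-1) - p^3 + t*(1-p-p*w)
    · positivity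
    · push Not at hB
      have h1 : p^2*a*(a-1)*(p*(a-1) - p^3 + t*(1-p-p*w)) ≤ D*(p*(a-1) - p^3 + t*(1-p-p*w)) :=
        mul_le_mul_of_nonpos_right hDle hB.le
      have h2 : 0 ≤ a*p^3*(1+2*(a-1)^2-2*(a-1)*p^2) := by
        have : 0 ≤ 1+2*(a-1)^2-2*(a-1)*p^2 := by
          have : (a-1)*p^2 ≤ (a-1)*1 := mul_le_mul_of_nonneg_left (by nlinarith) (by linarith)
          nlinarith [sq_nonneg (2*(a-1)-1)]
        positivity
      have h3 : 0 ≤ 2*p^2*a*(a-1)*(1-p-p*w) + a*p + p^2 := by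
        have hwle : a*w ≤ 1 := by nlinarith
        have hh : a*(a-1)*w ≤ 1 := by nlinarith
        have h4 : 2*p^2*a*(a-1)*(1-p-p*w) = 2*p^2*(a*(a-1))*(1-p) - 2*p^3*(a*(a-1)*w) := by ring
        have h5 : 0 ≤ 2*p^2*(a*(a-1))*(1-p) := by
          have := sub_pos.2 hp1; have := sub_pos.2 ha; positivity
        have h6 : 2*p^3*(a*(a-1)*w) ≤ 2*p^3*1 := by gcongr
        have h7 : 2*p^3 ≤ a*p+p^2 := by nlinarith [mul_pos hp hp, mul_pos (mul_pos hp hp) hp]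
        linarith
      have h8 : 0 ≤ t*(2*p^2*a*(a-1)*(1-p-p*w) + a*p + p^2) := mul_nonneg ht.le h3
      nlinarith [sq_nonneg t]
  nlinarith

theorem step_div (p a t D : ℝ) (hp : 0 < p) (ha : 0 < a) (ht : 0 < t) (hD : 0 < D)
    (c : 2*p*D*(1+p^2+t+t/a^2) ≤ (2*D+p^2+t)*(a*p+t)) :
    2*((1+p^2+t+t/a^2)/ (p+t/a)) ≤ (a/p) * (2 + (p^2+t) / D) := by
  have x1 : (a/p) * (2 + (p^2+t) / D) = (a*(2*D+p^2+t))/(p*D) := by field_simp; ring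
  have x2 : p+t/a = (a*p+t)/a := by field_simp
  rw [x1,x2, ← mul_div_assoc, div_div_eq_mul_div, div_le_div_iff₀ (by positivity) (by positivity)]
  nlinarith [mul_le_mul_of_nonneg_left c ha.le]

theorem step_ineq (r s u v A B : ℝ) (hr : 0 < r) (hs : 0 < s) (hru : r < u) (hsv : s < v)
    (huA : u < A) (hvB : v < B) (h1 : u*v ≤ A*s) (h2 : u*v ≤ B*r)
    (hD : 0 < A*(A-u) - v*(B-v)) :
    2*((u*v-r*s)*(r^2+v^2+u^2+s^2))*(A*(A-u)-v*(B-v)) ≤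
     ((A*B-u*v)*(2*(A*(A-u)-v*(B-v)) + u^2+B^2))*(r*u+s*v) := by
  have hu : 0 < u := hr.trans hru
  have hv : 0 < v := hs.trans hsv
  have hA : 0 < A := hu.trans huA
  set B0 := u*v/r with hB0
  set s0 := u*v/A with hs0
  have hs0s : s0 ≤ s := by rw [hs0, div_le_iff₀ hA]; linarith
  have hs0p : 0 < s0 := by positivity
  have hB0B : B0 ≤ B := by rw [hB0, div_le_iff₀ hr]; linarith
  have hB0p : 0 < B0 := by positivity
  have hB0v : v < B0 := by rw [hB0, lt_div_iff₀ hr]; nlinarith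
  have hD0 : 0 < A*(A-u) - v*(B0-v) := by nlinarith
  have m1 : (A*B0-u*v)*(2+(u^2+B0^2)/(A*(A-u) - v*(B0-v))) ≤
      (A*B-u*v)*(2+(u^2+B^2)/(A*(A-u) - v*(B-v))) := by
    have : 0 < A*B0-u*v := by nlinarith
    have : 0 < A*B-u*v := by nlinarith
    gcongr
  have m2 : (u*v-r*s)*((r^2+v^2+u^2+s^2)/(r*u+s*v)) ≤
      (u*v-r*s0)*((r^2+v^2+u^2+s0^2)/(r*u+s0*v)) := by
    have q1 : (r^2+v^2+u^2+s^2)/(r*u+s*v) ≤ (r^2+v^2+u^2+s0^2)/(r*u+s0*v) := by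
      rw [div_le_div_iff₀ (by positivity) (by positivity)]
      have : 0 ≤ (s-s0)*(v*(r^2+v^2+u^2) - r*u*(s+s0) - s*s0*v) := by
        apply mul_nonneg (by linarith)
        have : r*u*(s+s0) ≤ r*u*(2*v) := by gcongr; linarith
        have : s*s0 ≤ v*v := by gcongr; linarith
        nlinarith [sq_nonneg (r-u)]
      nlinarith
    have : 0 < u*v-r*s := by nlinarith
    have : u*v-r*s ≤ u*v-r*s0 := by nlinarith
    gcongr
    linarith
  have m3 : 2*((u*v-r*s0)*((r^2+v^2+u^2+s0^2)/(r*u+s0*v))) ≤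
      (A*B0-u*v)*(2+(u^2+B0^2)/(A*(A-u) - v*(B0-v))) := by
    have hD1 : 0 < (r/u)^2*(A/u)*((A/u)-1) - (v/u)^2*(r/u)*(1-(r/u)) := by
      have : (r/u)^2*(A/u)*((A/u)-1) - (v/u)^2*(r/u)*(1-(r/u)) =
        (r/u)^2*(A*(A-u) - v*(B0-v))/u^2 := by rw [hB0]; field_simp
      rw [this]; positivity
    have c := step_core (r/u) (A/u) ((v/u)^2) (by positivity) (by rw [div_lt_one hu]; exact hru)
      (by rw [lt_div_iff₀ hu]; linarith) (by positivity) hD1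
    have e1 : (u*v-r*s0)*((r^2+v^2+u^2+s0^2)/(r*u+s0*v)) =
       v*(A-r)/A * u * ((1+(r/u)^2+(v/u)^2+(v/u)^2/(A/u)^2)/ (r/u+(v/u)^2/(A/u))) := by
      rw [hs0]; field_simp; ring
    have e2 : (A*B0-u*v)*(2+(u^2+B0^2)/(A*(A-u) - v*(B0-v))) =
      v*(A-r)/A * u * ((A/r) * (2 + ((r/u)^2+(v/u)^2) / ((r/u)^2*(A/u)*((A/u)-1) - (v/u)^2*(r/u)*(1-(r/u))))) := by
      have : (r/u)^2*(A/u)*((A/u)-1) - (v/u)^2*(r/u)*(1-(r/u)) =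
        (r/u)^2*(A*(A-u) - v*(B0-v))/u^2 := by rw [hB0]; field_simp
      rw [this]
      have e3 : u^2+B0^2 = ((r/u)^2+(v/u)^2)*(u^2/r)^2 := by rw [hB0]; field_simp
      have e4 : A*B0-u*v = u*v*(A-r)/r := by rw [hB0]; field_simp
      rw [e3, e4]
      generalize A*(A-u) - v*(B0-v) = D at *
      field_simp
    rw [e1, e2]
    generalize (r/u)^2*(A/u)*((A/u)-1) - (v/u)^2*(r/u)*(1-(r/u)) = D at *
    have : 2*((1+(r/u)^2+(v/u)^2+(v/u)^2/(A/u)^2)/ (r/u+(v/u)^2/(A/u))) ≤ (A/r) * (2 + ((r/u)^2+(v/u)^2) / D) := by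
      have x3 : A/r = (A/u)/(r/u) := by field_simp
      rw [x3]
      exact step_div _ _ _ _ (by positivity) (by positivity) (by positivity) hD1 c
    have hpos : 0 ≤ v*(A-r)/A * u := by
      have : 0 < A - r := by linarith
      positivity
    rw [← mul_assoc, mul_comm 2, mul_assoc]
    exact mul_le_mul_of_nonneg_left this hpos
  have m4 := (mul_le_mul_of_nonneg_left m2 (by norm_num : (0:ℝ) ≤ 2)).trans (m3.trans m1)
  have x : 2*((u*v-r*s)*((r^2+v^2+u^2+s^2)/(r*u+s*v))) = 2*((u*v-r*s)*(r^2+v^2+u^2+s^2))/(r*u+s*v) := by ring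
  generalize A*(A-u)-v*(B-v) = D at *
  have y : (A*B-u*v)*(2+(u^2+B^2)/D) = ((A*B-u*v)*(2*D + u^2+B^2))/D := by field_simp; ring
  rw [x, y, div_le_div_iff₀ (by positivity) hD] at m4
  exact m4

theorem mono_line (a b c d G H e : ℝ) (ha : 0 ≤ a) (hb : 0 ≤ b) (hc : 0 ≤ c) (hd : 0 ≤ d)
    (hab : a + b = 1) (hcd : c + d = 1) (hG : 0 ≤ G) (hH : 0 ≤ H) (he : 0 ≤ e)
    (hL : 2 * e ≤ G + H) :
    (a*d-b*c) * e * ((a^2*G+b^2*H+2*a*b*e)+(c^2*G+d^2*H+2*c*d*e)) ≤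
      (G+H) * (a*c*G+b*d*H+(a*d+b*c)*e) := by
  have hb' : b = 1 - a := by linarith
  have hd' : d = 1 - c := by linarith
  have h1 : (a*d-b*c) = a - c := by subst hb' hd'; ring
  have hPQ0 : 0 ≤ a*c*G+b*d*H := by positivity
  have hPQ : (a-c)*e ≤ a*c*G+b*d*H+(a*d+b*c)*e := by
    have : (a - c) * e ≤ (a*d+b*c)*e := by
      apply mul_le_mul_of_nonneg_right _ he
      have : 0 ≤ b*c := by positivity
      linarith
    linarith
  set S := a*c*G+b*d*H+(a*d+b*c)*e with hS
  have hS0 : 0 ≤ S := by positivity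
  have h2 : (a^2*G+b^2*H+2*a*b*e)+(c^2*G+d^2*H+2*c*d*e) = 2*S + (a-c)^2*(G+H-2*e) := by
    rw [hS]; subst hb' hd'; ring
  rw [h1, h2]
  have h3 : a - c ≤ 1 := by linarith
  by_cases h4 : 0 ≤ a - c
  · have h5 : (a-c)*e*((a-c)^2*(G+H-2*e)) ≤ S*(1*(G+H-2*e)) := by
      have : 0 ≤ G+H-2*e := by linarith
      gcongr
      nlinarith
    have h6 : (a-c)*(e*S) ≤ 1*(e*S) := by gcongr
    linarith
  · push Not at h4
    have : (a-c)*e ≤ 0 := by nlinarith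
    have h7 : 0 ≤ 2*S + (a-c)^2*(G+H-2*e) := by
      have : 0 ≤ G+H-2*e := by linarith
      positivity
    have : (a-c)*e*(2*S + (a-c)^2*(G+H-2*e)) ≤ 0 := mul_nonpos_of_nonpos_of_nonneg this h7
    have : 0 ≤ (G+H)*S := by positivity
    linarith

theorem mono_bary (a b c d G H e : ℝ) (ha : 0 ≤ a) (hb : 0 ≤ b) (hc : 0 ≤ c) (hd : 0 ≤ d)
    (hab0 : 0 < a + b) (hcd0 : 0 < c + d)
    (hab : a + b ≤ 1) (hcd : c + d ≤ 1) (hG : 0 ≤ G) (hH : 0 ≤ H) (he : 0 ≤ e)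
    (hL : 2 * e ≤ G + H) :
    (a*d-b*c) * e * ((a^2*G+b^2*H+2*a*b*e)+(c^2*G+d^2*H+2*c*d*e)) ≤
      (G+H) * (a*c*G+b*d*H+(a*d+b*c)*e) := by
  set σ := a + b with hσ
  set τ := c + d with hτ
  have l := mono_line (a/σ) (b/σ) (c/τ) (d/τ) G H e (by positivity) (by positivity) (by positivity)
    (by positivity) (by rw [← add_div, div_self hab0.ne']) (by rw [← add_div, div_self hcd0.ne']) hG hH he hL
  have ea : a = σ * (a/σ) := by field_simp
  have eb : b = σ * (b/σ) := by field_simp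
  have ec : c = τ * (c/τ) := by field_simp
  have ed : d = τ * (d/τ) := by field_simp
  have a0 : 0 ≤ a/σ := by positivity
  have b0 : 0 ≤ b/σ := by positivity
  have c0 : 0 ≤ c/τ := by positivity
  have d0 : 0 ≤ d/τ := by positivity
  clear_value σ τ
  generalize a/σ = a' at *
  generalize b/σ = b' at *
  generalize c/τ = c' at *
  generalize d/τ = d' at *
  subst ea eb ec ed
  have e1 : (σ*a'*(τ*d')-σ*b'*(τ*c')) = σ*τ*(a'*d'-b'*c') := by ring
  have e2 : ((σ*a')*(τ*c')*G+(σ*b')*(τ*d')*H+(σ*a'*(τ*d')+σ*b'*(τ*c'))*e) = σ*τ*(a'*c'*G+b'*d'*H+(a'*d'+b'*c')*e) := by ring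
  have e3 : ((σ*a')^2*G+(σ*b')^2*H+2*(σ*a')*(σ*b')*e) ≤ (a'^2*G+b'^2*H+2*a'*b'*e) := by
    have : ((σ*a')^2*G+(σ*b')^2*H+2*(σ*a')*(σ*b')*e) = σ^2*(a'^2*G+b'^2*H+2*a'*b'*e) := by ring
    rw [this]
    have : 0 ≤ (a'^2*G+b'^2*H+2*a'*b'*e) := by positivity
    exact mul_le_of_le_one_left this (by nlinarith)
  have e4 : ((τ*c')^2*G+(τ*d')^2*H+2*(τ*c')*(τ*d')*e) ≤ (c'^2*G+d'^2*H+2*c'*d'*e) := by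
    have : ((τ*c')^2*G+(τ*d')^2*H+2*(τ*c')*(τ*d')*e) = τ^2*(c'^2*G+d'^2*H+2*c'*d'*e) := by ring
    rw [this]
    have : 0 ≤ (c'^2*G+d'^2*H+2*c'*d'*e) := by positivity
    exact mul_le_of_le_one_left this (by nlinarith)
  have hR : 0 ≤ (G+H) * (σ*τ*(a'*c'*G+b'*d'*H+(a'*d'+b'*c')*e)) := by positivity
  rw [e1, e2]
  by_cases hs : 0 ≤ a'*d'-b'*c'
  · calc _ ≤ σ*τ*(a'*d'-b'*c')*e*((a'^2*G+b'^2*H+2*a'*b'*e)+(c'^2*G+d'^2*H+2*c'*d'*e)) := by gcongr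
      _ = σ*τ*((a'*d'-b'*c')*e*((a'^2*G+b'^2*H+2*a'*b'*e)+(c'^2*G+d'^2*H+2*c'*d'*e))) := by ring
      _ ≤ σ*τ*((G+H) * (a'*c'*G+b'*d'*H+(a'*d'+b'*c')*e)) := by gcongr
      _ = _ := by ring
  · push Not at hs
    refine le_trans ?_ hR
    apply mul_nonpos_of_nonpos_of_nonneg
    · apply mul_nonpos_of_nonpos_of_nonneg _ he
      apply mul_nonpos_of_nonneg_of_nonpos (by positivity) hs.le
    · positivity

/-- `Big M X Y`: the quantity `Φ(X,Y)` is at least `M`. -/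
def Big (M x1 x2 y1 y2 : ℝ) : Prop :=
  0 < x1*y1+x2*y2 ∧ 4*M*(x1*y1+x2*y2) ≤ |x1*y2-x2*y1| *(x1^2+x2^2+y1^2+y2^2)

theorem big_mono_pos (M x1 x2 y1 y2 p1 p2 q1 q2 : ℝ) (hdot : 0 < x1*y1+x2*y2)
    (hk : 0 < x1*y2-x2*y1)
    (hp1 : 0 < x1*p2-x2*p1) (hp2 : 0 < p1*y2-p2*y1) (hp3 : (x1*p2-x2*p1) + (p1*y2-p2*y1) < x1*y2-x2*y1)
    (hq1 : 0 < x1*q2-x2*q1) (hq2 : 0 < q1*y2-q2*y1) (hq3 : (x1*q2-x2*q1) + (q1*y2-q2*y1) < x1*y2-x2*y1)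
    (hB : 0 < p1*q1+p2*q2 → 4*M*(p1*q1+p2*q2) ≤ |p1*q2-p2*q1| *(p1^2+p2^2+q1^2+q2^2)) : Big M x1 x2 y1 y2 := by
  refine ⟨hdot, ?_⟩
  set k := x1*y2-x2*y1 with hkd
  obtain ⟨a, ha⟩ : ∃ a, a = (p1*y2-p2*y1)/k := ⟨_, rfl⟩
  obtain ⟨b, hb⟩ : ∃ b, b = (x1*p2-x2*p1)/k := ⟨_, rfl⟩
  obtain ⟨c, hc⟩ : ∃ a, a = (q1*y2-q2*y1)/k := ⟨_, rfl⟩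
  obtain ⟨d, hd⟩ : ∃ b, b = (x1*q2-x2*q1)/k := ⟨_, rfl⟩
  have a0 : 0 < a := by rw [ha]; positivity
  have b0 : 0 < b := by rw [hb]; positivity
  have c0 : 0 < c := by rw [hc]; positivity
  have d0 : 0 < d := by rw [hd]; positivity
  have ab : a + b ≤ 1 := by rw [ha, hb, ← add_div, div_le_one hk]; linarith
  have cd : c + d ≤ 1 := by rw [hc, hd, ← add_div, div_le_one hk]; linarith
  have e1 : p1 = a*x1+b*y1 := by rw [ha, hb]; field_simp; rw [hkd]; ring
  have e2 : p2 = a*x2+b*y2 := by rw [ha, hb]; field_simp; rw [hkd]; ring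
  have e3 : q1 = c*x1+d*y1 := by rw [hc, hd]; field_simp; rw [hkd]; ring
  have e4 : q2 = c*x2+d*y2 := by rw [hc, hd]; field_simp; rw [hkd]; ring
  have hL : 2*(x1*y1+x2*y2) ≤ (x1^2+x2^2)+(y1^2+y2^2) := by nlinarith [sq_nonneg (x1-y1), sq_nonneg (x2-y2)]
  have m1 := mono_bary a b c d (x1^2+x2^2) (y1^2+y2^2) (x1*y1+x2*y2) a0.le b0.le c0.le d0.le
    (by positivity) (by positivity) ab cd (by positivity) (by positivity) hdot.le hL
  have m2 := mono_bary c d a b (x1^2+x2^2) (y1^2+y2^2) (x1*y1+x2*y2) c0.le d0.le a0.le b0.le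
    (by positivity) (by positivity) cd ab (by positivity) (by positivity) hdot.le hL
  have s1 : a^2*(x1^2+x2^2)+b^2*(y1^2+y2^2)+2*a*b*(x1*y1+x2*y2) = p1^2+p2^2 := by rw [e1,e2]; ring
  have s2 : c^2*(x1^2+x2^2)+d^2*(y1^2+y2^2)+2*c*d*(x1*y1+x2*y2) = q1^2+q2^2 := by rw [e3,e4]; ring
  have s3 : a*c*(x1^2+x2^2)+b*d*(y1^2+y2^2)+(a*d+b*c)*(x1*y1+x2*y2) = p1*q1+p2*q2 := by rw [e1,e2,e3,e4]; ring
  have s4 : p1*q2-p2*q1 = (a*d-b*c)*k := by rw [e1,e2,e3,e4,hkd]; ring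
  have s5 : c*a*(x1^2+x2^2)+d*b*(y1^2+y2^2)+(c*b+d*a)*(x1*y1+x2*y2) = p1*q1+p2*q2 := by rw [← s3]; ring
  rw [s1,s2,s3] at m1
  rw [s1,s2,s5] at m2
  have dpq : 0 < p1*q1+p2*q2 := by
    rw [← s3]
    positivity
  have m3 : |p1*q2-p2*q1| *(p1^2+p2^2+q1^2+q2^2) * (x1*y1+x2*y2) ≤
     (k*(x1^2+x2^2+y1^2+y2^2)) * (p1*q1+p2*q2) := by
    rw [s4, abs_mul, abs_of_pos hk]
    rcases abs_cases (a*d-b*c) with h | h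
    · rw [h.1]; calc _ = k*((a*d-b*c)*(x1*y1+x2*y2)*(p1^2+p2^2+(q1^2+q2^2))) := by ring
        _ ≤ _ := mul_le_mul_of_nonneg_left m1 hk.le
        _ = _ := by ring
    · rw [h.1]; calc _ = k*((c*b-d*a)*(x1*y1+x2*y2)*(q1^2+q2^2+(p1^2+p2^2))) := by ring
        _ ≤ _ := mul_le_mul_of_nonneg_left m2 hk.le
        _ = _ := by ring
  rw [abs_of_pos hk]
  have m4 := (mul_le_mul_of_nonneg_right (hB dpq) hdot.le).trans m3
  have : (4*M*(x1*y1+x2*y2)) * (p1*q1+p2*q2) ≤ (k*(x1^2+x2^2+y1^2+y2^2)) * (p1*q1+p2*q2) := by linarith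
  exact le_of_mul_le_mul_right this dpq

set_option maxHeartbeats 1000000 in
theorem base_E (h y w d q R : ℝ) (hh : 1 ≤ h) (hy : 0 < y) (hyh : y < h) (hw : 1 ≤ w)
    (hwy : 1 ≤ y^2 + w^2/4) (hqy : 1 ≤ y^2 + q^2) (hd : 0 ≤ d)
    (hR : 1 ≤ R) (hRd : R^2 = d^2+q^2) (hhd : R < h*d) :
    8*(h-y) ≤ w*(h^2+2*h*d+R^2+h^2*q^2/R^2) := by
  have hR0 : 0 < R := by linarith
  have hh0 : 0 < h := by linarith
  set c := d/R with hc
  have hcR : d = c*R := by rw [hc]; field_simp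
  have hq : q^2/R^2 = 1-c^2 := by rw [hc]; field_simp; linarith
  have hc0 : 0 ≤ c := by positivity
  have hc1 : c ≤ 1 := by
    have : 0 ≤ 1-c^2 := by rw [← hq]; positivity
    nlinarith
  have hhc : 1 < h*c := by rw [hc, ← mul_div_assoc, lt_div_iff₀ hR0]; linarith
  have hE : h^2+2*h*d+R^2+h^2*q^2/R^2 = h^2*(2-c^2)+2*h*c*R+R^2 := by
    rw [mul_div_assoc, hq, hcR]; ring
  have hE1 : h^2*(2-c^2)+2*h*c+1 ≤ h^2+2*h*d+R^2+h^2*q^2/R^2 := by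
    rw [hE]; nlinarith [mul_nonneg hh0.le hc0]
  set E := h^2+2*h*d+R^2+h^2*q^2/R^2 with hEd
  have hE0 : 0 ≤ E := by positivity
  by_cases hwy2 : 2 ≤ w*(1+y)
  · have hE2 : (h+1)^2 ≤ E := by
      have : 0 ≤ h*(1-c)*(h*(1+c)-2) := by
        apply mul_nonneg (mul_nonneg hh0.le (by linarith)); nlinarith
      nlinarith
    have : 8*(h-y) ≤ w*(h+1)^2 := by
      have : 0 ≤ (w*h+w-4)^2 := sq_nonneg _
      have h2 : 0 ≤ w*(w*(h+1)^2-8*(h-y)) := by nlinarith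
      have := nonneg_of_mul_nonneg_right h2 (by linarith)
      linarith
    nlinarith
  · push Not at hwy2
    have hy1 : y < 1 := by nlinarith
    have hy2 : 2 < 2*y^2+y^3 := by
      by_contra hcon
      push Not at hcon
      have h1 : 1 ≤ (1-y^2)*(1+y)^2 := by
        have : 0 ≤ y*(2-(2*y^2+y^3)) := mul_nonneg hy.le (by linarith)
        linarith
      have h2 : 4 ≤ (w*(1+y))^2 := by
        have : (1-y^2)*(1+y)^2 ≤ w^2/4*(1+y)^2 := by gcongr; linarith
        linarith
      have : 0 < w*(1+y) := by positivity
      nlinarith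
    have hy3 : 0.839 < y := by
      by_contra hcon
      push Not at hcon
      have a1 : y^2 ≤ 0.839^2 := by gcongr
      have a2 : y^3 ≤ 0.839^3 := by gcongr
      norm_num at a1 a2
      linarith
    suffices 8*(h-y) ≤ E by nlinarith
    by_cases hcy : c ≤ y
    · refine le_trans ?_ hE1
      have h1 : h^2*(2-y^2)+2*h*y+1 ≤ h^2*(2-c^2)+2*h*c+1 := by
        have : 0 ≤ h*(y-c)*(h*(y+c)-2) := by
          apply mul_nonneg (mul_nonneg hh0.le (by linarith)); nlinarith
        nlinarith
      refine le_trans ?_ h1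
      have hp : 0 < 2-y^2 := by nlinarith
      have hdisc : (y-4)^2 ≤ (2-y^2)*(1+8*y) := by
        have : 0 ≤ (1-y)*(8*y^2+10*y-14) := by
          apply mul_nonneg (by linarith); nlinarith
        nlinarith
      have h2 : 0 ≤ (2-y^2)*(h^2*(2-y^2)+2*h*y+1-8*(h-y)) := by
        nlinarith [sq_nonneg ((2-y^2)*h+(y-4))]
      have := nonneg_of_mul_nonneg_right h2 hp
      linarith
    · push Not at hcy
      set S := 1 - y^2 with hS
      have hS0 : 0 < S := by nlinarith
      have hqS : S ≤ q^2 := by linarith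
      have hdy : y < d := by nlinarith
      have hE3 : (h+d)^2+S+h^2*(S/(d^2+S)) ≤ E := by
        have h1 : S/(d^2+S) ≤ q^2/R^2 := by
          rw [hRd, div_le_div_iff₀ (by positivity) (by rw [← hRd]; positivity)]
          nlinarith [sq_nonneg d]
        have h2 : h^2*(S/(d^2+S)) ≤ h^2*(q^2/R^2) := by gcongr
        rw [hEd, mul_div_assoc, hRd]
        rw [hRd] at h2
        nlinarith
      refine le_trans ?_ hE3
      have hSd : 0 < S/(d^2+S) := by positivity
      by_cases hd2 : 2 - y ≤ d
      · have : 0 ≤ h^2*(S/(d^2+S)) := by positivity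
        nlinarith [sq_nonneg (h+d-4)]
      · push Not at hd2
        obtain ⟨z, hz⟩ : ∃ z, z = d - y := ⟨_, rfl⟩
        have hdz : d = y + z := by linarith
        have hz0 : 0 < z := by linarith
        have hz2 : z < 2 - 2*y := by linarith
        have hR0' : d^2+S = 1+(2*y*z+z^2) := by rw [hdz, hS]; ring
        have hinv : S*(1-(2*y*z+z^2)) ≤ S/(d^2+S) := by
          rw [hR0', le_div_iff₀ (by positivity)]
          nlinarith [sq_nonneg (2*y*z+z^2)]
        have hkey : 16 ≤ 8*(d+y)+2*S+8*y*(S/(d^2+S)) := by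
          have h1 : 8*y*(S*(1-(2*y*z+z^2))) ≤ 8*y*(S/(d^2+S)) := by gcongr
          have hyS : y*S ≤ 0.4 := by rw [hS]; nlinarith [mul_nonneg hy.le (sq_nonneg (y-0.577)), sq_nonneg (y-0.577)]
          have h2 : 8*(y*S)*(2*y*z+z^2) ≤ 8*0.4*(2*y*z+z^2) := by gcongr
          have h3 : 8*0.4*(2*y*z+z^2) ≤ 8*z := by
            have : z*(2*y+z) ≤ z*2 := mul_le_mul_of_nonneg_left (by linarith) hz0.le
            linarith
          have h4 : 0 ≤ (1-y)*(2-13*(1-y)+4*(1-y)^2) := by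
            apply mul_nonneg (by linarith)
            linarith [sq_nonneg (1-y-0.161)]
          have h5 : 16*y+2*S+8*y*S-16 = 2*((1-y)*(2-13*(1-y)+4*(1-y)^2)) := by rw [hS]; ring
          have h6 : 8*y*(S*(1-(2*y*z+z^2))) = 8*y*S - 8*(y*S)*(2*y*z+z^2) := by ring
          linarith
        set T := S/(d^2+S) with hT
        have hTS : T*(d^2+S) = S := by rw [hT]; field_simp
        have hdisc : (4-d)^2 ≤ (1+T)*(d^2+S+8*y) := by linarith
        have h2 : 0 ≤ (1+T)*((h+d)^2+S+h^2*T-8*(h-y)) := by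
          linarith [sq_nonneg ((1+T)*h+(d-4))]
        have := nonneg_of_mul_nonneg_right h2 (by linarith)
        linarith
theorem base_simple (h y w : ℝ) (hy : 0 < y) (hw : 1 ≤ w)
    (hwy : 1 ≤ y^2 + w^2/4) : 8*(h-y) ≤ w*(2*h^2+2) := by
  have key : 4 ≤ w^2+4*w*y := by
    by_cases h1 : y ≤ w
    · nlinarith
    · push Not at h1; nlinarith
  have h2 : 0 ≤ w*(w*(h^2+1)-4*(h-y)) := by nlinarith [sq_nonneg (w*h-2)]
  have := nonneg_of_mul_nonneg_right h2 (by linarith)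
  linarith

theorem base_half_sum (h y w d q e x : ℝ) (hh : 1 ≤ h) (hy : 0 < y) (hyh : y < h) (hw : 1 ≤ w)
    (hwy : 1 ≤ y^2 + w^2/4) (hqy : 1 ≤ y^2 + q^2) (hq : 0 < q) (hx : 0 < x) (hd : 0 ≤ d)
    (hY : 1 ≤ d^2+q^2) (hX : 1 ≤ e^2+x^2) (htri : q*e ≤ x*d) :
    8*(h-y) ≤ w*((h+d)^2+q^2+(h-e)^2+x^2) := by
  by_cases he : e ≤ 0
  · refine (base_simple h y w hy hw hwy).trans ?_
    apply mul_le_mul_of_nonneg_left _ (by linarith)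
    nlinarith
  push Not at he
  obtain ⟨R, hR⟩ : ∃ R, R = Real.sqrt (d^2+q^2) := ⟨_, rfl⟩
  obtain ⟨r, hr⟩ : ∃ r, r = Real.sqrt (e^2+x^2) := ⟨_, rfl⟩
  have hR1 : 1 ≤ R := by rw [hR]; exact Real.one_le_sqrt.2 hY
  have hr1 : 1 ≤ r := by rw [hr]; exact Real.one_le_sqrt.2 hX
  have hR2 : R^2 = d^2+q^2 := by rw [hR]; exact Real.sq_sqrt (by positivity)
  have hr2 : r^2 = e^2+x^2 := by rw [hr]; exact Real.sq_sqrt (by positivity)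
  have hRr : e*R ≤ d*r := by
    have h1 : (q*e)^2 ≤ (x*d)^2 := by gcongr
    have : (e*R)^2 ≤ (d*r)^2 := by rw [mul_pow, mul_pow, hR2, hr2]; nlinarith
    exact le_of_sq_le_sq this (by positivity)
  have hc : e ≤ d/R*r := by
    have : d/R*r = d*r/R := by ring
    rw [this, le_div_iff₀ (by positivity)]; exact hRr
  set c := d/R with hcd
  have hdc : d = c*R := by rw [hcd]; field_simp
  have hhe : h*e ≤ h*(c*r) := by gcongr
  by_cases hhd : h*d ≤ R
  · refine (base_simple h y w hy hw hwy).trans ?_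
    apply mul_le_mul_of_nonneg_left _ (by linarith)
    have hhc : h*c ≤ 1 := by rw [hcd, ← mul_div_assoc, div_le_one (by positivity)]; exact hhd
    have hhc0 : 0 ≤ h*c := by positivity
    have h3 : (h+d)^2+q^2+(h-e)^2+x^2 = 2*h^2+2*(h*d)-2*(h*e)+R^2+r^2 := by rw [hR2,hr2]; ring
    have h4 : h*d = h*c*R := by rw [hdc]; ring
    rw [h3, h4]
    have hRR : 1 ≤ R^2 := one_le_pow₀ hR1
    have hrr : 1 ≤ r^2 := one_le_pow₀ hr1
    have h5 : h*(c*r) = h*c*r := by ring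
    rw [h5] at hhe
    by_cases hrR : r ≤ R
    · have : h*c*r ≤ h*c*R := by gcongr
      linarith
    · push Not at hrR
      have : h*c*(r-R) ≤ 1*(r-R) := mul_le_mul_of_nonneg_right hhc (by linarith)
      linarith [sq_nonneg (r-1)]
  · push Not at hhd
    refine (base_E h y w d q R hh hy hyh hw hwy hqy hd hR1 hR2 hhd).trans ?_
    apply mul_le_mul_of_nonneg_left _ (by linarith)
    have hqc : h^2*q^2/R^2 = h^2-(h*c)^2 := by
      have : q^2 = R^2-d^2 := by linarith
      rw [this, hcd]; field_simp
    rw [hqc]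
    linarith [sq_nonneg (r-h*c)]

theorem base_half (h1 y w1 w2 x1 x2 y1 q : ℝ) (hh : 1 ≤ h1+y) (hh1 : 0 < h1) (hy : 0 < y)
    (hw1 : 0 < w1) (hw2 : 0 < w2)
    (hw : 1 ≤ w1+w2) (hk1 : 1 ≤ y^2+w1^2) (hk2 : 1 ≤ y^2+w2^2)
    (hX : 1 ≤ (x1-(h1+y))^2+x2^2) (hY : 1 ≤ (y1-(h1+y))^2+q^2)
    (hx1 : 0 < x1) (hx2 : 0 < x2) (hq : 0 < q)
    (hN1 : w1*x1 ≤ h1*x2) (hN2 : w2*y1 ≤ h1*q) (htri : (h1+y)*(q+x2) ≤ y1*x2+q*x1)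
    (hfar : h1+y ≤ y1) (hdot : 0 < x1*y1-x2*q) :
    4*2*(x1*y1-x2*q) ≤ (y1*x2+q*x1)*(x1^2+x2^2+y1^2+q^2) := by
  have hwy : 1 ≤ y^2+(w1+w2)^2/4 := by
    rcases le_total w1 w2 with h | h <;> nlinarith
  have hq2 : w2 ≤ q := by
    have : w2*h1 ≤ w2*y1 := by gcongr; linarith
    nlinarith
  have hqy : 1 ≤ y^2+q^2 := by nlinarith
  have m := base_half_sum (h1+y) y (w1+w2) (y1-(h1+y)) q (h1+y-x1) x2 hh hy (by linarith) hw hwy hqy hq hx2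
    (by linarith) hY (by nlinarith) (by linarith)
  have e : (h1+y+(y1-(h1+y)))^2+q^2+(h1+y-(h1+y-x1))^2+x2^2 = x1^2+x2^2+y1^2+q^2 := by ring
  rw [e] at m
  set S := x1^2+x2^2+y1^2+q^2 with hS
  have hS0 : 0 ≤ S := by positivity
  have hk : (w1+w2)*(x1*y1) ≤ h1*(y1*x2+q*x1) := by
    have hy1 : 0 < y1 := by linarith
    nlinarith [mul_le_mul_of_nonneg_left hN1 hy1.le, mul_le_mul_of_nonneg_left hN2 hx1.le]
  have hD : x1*y1-x2*q ≤ x1*y1 := by nlinarith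
  have h3 : h1*(4*2*(x1*y1-x2*q)) ≤ h1*((y1*x2+q*x1)*S) := by
    calc h1*(4*2*(x1*y1-x2*q)) = (8*(h1+y-y))*(x1*y1-x2*q) := by ring
      _ ≤ ((w1+w2)*S)*(x1*y1-x2*q) := by gcongr
      _ ≤ ((w1+w2)*S)*(x1*y1) := by gcongr
      _ = ((w1+w2)*(x1*y1))*S := by ring
      _ ≤ (h1*(y1*x2+q*x1))*S := by gcongr
      _ = _ := by ring
  exact le_of_mul_le_mul_left h3 hh1

/-- Base case in normalized coordinates. -/
theorem base_full (h1 y w1 w2 x1 x2 y1 q : ℝ) (hh : 1 ≤ h1+y) (hh1 : 0 < h1) (hy : 0 < y)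
    (hw1 : 0 < w1) (hw2 : 0 < w2)
    (hw : 1 ≤ w1+w2) (hk1 : 1 ≤ y^2+w1^2) (hk2 : 1 ≤ y^2+w2^2)
    (hX : 1 ≤ (x1-(h1+y))^2+x2^2) (hY : 1 ≤ (y1-(h1+y))^2+q^2)
    (hx1 : 0 < x1) (hy1 : 0 < y1) (hx2 : 0 < x2) (hq : 0 < q)
    (hN1 : w1*x1 ≤ h1*x2) (hN2 : w2*y1 ≤ h1*q) (htri : (h1+y)*(q+x2) ≤ y1*x2+q*x1)
    (hdot : 0 < x1*y1-x2*q) :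
    4*2*(x1*y1-x2*q) ≤ (y1*x2+q*x1)*(x1^2+x2^2+y1^2+q^2) := by
  by_cases hfar : h1+y ≤ y1
  · exact base_half h1 y w1 w2 x1 x2 y1 q hh hh1 hy hw1 hw2 hw hk1 hk2 hX hY hx1 hx2 hq hN1 hN2 htri hfar hdot
  · push Not at hfar
    have := base_half h1 y w2 w1 y1 q x1 x2 hh hh1 hy hw2 hw1 (by linarith) hk2 hk1 hY hX hy1 hq hx2 hN2 hN1
      (by linarith) (by nlinarith) (by linarith)
    nlinarith

/-- Orientation (twice the signed area) of a triangle. -/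
def orient (A B C : ℝ × ℝ) : ℝ := (B.1-A.1)*(C.2-A.2) - (B.2-A.2)*(C.1-A.1)

/-- `P` lies strictly inside the triangle `ABC`. -/
def InT (A B C P : ℝ × ℝ) : Prop :=
  (0 < orient A B P ∧ 0 < orient B C P ∧ 0 < orient C A P) ∨
  (orient A B P < 0 ∧ orient B C P < 0 ∧ orient C A P < 0)

theorem orient_sum (A B C P : ℝ × ℝ) : orient A B P + orient B C P + orient C A P = orient A B C := by
  simp only [orient]; ring

theorem orient_rot (A B C : ℝ × ℝ) : orient B C A = orient A B C := by
  simp only [orient]; ring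

theorem orient_swap (A B C : ℝ × ℝ) : orient B A C = - orient A B C := by
  simp only [orient]; ring

theorem InT.rot {A B C P : ℝ × ℝ} (h : InT A B C P) : InT B C A P := by
  unfold InT at *; tauto

theorem InT.swap {A B C P : ℝ × ℝ} (h : InT A B C P) : InT B A C P := by
  have h1 := orient_swap A B P
  have h2 := orient_swap C A P
  have h3 := orient_swap B C P
  unfold InT at *
  rcases h with h | h
  · right; refine ⟨?_, ?_, ?_⟩ <;> linarith
  · left; refine ⟨?_, ?_, ?_⟩ <;> linarith

theorem InT.excl {A B C P : ℝ × ℝ} (h : InT A B C P) : ¬ InT P B C A := by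
  have h0 := orient_sum A B C P
  have h1 : orient P B A = - orient A B P := by simp only [orient]; ring
  have h2 : orient C P A = - orient C A P := by simp only [orient]; ring
  have h3 := orient_rot A B C
  unfold InT at *
  rintro (h' | h') <;> rcases h with h | h <;> linarith [h.1, h.2.1, h.2.2, h'.1, h'.2.1, h'.2.2]

theorem mem_openSegment_of {P Q Z : ℝ × ℝ} (t : ℝ) (h0 : 0 < t) (h1 : t < 1)
    (hx : Z.1 = P.1 + t*(Q.1-P.1)) (hy : Z.2 = P.2 + t*(Q.2-P.2)) : Z ∈ openSegment ℝ P Q := by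
  refine ⟨1-t, t, by linarith, h0, by ring, ?_⟩
  ext
  · simp; linarith
  · simp; linarith

theorem exists_of_mem_openSegment {P Q Z : ℝ × ℝ} (h : Z ∈ openSegment ℝ P Q) :
    ∃ t : ℝ, 0 < t ∧ t < 1 ∧ Z.1 = P.1 + t*(Q.1-P.1) ∧ Z.2 = P.2 + t*(Q.2-P.2) := by
  obtain ⟨a, b, ha, hb, hab, rfl⟩ := h
  refine ⟨b, hb, by linarith, ?_, ?_⟩
  · have : a = 1 - b := by linarith
    subst this; simp; ring
  · have : a = 1 - b := by linarith
    subst this; simp; ring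

/-- If `S` is on the line `PB` with proportion in `(0,1)` measured by orientations. -/
theorem seg_of_orient {P A B S : ℝ × ℝ} (h0 : orient P B S = 0) (h1 : 0 < orient P A S)
    (h2 : orient P A S < orient P A B) : S ∈ openSegment ℝ P B := by
  have hpos : 0 < orient P A B := h1.trans h2
  apply mem_openSegment_of (orient P A S / orient P A B) (by positivity) (by rw [div_lt_one hpos]; exact h2)
  · field_simp
    have : (S.1-P.1)*orient P A B = orient P A S * (B.1-P.1) - orient P B S * (A.1-P.1) := by
      simp only [orient]; ring
    rw [h0] at this; linarith
  · field_simp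
    have : (S.2-P.2)*orient P A B = orient P A S * (B.2-P.2) - orient P B S * (A.2-P.2) := by
      simp only [orient]; ring
    rw [h0] at this; linarith

theorem cross_of_orient {A B C D : ℝ × ℝ} (h1 : orient A B C * orient A B D < 0)
    (h2 : orient C D A * orient C D B < 0) : (openSegment ℝ A B ∩ openSegment ℝ C D).Nonempty := by
  have hd1 : orient A B C - orient A B D ≠ 0 := by
    intro h; have : orient A B C = orient A B D := by linarith
    rw [this] at h1; nlinarith [mul_self_nonneg (orient A B D)]
  have hd2 : orient C D A - orient C D B ≠ 0 := by
    intro h; have : orient C D A = orient C D B := by linarith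
    rw [this] at h2; nlinarith [mul_self_nonneg (orient C D B)]
  have key : ∀ a b : ℝ, a*b < 0 → a - b ≠ 0 → 0 < a/(a-b) ∧ a/(a-b) < 1 := by
    intro a b hab hne
    rcases mul_neg_iff.1 hab with ⟨ha, hb⟩ | ⟨ha, hb⟩
    · have : 0 < a - b := by linarith
      exact ⟨by positivity, by rw [div_lt_one this]; linarith⟩
    · have : a - b < 0 := by linarith
      exact ⟨div_pos_of_neg_of_neg ha this, by rw [div_lt_one_of_neg this]; linarith⟩
  obtain ⟨s0, s1⟩ := key _ _ h1 hd1
  obtain ⟨t0, t1⟩ := key _ _ h2 hd2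
  set s := orient A B C / (orient A B C - orient A B D) with hs
  refine ⟨(C.1+s*(D.1-C.1), C.2+s*(D.2-C.2)), ?_, mem_openSegment_of s s0 s1 rfl rfl⟩
  refine mem_openSegment_of _ t0 t1 ?_ ?_
  · show C.1+s*(D.1-C.1) = _
    rw [hs]
    have e : orient C D A - orient C D B = -(orient A B C - orient A B D) := by simp only [orient]; ring
    rw [e]; field_simp; simp only [orient]; ring
  · show C.2+s*(D.2-C.2) = _
    rw [hs]
    have e : orient C D A - orient C D B = -(orient A B C - orient A B D) := by simp only [orient]; ring
    rw [e]; field_simp; simp only [orient]; ring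

theorem orient_of_cross {A B C D : ℝ × ℝ} (h : (openSegment ℝ A B ∩ openSegment ℝ C D).Nonempty)
    (hC : orient A B C ≠ 0) : orient A B C * orient A B D < 0 := by
  obtain ⟨Z, h1, h2⟩ := h
  obtain ⟨t, t0, t1, tx, ty⟩ := exists_of_mem_openSegment h1
  obtain ⟨s, s0, s1, sx, sy⟩ := exists_of_mem_openSegment h2
  have e1 : orient A B Z = 0 := by simp only [orient, tx, ty]; ring
  have e2 : orient A B Z = (1-s)*orient A B C + s*orient A B D := by simp only [orient, sx, sy]; ring
  have e3 : s*(orient A B C * orient A B D) = -((1-s)*(orient A B C)^2) := by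
    have : s * orient A B D = -((1-s)*orient A B C) := by linarith
    calc _ = orient A B C * (s * orient A B D) := by ring
      _ = _ := by rw [this]; ring
  have : 0 < (1-s)*(orient A B C)^2 := by have : 0 < 1-s := by linarith
                                          positivity
  by_contra hcon
  push Not at hcon
  have := mul_nonneg s0.le hcon
  linarith

set_option maxHeartbeats 1000000 in
theorem four_points {a b c d : ℝ × ℝ} (h1 : orient a b c ≠ 0) (h2 : orient a b d ≠ 0)
    (h3 : orient a c d ≠ 0) (h4 : orient b c d ≠ 0) :
    (openSegment ℝ a b ∩ openSegment ℝ c d).Nonempty ∨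
    (openSegment ℝ a c ∩ openSegment ℝ b d).Nonempty ∨
    (openSegment ℝ a d ∩ openSegment ℝ b c).Nonempty ∨
    InT a b c d ∨ InT a b d c ∨ InT a c d b ∨ InT b c d a := by
  have hs : orient a b c - orient a b d + orient a c d - orient b c d = 0 := by
    simp only [orient]; ring
  have r1 : orient c d a = orient a c d := by simp only [orient]; ring
  have r2 : orient c d b = orient b c d := by simp only [orient]; ring
  have r3 : orient a c b = -orient a b c := by simp only [orient]; ring
  have r4 : orient b d a = orient a b d := by simp only [orient]; ring
  have r5 : orient b d c = -orient b c d := by simp only [orient]; ring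
  have r6 : orient a d b = -orient a b d := by simp only [orient]; ring
  have r7 : orient a d c = -orient a c d := by simp only [orient]; ring
  have r8 : orient b c a = orient a b c := by simp only [orient]; ring
  have r9 : orient c a d = -orient a c d := by simp only [orient]; ring
  have r10 : orient d a c = orient a c d := by simp only [orient]; ring
  have r11 : orient d a b = orient a b d := by simp only [orient]; ring
  have r12 : orient d b a = -orient a b d := by simp only [orient]; ring
  have r13 : orient d b c = orient b c d := by simp only [orient]; ring
  have r14 : orient d a b = orient a b d := by simp only [orient]; ring
  have x1 := @cross_of_orient a b c d
  have x2 := @cross_of_orient a c b d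
  have x3 := @cross_of_orient a d b c
  rw [r1, r2] at x1
  rw [r3, r4, r5] at x2
  rw [r6, r7, r8] at x3
  unfold InT
  simp only [r9, r10, r11, r12, r5, r3, r1, r2, r8]
  generalize orient a b c = w at *
  generalize orient a b d = x at *
  generalize orient a c d = y at *
  generalize orient b c d = z at *
  have pn : ∀ {p q : ℝ}, 0 < p → q < 0 → p*q < 0 := fun h h' => mul_neg_of_pos_of_neg h h'
  have np : ∀ {p q : ℝ}, p < 0 → 0 < q → p*q < 0 := fun h h' => mul_neg_of_neg_of_pos h h'
  rcases lt_or_gt_of_ne h1 with k1 | k1 <;> rcases lt_or_gt_of_ne h2 with k2 | k2 <;>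
  rcases lt_or_gt_of_ne h3 with k3 | k3 <;> rcases lt_or_gt_of_ne h4 with k4 | k4 <;>
  first
  | exact Or.inl (x1 (by first | exact pn (by linarith) (by linarith) | exact np (by linarith) (by linarith))
      (by first | exact pn (by linarith) (by linarith) | exact np (by linarith) (by linarith)))
  | exact Or.inr (Or.inl (x2 (by first | exact pn (by linarith) (by linarith) | exact np (by linarith) (by linarith))
      (by first | exact pn (by linarith) (by linarith) | exact np (by linarith) (by linarith))))
  | exact Or.inr (Or.inr (Or.inl (x3 (by first | exact pn (by linarith) (by linarith) | exact np (by linarith) (by linarith))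
      (by first | exact pn (by linarith) (by linarith) | exact np (by linarith) (by linarith)))))
  | exact Or.inr (Or.inr (Or.inr (Or.inl (by
      first | exact Or.inl ⟨by linarith, by linarith, by linarith⟩ | exact Or.inr ⟨by linarith, by linarith, by linarith⟩))))
  | exact Or.inr (Or.inr (Or.inr (Or.inr (Or.inl (by
      first | exact Or.inl ⟨by linarith, by linarith, by linarith⟩ | exact Or.inr ⟨by linarith, by linarith, by linarith⟩)))))
  | exact Or.inr (Or.inr (Or.inr (Or.inr (Or.inr (Or.inl (by
      first | exact Or.inl ⟨by linarith, by linarith, by linarith⟩ | exact Or.inr ⟨by linarith, by linarith, by linarith⟩))))))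
  | exact Or.inr (Or.inr (Or.inr (Or.inr (Or.inr (Or.inr (by
      first | exact Or.inl ⟨by linarith, by linarith, by linarith⟩ | exact Or.inr ⟨by linarith, by linarith, by linarith⟩))))))

theorem InT.partition {A B C P S : ℝ × ℝ} (hP : InT A B C P) (hS : InT A B C S) (hne : S ≠ P)
    (h1 : S ∉ openSegment ℝ P A) (h2 : S ∉ openSegment ℝ P B) (h3 : S ∉ openSegment ℝ P C) :
    InT P A B S ∨ InT P B C S ∨ InT P C A S := by
  wlog hpos : 0 < orient A B P generalizing A B C
  · -- reflect
    have := this (A := B) (B := A) (C := C) hP.swap hS.swap h2 h1 h3 (by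
      rw [orient_swap]
      unfold InT at hP
      rcases hP with h | h
      · exact absurd h.1 hpos
      · linarith [h.1])
    rcases this with h | h | h
    · left; exact h.rot.swap.rot.rot
    · right; right; exact h.rot.swap.rot.rot
    · right; left; exact h.rot.swap.rot.rot
  have hP' : 0 < orient A B P ∧ 0 < orient B C P ∧ 0 < orient C A P := by
    rcases hP with h | h
    · exact h
    · linarith [h.1]
  have hT := orient_sum A B C P
  have hT' := orient_sum A B C S
  have hS' : 0 < orient A B S ∧ 0 < orient B C S ∧ 0 < orient C A S := by
    rcases hS with h | h
    · exact h
    · exfalso; linarith [h.1, h.2.1, h.2.2]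
  obtain ⟨p1, p2, p3⟩ := hP'
  obtain ⟨s1, s2, s3⟩ := hS'
  have bal : orient B C P * orient P A S + orient C A P * orient P B S + orient A B P * orient P C S = 0 := by
    simp only [orient]; ring
  have a1 : orient P A B = orient A B P := by simp only [orient]; ring
  have a2 : orient P B C = orient B C P := by simp only [orient]; ring
  have a3 : orient P C A = orient C A P := by simp only [orient]; ring
  have n1 : orient B P S = - orient P B S := orient_swap _ _ _
  have n2 : orient C P S = - orient P C S := orient_swap _ _ _
  have n3 : orient A P S = - orient P A S := orient_swap _ _ _
  have d1 : orient A B S = orient A B P + orient P A S * (-1) + orient P B S := by simp only [orient]; ring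
  have d2 : orient B C S = orient B C P + orient P B S * (-1) + orient P C S := by simp only [orient]; ring
  have d3 : orient C A S = orient C A P + orient P C S * (-1) + orient P A S := by simp only [orient]; ring
  have g1 : orient P A S = 0 → ¬ 0 < orient P C S := fun h hh =>
    h1 (seg_of_orient (A := C) h hh (by rw [a3]; linarith))
  have g2 : orient P B S = 0 → ¬ 0 < orient P A S := fun h hh =>
    h2 (seg_of_orient (A := A) h hh (by rw [a1]; linarith))
  have g3 : orient P C S = 0 → ¬ 0 < orient P B S := fun h hh =>
    h3 (seg_of_orient (A := B) h hh (by rw [a2]; linarith))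
  have g0 : orient P A S = 0 → orient P B S = 0 → False := by
    intro h h'
    apply hne
    have e1 : (S.1-P.1)*orient P A B = orient P A S * (B.1-P.1) - orient P B S * (A.1-P.1) := by
      simp only [orient]; ring
    have e2 : (S.2-P.2)*orient P A B = orient P A S * (B.2-P.2) - orient P B S * (A.2-P.2) := by
      simp only [orient]; ring
    rw [h, h', a1] at e1 e2
    simp only [zero_mul, sub_zero, mul_eq_zero, p1.ne', or_false] at e1 e2
    ext <;> linarith
  unfold InT
  rw [n1, n2, n3]
  generalize orient P A S = x at *
  generalize orient P B S = y at *
  generalize orient P C S = z at *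
  rcases lt_trichotomy x 0 with hx | hx | hx
  · rcases lt_trichotomy z 0 with hz | hz | hz
    · have hy : 0 < y := by
        by_contra hy; push Not at hy
        nlinarith [mul_pos p2 (neg_pos.2 hx), mul_pos p1 (neg_pos.2 hz), mul_nonneg p3.le (neg_nonneg.2 hy)]
      right; left; left; refine ⟨hy, s2, by linarith⟩
    · exfalso
      apply g3 hz
      by_contra hy; push Not at hy
      subst hz
      nlinarith [mul_pos p2 (neg_pos.2 hx), mul_nonneg p3.le (neg_nonneg.2 hy)]
    · right; right; left; exact ⟨hz, s3, by linarith⟩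
  · rcases lt_trichotomy y 0 with hy | hy | hy
    · exfalso
      apply g1 hx
      by_contra hz; push Not at hz
      subst hx
      nlinarith [mul_pos p3 (neg_pos.2 hy), mul_nonneg p1.le (neg_nonneg.2 hz)]
    · exact (g0 hx hy).elim
    · right; left; left
      refine ⟨hy, s2, ?_⟩
      by_contra hz; push Not at hz
      subst hx
      nlinarith [mul_pos p3 hy, mul_nonneg p1.le (by linarith : 0 ≤ z)]
  · rcases lt_trichotomy y 0 with hy | hy | hy
    · left; left; exact ⟨hx, s1, by linarith⟩
    · exact (g2 hy hx).elim
    · right; left; left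
      refine ⟨hy, s2, ?_⟩
      by_contra hz; push Not at hz
      nlinarith [mul_pos p3 hy, mul_pos p2 hx, mul_nonneg p1.le (by linarith : 0 ≤ z)]

theorem exit_core {A B C P Q : ℝ × ℝ} (h1 : 0 < orient A B P) (h2 : 0 < orient B C P)
    (h3 : 0 < orient C A P) (g1 : orient A B Q ≤ 0)
    (k2 : orient B C P * orient A B Q ≤ orient A B P * orient B C Q)
    (k3 : orient C A P * orient A B Q ≤ orient A B P * orient C A Q) :
    ∃ Z, (Z ∈ openSegment ℝ P Q ∨ Z = Q) ∧ (Z = A ∨ Z = B ∨ Z ∈ openSegment ℝ A B) := by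
  set t := orient A B P / (orient A B P - orient A B Q) with ht
  have hd : 0 < orient A B P - orient A B Q := by linarith
  have ht0 : 0 < t := by positivity
  have htd : t * (orient A B P - orient A B Q) = orient A B P := by rw [ht]; field_simp
  set Z : ℝ × ℝ := (P.1+t*(Q.1-P.1), P.2+t*(Q.2-P.2)) with hZ
  have o1 : orient A B Z = 0 := by
    have : orient A B Z = orient A B P - t * (orient A B P - orient A B Q) := by
      simp only [orient, hZ]; ring
    rw [this]; linarith
  have o2 : 0 ≤ orient B C Z := by
    have e : orient B C Z = orient B C P + t*(orient B C Q - orient B C P) := by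
      simp only [orient, hZ]; ring
    have : 0 ≤ (orient A B P - orient A B Q) * orient B C Z := by
      rw [e]
      have : (orient A B P - orient A B Q) * (orient B C P + t*(orient B C Q - orient B C P)) =
        (orient A B P - orient A B Q) * orient B C P + (t * (orient A B P - orient A B Q))*(orient B C Q - orient B C P) := by ring
      rw [this, htd]; linarith
    exact nonneg_of_mul_nonneg_right this hd
  have o3 : 0 ≤ orient C A Z := by
    have e : orient C A Z = orient C A P + t*(orient C A Q - orient C A P) := by
      simp only [orient, hZ]; ring
    have : 0 ≤ (orient A B P - orient A B Q) * orient C A Z := by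
      rw [e]
      have : (orient A B P - orient A B Q) * (orient C A P + t*(orient C A Q - orient C A P)) =
        (orient A B P - orient A B Q) * orient C A P + (t * (orient A B P - orient A B Q))*(orient C A Q - orient C A P) := by ring
      rw [this, htd]; linarith
    exact nonneg_of_mul_nonneg_right this hd
  have hT := orient_sum A B C P
  have hT' := orient_sum A B C Z
  refine ⟨Z, ?_, ?_⟩
  · rcases g1.lt_or_eq with g | g
    · left
      exact mem_openSegment_of t ht0 (by rw [ht, div_lt_one hd]; linarith) rfl rfl
    · right
      have : t = 1 := by rw [ht, g, sub_zero, div_self h1.ne']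
      rw [hZ, this]; ext <;> simp
  · have hTpos : 0 < orient A B C := by linarith
    have z1 : Z.1 * orient A B C = orient A B C * A.1 + orient C A Z * (B.1-A.1) := by
      have : Z.1 * orient A B C = orient A B C * A.1 + orient C A Z * (B.1-A.1) + orient A B Z*(C.1-A.1) := by
        simp only [orient]; ring
      rw [this, o1]; ring
    have z2 : Z.2 * orient A B C = orient A B C * A.2 + orient C A Z * (B.2-A.2) := by
      have : Z.2 * orient A B C = orient A B C * A.2 + orient C A Z * (B.2-A.2) + orient A B Z*(C.2-A.2) := by
        simp only [orient]; ring
      rw [this, o1]; ring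
    rcases o3.lt_or_eq with q | q
    · rcases o2.lt_or_eq with q' | q'
      · right; right
        refine mem_openSegment_of (orient C A Z / orient A B C) (by positivity) (by rw [div_lt_one hTpos]; linarith) ?_ ?_
        · field_simp; linarith
        · field_simp; linarith
      · right; left
        have : orient C A Z = orient A B C := by linarith
        rw [this] at z1 z2
        ext
        · apply mul_right_cancel₀ hTpos.ne'; linarith
        · apply mul_right_cancel₀ hTpos.ne'; linarith
    · left
      rw [← q] at z1 z2
      ext
      · apply mul_right_cancel₀ hTpos.ne'; linarith
      · apply mul_right_cancel₀ hTpos.ne'; linarith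

theorem InT.exit {A B C P Q : ℝ × ℝ} (hP : InT A B C P) (hQ : ¬ InT A B C Q) :
    ∃ Z, (Z ∈ openSegment ℝ P Q ∨ Z = Q) ∧ (Z = A ∨ Z = B ∨ Z = C ∨ Z ∈ openSegment ℝ A B ∨
      Z ∈ openSegment ℝ B C ∨ Z ∈ openSegment ℝ C A) := by
  wlog hpos : 0 < orient A B P generalizing A B C
  · obtain ⟨Z, hz, h⟩ := this (A := B) (B := A) (C := C) hP.swap (fun h => hQ h.swap) (by
      rw [orient_swap]
      unfold InT at hP
      rcases hP with h | h
      · exact absurd h.1 hpos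
      · linarith [h.1])
    refine ⟨Z, hz, ?_⟩
    rw [openSegment_symm ℝ B A, openSegment_symm ℝ A C, openSegment_symm ℝ C B] at h
    rcases h with h | h | h | h | h | h
    · exact Or.inr (Or.inl h)
    · exact Or.inl h
    · exact Or.inr (Or.inr (Or.inl h))
    · exact Or.inr (Or.inr (Or.inr (Or.inl h)))
    · exact Or.inr (Or.inr (Or.inr (Or.inr (Or.inr h))))
    · exact Or.inr (Or.inr (Or.inr (Or.inr (Or.inl h))))
  have hP' : 0 < orient A B P ∧ 0 < orient B C P ∧ 0 < orient C A P := by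
    rcases hP with h | h
    · exact h
    · linarith [h.1]
  obtain ⟨p1, p2, p3⟩ := hP'
  have ex : orient A B Q ≤ 0 ∨ orient B C Q ≤ 0 ∨ orient C A Q ≤ 0 := by
    by_contra hcon
    push Not at hcon
    exact hQ (Or.inl hcon)
  set f : ℝ := orient A B Q / orient A B P with hf
  set g : ℝ := orient B C Q / orient B C P with hg
  set h : ℝ := orient C A Q / orient C A P with hh
  have ef : orient A B Q = f * orient A B P := by rw [hf]; field_simp
  have eg : orient B C Q = g * orient B C P := by rw [hg]; field_simp
  have eh : orient C A Q = h * orient C A P := by rw [hh]; field_simp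
  have ex' : f ≤ 0 ∨ g ≤ 0 ∨ h ≤ 0 := by
    rcases ex with e | e | e
    · left; exact div_nonpos_of_nonpos_of_nonneg e p1.le
    · right; left; exact div_nonpos_of_nonpos_of_nonneg e p2.le
    · right; right; exact div_nonpos_of_nonpos_of_nonneg e p3.le
  have q12 := mul_pos p1 p2
  have q13 := mul_pos p1 p3
  have q23 := mul_pos p2 p3
  have c1 : f ≤ 0 → f ≤ g → f ≤ h → ∃ Z, (Z ∈ openSegment ℝ P Q ∨ Z = Q) ∧ (Z = A ∨ Z = B ∨ Z ∈ openSegment ℝ A B) := by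
    intro a b c
    apply exit_core p1 p2 p3
    · rw [ef]; exact mul_nonpos_of_nonpos_of_nonneg a p1.le
    · rw [ef, eg]; linarith [mul_le_mul_of_nonneg_right b q12.le]
    · rw [ef, eh]; linarith [mul_le_mul_of_nonneg_right c q13.le]
  have c2 : g ≤ 0 → g ≤ f → g ≤ h → ∃ Z, (Z ∈ openSegment ℝ P Q ∨ Z = Q) ∧ (Z = B ∨ Z = C ∨ Z ∈ openSegment ℝ B C) := by
    intro a b c
    apply exit_core p2 p3 p1
    · rw [eg]; exact mul_nonpos_of_nonpos_of_nonneg a p2.le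
    · rw [eg, eh]; linarith [mul_le_mul_of_nonneg_right c q23.le]
    · rw [ef, eg]; linarith [mul_le_mul_of_nonneg_right b q12.le]
  have c3 : h ≤ 0 → h ≤ f → h ≤ g → ∃ Z, (Z ∈ openSegment ℝ P Q ∨ Z = Q) ∧ (Z = C ∨ Z = A ∨ Z ∈ openSegment ℝ C A) := by
    intro a b c
    apply exit_core p3 p1 p2
    · rw [eh]; exact mul_nonpos_of_nonpos_of_nonneg a p3.le
    · rw [ef, eh]; linarith [mul_le_mul_of_nonneg_right b q13.le]
    · rw [eg, eh]; linarith [mul_le_mul_of_nonneg_right c q23.le]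
  have : (∃ Z, (Z ∈ openSegment ℝ P Q ∨ Z = Q) ∧ (Z = A ∨ Z = B ∨ Z ∈ openSegment ℝ A B)) ∨
      (∃ Z, (Z ∈ openSegment ℝ P Q ∨ Z = Q) ∧ (Z = B ∨ Z = C ∨ Z ∈ openSegment ℝ B C)) ∨
      (∃ Z, (Z ∈ openSegment ℝ P Q ∨ Z = Q) ∧ (Z = C ∨ Z = A ∨ Z ∈ openSegment ℝ C A)) := by
    rcases le_total f g with a | a <;> rcases le_total f h with b | b <;> rcases le_total g h with c | c
    · exact Or.inl (c1 (by rcases ex' with e | e | e <;> linarith) (by linarith) (by linarith))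
    · exact Or.inl (c1 (by rcases ex' with e | e | e <;> linarith) (by linarith) (by linarith))
    · exact Or.inr (Or.inr (c3 (by rcases ex' with e | e | e <;> linarith) (by linarith) (by linarith)))
    · exact Or.inr (Or.inr (c3 (by rcases ex' with e | e | e <;> linarith) (by linarith) (by linarith)))
    · exact Or.inr (Or.inl (c2 (by rcases ex' with e | e | e <;> linarith) (by linarith) (by linarith)))
    · exact Or.inr (Or.inr (c3 (by rcases ex' with e | e | e <;> linarith) (by linarith) (by linarith)))
    · exact Or.inr (Or.inl (c2 (by rcases ex' with e | e | e <;> linarith) (by linarith) (by linarith)))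
    · exact Or.inr (Or.inr (c3 (by rcases ex' with e | e | e <;> linarith) (by linarith) (by linarith)))
  rcases this with ⟨Z, hz, h | h | h⟩ | ⟨Z, hz, h | h | h⟩ | ⟨Z, hz, h | h | h⟩
  · exact ⟨Z, hz, Or.inl h⟩
  · exact ⟨Z, hz, Or.inr (Or.inl h)⟩
  · exact ⟨Z, hz, Or.inr (Or.inr (Or.inr (Or.inl h)))⟩
  · exact ⟨Z, hz, Or.inr (Or.inl h)⟩
  · exact ⟨Z, hz, Or.inr (Or.inr (Or.inl h))⟩
  · exact ⟨Z, hz, Or.inr (Or.inr (Or.inr (Or.inr (Or.inl h))))⟩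
  · exact ⟨Z, hz, Or.inr (Or.inr (Or.inl h))⟩
  · exact ⟨Z, hz, Or.inl h⟩
  · exact ⟨Z, hz, Or.inr (Or.inr (Or.inr (Or.inr (Or.inr h))))⟩

/-- Interiors of triangles are convex: if the three corners of `DEF` lie in `ABC`,
then so does every interior point of `DEF`. -/
theorem InT.trans {A B C D E F P : ℝ × ℝ} (hD : InT A B C D) (hE : InT A B C E) (hF : InT A B C F)
    (hP : InT D E F P) : InT A B C P := by
  have hT := orient_sum D E F P
  have key : ∀ U W : ℝ × ℝ, orient U W P * orient D E F =
      orient E F P * orient U W D + orient F D P * orient U W E + orient D E P * orient U W F := by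
    intro U W; simp only [orient]; ring
  have sD := orient_sum A B C D
  have sE := orient_sum A B C E
  have sF := orient_sum A B C F
  have main : ∀ σ : ℝ, (σ = 1 ∨ σ = -1) → 0 < σ * orient D E P → 0 < σ * orient E F P → 0 < σ * orient F D P →
      InT A B C P := by
    intro σ hσ p1 p2 p3
    have hden : 0 < σ * orient D E F := by rw [← hT]; linarith
    have pos : ∀ U W : ℝ × ℝ, 0 < orient U W D → 0 < orient U W E → 0 < orient U W F → 0 < orient U W P := by
      intro U W a b c
      have : 0 < orient U W P * (σ * orient D E F) := by
        have := key U W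
        have e : orient U W P * (σ * orient D E F) = (σ * orient E F P) * orient U W D + (σ * orient F D P) * orient U W E + (σ * orient D E P) * orient U W F := by
          linear_combination σ * this
        rw [e]; positivity
      exact pos_of_mul_pos_left this hden.le
    have neg : ∀ U W : ℝ × ℝ, orient U W D < 0 → orient U W E < 0 → orient U W F < 0 → orient U W P < 0 := by
      intro U W a b c
      have := pos W U (by rw [orient_swap]; linarith) (by rw [orient_swap]; linarith) (by rw [orient_swap]; linarith)
      rw [orient_swap] at this; linarith
    by_cases hs : 0 < orient A B C
    · have d := (hD.resolve_right (fun d => by linarith [d.1, d.2.1, d.2.2]))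
      have e := (hE.resolve_right (fun d => by linarith [d.1, d.2.1, d.2.2]))
      have f := (hF.resolve_right (fun d => by linarith [d.1, d.2.1, d.2.2]))
      left; exact ⟨pos _ _ d.1 e.1 f.1, pos _ _ d.2.1 e.2.1 f.2.1, pos _ _ d.2.2 e.2.2 f.2.2⟩
    · have d := (hD.resolve_left (fun d => by linarith [d.1, d.2.1, d.2.2]))
      have e := (hE.resolve_left (fun d => by linarith [d.1, d.2.1, d.2.2]))
      have f := (hF.resolve_left (fun d => by linarith [d.1, d.2.1, d.2.2]))
      right; exact ⟨neg _ _ d.1 e.1 f.1, neg _ _ d.2.1 e.2.1 f.2.1, neg _ _ d.2.2 e.2.2 f.2.2⟩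
  rcases hP with h | h
  · exact main 1 (Or.inl rfl) (by linarith [h.1]) (by linarith [h.2.1]) (by linarith [h.2.2])
  · exact main (-1) (Or.inr rfl) (by linarith [h.1]) (by linarith [h.2.1]) (by linarith [h.2.2])

theorem InT.ne_left {A B C P : ℝ × ℝ} (h : InT A B C P) : P ≠ A := by
  rintro rfl
  have : orient P B P = 0 := by simp only [orient]; ring
  unfold InT at h
  rw [this] at h
  rcases h with h | h <;> linarith [h.1]

theorem collinear_between {A B C : ℝ × ℝ} (h : orient A B C = 0) (hAB : A ≠ B) (hBC : B ≠ C) (hAC : A ≠ C) :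
    C ∈ openSegment ℝ A B ∨ A ∈ openSegment ℝ B C ∨ B ∈ openSegment ℝ C A := by
  have h' : (B.1-A.1)*(C.2-A.2) = (B.2-A.2)*(C.1-A.1) := by
    simp only [orient] at h; linarith
  have hd : 0 < (B.1-A.1)^2 + (B.2-A.2)^2 := by
    by_contra hcon
    apply hAB
    ext
    · nlinarith [sq_nonneg (B.1-A.1), sq_nonneg (B.2-A.2)]
    · nlinarith [sq_nonneg (B.1-A.1), sq_nonneg (B.2-A.2)]
  obtain ⟨t, ht⟩ : ∃ t, t = ((C.1-A.1)*(B.1-A.1)+(C.2-A.2)*(B.2-A.2))/((B.1-A.1)^2 + (B.2-A.2)^2) := ⟨_, rfl⟩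
  have t1 : C.1 = A.1 + t*(B.1-A.1) := by
    rw [ht]; field_simp; linear_combination (-(B.2-A.2)) * h'
  have t2 : C.2 = A.2 + t*(B.2-A.2) := by
    rw [ht]; field_simp; linear_combination ((B.1-A.1)) * h'
  have ht0 : t ≠ 0 := by
    rintro rfl; apply hAC; ext <;> linarith
  have ht1 : t ≠ 1 := by
    rintro rfl; apply hBC; ext <;> linarith
  rcases lt_or_gt_of_ne ht0 with k | k
  · right; left
    have : t - 1 < 0 := by linarith
    have hne : 1 - t ≠ 0 := by linarith
    apply mem_openSegment_of (1/(1-t))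
    · apply one_div_pos.2; linarith
    · rw [div_lt_one (by linarith)]; linarith
    · rw [t1]; field_simp; ring
    · rw [t2]; field_simp; ring
  · rcases lt_or_gt_of_ne ht1 with k' | k'
    · left; exact mem_openSegment_of t k k' t1 t2
    · right; right
      have hne : t ≠ 0 := ht0
      apply mem_openSegment_of (1-1/t)
      · have : 1/t < 1 := by rw [div_lt_one k]; exact k'
        linarith
      · have : 0 < 1/t := by positivity
        linarith
      · rw [t1]; field_simp; ring
      · rw [t2]; field_simp; ring

theorem InT.same_side {A B C P : ℝ × ℝ} (h : InT A B C P) : 0 < orient A B P * orient A B C := by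
  have := orient_sum A B C P
  rcases h with ⟨a, b, c⟩ | ⟨a, b, c⟩
  · exact mul_pos a (by linarith)
  · exact mul_pos_of_neg_of_neg a (by linarith)

theorem InT.sep {A B C P : ℝ × ℝ} (h : InT A B C P) : orient A P B * orient A P C < 0 := by
  have h1 : orient A P B = - orient A B P := by simp only [orient]; ring
  have h2 : orient A P C = orient C A P := by simp only [orient]; ring
  rw [h1, h2]
  rcases h with ⟨a, b, c⟩ | ⟨a, b, c⟩
  · nlinarith [mul_pos a c]
  · nlinarith [mul_pos_of_neg_of_neg a c]

section Topo
variable {V : Type} {G : SimpleGraph V} {ρ : V → ℝ × ℝ}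

theorem crosses_symm {e f : Sym2 V} (h : Crosses ρ e f) : Crosses ρ f e := by
  refine ⟨fun v hv hv' => h.1 v hv' hv, ?_⟩
  rw [Set.inter_comm]; exact h.2

theorem crosses_of {u v w z : V} (h1 : u ≠ w) (h2 : u ≠ z) (h3 : v ≠ w) (h4 : v ≠ z)
    (h : (openSegment ℝ (ρ u) (ρ v) ∩ openSegment ℝ (ρ w) (ρ z)).Nonempty) :
    Crosses ρ s(u, v) s(w, z) := by
  refine ⟨?_, h⟩
  intro x hx hx'
  rw [Sym2.mem_iff] at hx hx'
  rcases hx with rfl | rfl <;> rcases hx' with rfl | rfl <;> contradiction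

theorem adj_not_mem (h : IsStraightLineDrawing G ρ) {u v w : V} (huv : G.Adj u v) (h1 : w ≠ u) (h2 : w ≠ v) :
    ρ w ∉ openSegment ℝ (ρ u) (ρ v) := by
  apply h.no_vertex_on_edge s(u, v) huv w
  rw [Sym2.mem_iff]; tauto

theorem tri_orient_ne (h : IsStraightLineDrawing G ρ) {u v w : V} (h1 : G.Adj u v) (h2 : G.Adj v w) (h3 : G.Adj u w) :
    orient (ρ u) (ρ v) (ρ w) ≠ 0 := by
  intro h0
  rcases collinear_between h0 (h.inj.ne h1.ne) (h.inj.ne h2.ne) (h.inj.ne h3.ne) with k | k | k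
  · exact adj_not_mem h h1 h3.ne' h2.ne' k
  · exact adj_not_mem h h2 h1.ne h3.ne k
  · exact adj_not_mem h h3.symm h2.ne h1.ne' k

theorem propagate (h : IsStraightLineDrawing G ρ) {a b c p q : V} (hab : G.Adj a b) (hbc : G.Adj b c)
    (hca : G.Adj c a) (hpq : G.Adj p q) (hqa : q ≠ a) (hqb : q ≠ b) (hqc : q ≠ c)
    (x1 : ¬ Crosses ρ s(p, q) s(a, b)) (x2 : ¬ Crosses ρ s(p, q) s(b, c)) (x3 : ¬ Crosses ρ s(p, q) s(c, a))
    (hin : InT (ρ a) (ρ b) (ρ c) (ρ p)) : InT (ρ a) (ρ b) (ρ c) (ρ q) := by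
  have npa : p ≠ a := fun e => hin.ne_left (by rw [e])
  have npb : p ≠ b := fun e => hin.rot.ne_left (by rw [e])
  have npc : p ≠ c := fun e => hin.rot.rot.ne_left (by rw [e])
  by_contra hcon
  obtain ⟨Z, hz, hz'⟩ := hin.exit hcon
  rcases hz with hz | rfl
  · rcases hz' with rfl | rfl | rfl | hz' | hz' | hz'
    · exact adj_not_mem h hpq npa.symm hqa.symm hz
    · exact adj_not_mem h hpq npb.symm hqb.symm hz
    · exact adj_not_mem h hpq npc.symm hqc.symm hz
    · exact x1 (crosses_of npa npb hqa hqb ⟨Z, hz, hz'⟩)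
    · exact x2 (crosses_of npb npc hqb hqc ⟨Z, hz, hz'⟩)
    · exact x3 (crosses_of npc npa hqc hqa ⟨Z, hz, hz'⟩)
  · rcases hz' with hz' | hz' | hz' | hz' | hz' | hz'
    · exact hqa (h.inj hz')
    · exact hqb (h.inj hz')
    · exact hqc (h.inj hz')
    · exact adj_not_mem h hab hqa hqb hz'
    · exact adj_not_mem h hbc hqb hqc hz'
    · exact adj_not_mem h hca hqc hqa hz'

/-- `q` lists five pairwise adjacent vertices. -/
def IsK5 (G : SimpleGraph V) (q : Fin 5 → V) : Prop := ∀ i j, i ≠ j → G.Adj (q i) (q j)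

theorem IsK5.perm {q : Fin 5 → V} (h : IsK5 G q) (σ : Equiv.Perm (Fin 5)) : IsK5 G (q ∘ σ) :=
  fun i j hij => h _ _ (σ.injective.ne hij)

theorem IsK5.ne {q : Fin 5 → V} (h : IsK5 G q) {i j : Fin 5} (hij : i ≠ j) : q i ≠ q j := (h i j hij).ne

theorem IsK5.inj {q : Fin 5 → V} (h : IsK5 G q) : Function.Injective q := by
  intro i j hij
  by_contra hne
  exact h.ne hne hij

theorem k5_aux (h : IsStraightLineDrawing G ρ) {q : Fin 5 → V} (hq : IsK5 G q)
    (hN : ∀ i j k l : Fin 5, i ≠ j → k ≠ l → ¬ Crosses ρ s(q i, q j) s(q k, q l)) :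
    ¬ InT (ρ (q 0)) (ρ (q 1)) (ρ (q 2)) (ρ (q 3)) := by
  have A := fun {i j : Fin 5} (hij : i ≠ j) => hq i j hij
  have N := fun {i j : Fin 5} (hij : i ≠ j) => hq.ne hij
  intro h3
  have h4 : InT (ρ (q 0)) (ρ (q 1)) (ρ (q 2)) (ρ (q 4)) :=
    propagate h (A (by decide)) (A (by decide)) (A (by decide)) (hq 3 4 (by decide)) (N (by decide)) (N (by decide))
      (N (by decide)) (hN _ _ _ _ (by decide) (by decide)) (hN _ _ _ _ (by decide) (by decide)) (hN _ _ _ _ (by decide) (by decide)) h3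
  rcases h3.partition h4 (h.inj.ne (N (by decide)))
    (adj_not_mem h (A (by decide)) (N (by decide)) (N (by decide)))
    (adj_not_mem h (A (by decide)) (N (by decide)) (N (by decide)))
    (adj_not_mem h (A (by decide)) (N (by decide)) (N (by decide))) with k | k | k
  · have := propagate (q := q 2) h (A (by decide)) (A (by decide)) (A (by decide)) (A (by decide)) (N (by decide)) (N (by decide))
      (N (by decide)) (hN _ _ _ _ (by decide) (by decide)) (hN _ _ _ _ (by decide) (by decide)) (hN _ _ _ _ (by decide) (by decide)) k
    exact h3.rot.rot.excl this
  · have := propagate (q := q 0) h (A (by decide)) (A (by decide)) (A (by decide)) (A (by decide)) (N (by decide)) (N (by decide))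
      (N (by decide)) (hN _ _ _ _ (by decide) (by decide)) (hN _ _ _ _ (by decide) (by decide)) (hN _ _ _ _ (by decide) (by decide)) k
    exact h3.excl this
  · have := propagate (q := q 1) h (A (by decide)) (A (by decide)) (A (by decide)) (A (by decide)) (N (by decide)) (N (by decide))
      (N (by decide)) (hN _ _ _ _ (by decide) (by decide)) (hN _ _ _ _ (by decide) (by decide)) (hN _ _ _ _ (by decide) (by decide)) k
    exact h3.rot.excl this

theorem k5_cross (h : IsStraightLineDrawing G ρ) {q : Fin 5 → V} (hq : IsK5 G q) :
    ∃ i j k l : Fin 5, i ≠ j ∧ k ≠ l ∧ Crosses ρ s(q i, q j) s(q k, q l) := by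
  by_contra hN
  push Not at hN
  have N := fun {i j : Fin 5} (hij : i ≠ j) => hq.ne hij
  have P : ∀ σ : Equiv.Perm (Fin 5), ¬ InT (ρ (q (σ 0))) (ρ (q (σ 1))) (ρ (q (σ 2))) (ρ (q (σ 3))) :=
    fun σ => k5_aux h (hq.perm σ) (fun _ _ _ _ h1 h2 => hN _ _ _ _ (σ.injective.ne h1) (σ.injective.ne h2))
  have T : ∀ i j k : Fin 5, i ≠ j → j ≠ k → i ≠ k → orient (ρ (q i)) (ρ (q j)) (ρ (q k)) ≠ 0 :=
    fun _ _ _ h1 h2 h3 => tri_orient_ne h (hq _ _ h1) (hq _ _ h2) (hq _ _ h3)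
  rcases four_points (T 0 1 2 (by decide) (by decide) (by decide)) (T 0 1 3 (by decide) (by decide) (by decide))
    (T 0 2 3 (by decide) (by decide) (by decide)) (T 1 2 3 (by decide) (by decide) (by decide)) with k | k | k | k | k | k | k
  · exact hN _ _ _ _ (by decide) (by decide) (crosses_of (N (by decide)) (N (by decide)) (N (by decide)) (N (by decide)) k)
  · exact hN _ _ _ _ (by decide) (by decide) (crosses_of (N (by decide)) (N (by decide)) (N (by decide)) (N (by decide)) k)
  · exact hN _ _ _ _ (by decide) (by decide) (crosses_of (N (by decide)) (N (by decide)) (N (by decide)) (N (by decide)) k)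
  · exact P 1 k
  · exact P (Equiv.swap 2 3) k
  · have := P (Equiv.swap 1 3) 
    exact this (by
      have e0 : (Equiv.swap (1 : Fin 5) 3) 0 = 0 := by decide
      have e1 : (Equiv.swap (1 : Fin 5) 3) 1 = 3 := by decide
      have e2 : (Equiv.swap (1 : Fin 5) 3) 2 = 2 := by decide
      have e3 : (Equiv.swap (1 : Fin 5) 3) 3 = 1 := by decide
      rw [e0, e1, e2, e3]; exact k.swap.rot.swap.rot.rot.swap.rot.rot)
  · have := P (Equiv.swap 0 3) 
    exact this (by
      have e0 : (Equiv.swap (0 : Fin 5) 3) 0 = 3 := by decide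
      have e1 : (Equiv.swap (0 : Fin 5) 3) 1 = 1 := by decide
      have e2 : (Equiv.swap (0 : Fin 5) 3) 2 = 2 := by decide
      have e3 : (Equiv.swap (0 : Fin 5) 3) 3 = 0 := by decide
      rw [e0, e1, e2, e3]; exact k.rot.rot)

end Topo

section Kite
variable {V : Type} {G : SimpleGraph V} {ρ : V → ℝ × ℝ}

theorem no_other_cross (h : IsICPlanarDrawing G ρ) {A X B Y p r s t : V} (hAX : G.Adj A X) (hBY : G.Adj B Y)
    (hc : Crosses ρ s(A, X) s(B, Y)) (hpr : G.Adj p r) (hst : G.Adj s t)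
    (hp : p = A ∨ p = X ∨ p = B ∨ p = Y) (hx : Crosses ρ s(p, r) s(s, t)) :
    (s(p, r) = s(A, X) ∧ s(s, t) = s(B, Y)) ∨ (s(p, r) = s(B, Y) ∧ s(s, t) = s(A, X)) := by
  have h1 : s(p, r) = s(A, X) ∨ s(p, r) = s(B, Y) := by
    by_contra hcon
    push Not at hcon
    have k1 := h.2.2 s(p, r) hpr s(A, X) hAX ⟨_, hst, hx⟩ ⟨_, hBY, hc⟩ hcon.1 p (Sym2.mem_mk_left _ _)
    have k2 := h.2.2 s(p, r) hpr s(B, Y) hBY ⟨_, hst, hx⟩ ⟨_, hAX, crosses_symm hc⟩ hcon.2 p (Sym2.mem_mk_left _ _)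
    rw [Sym2.mem_iff] at k1 k2
    tauto
  rcases h1 with e | e
  · left; refine ⟨e, ?_⟩
    rw [e] at hx
    exact h.2.1 _ hAX _ hst _ hBY hx hc
  · right; refine ⟨e, ?_⟩
    rw [e] at hx
    exact h.2.1 _ hBY _ hst _ hAX hx (crosses_symm hc)

/-- Five vertices drawn as a crossed quadrilateral `q 0, q 2, q 1, q 3` with apex `q 4`. -/
structure IsKite (G : SimpleGraph V) (ρ : V → ℝ × ℝ) (q : Fin 5 → V) : Prop where
  k5 : IsK5 G q
  cr : Crosses ρ s(q 0, q 1) s(q 2, q 3)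
  in1 : InT (ρ (q 0)) (ρ (q 2)) (ρ (q 4)) (ρ (q 1))
  in2 : InT (ρ (q 0)) (ρ (q 2)) (ρ (q 4)) (ρ (q 3))
  in3 : InT (ρ (q 0)) (ρ (q 1)) (ρ (q 4)) (ρ (q 3))
  in4 : InT (ρ (q 2)) (ρ (q 3)) (ρ (q 4)) (ρ (q 1))

theorem k5_index_no_cross (h : IsICPlanarDrawing G ρ) {q : Fin 5 → V} (hq : IsK5 G q)
    (hc : Crosses ρ s(q 0, q 1) s(q 2, q 3)) (i j k l : Fin 5)
    (hd : i ≠ j ∧ k ≠ l ∧ i ≠ 4 ∧ ¬ (({i, j} : Finset (Fin 5)) = {0, 1} ∧ ({k, l} : Finset (Fin 5)) = {2, 3})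
      ∧ ¬ (({i, j} : Finset (Fin 5)) = {2, 3} ∧ ({k, l} : Finset (Fin 5)) = {0, 1})) :
    ¬ Crosses ρ s(q i, q j) s(q k, q l) := by
  intro hx
  obtain ⟨h1, h2, h3, h4, h5⟩ := hd
  have key : ∀ a b c d : Fin 5, s(q a, q b) = s(q c, q d) → ({a, b} : Finset (Fin 5)) = {c, d} := by
    intro a b c d e
    rw [Sym2.eq_iff] at e
    rcases e with ⟨e1, e2⟩ | ⟨e1, e2⟩
    · rw [hq.inj e1, hq.inj e2]
    · rw [hq.inj e1, hq.inj e2, Finset.pair_comm]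
  have hi : i = 0 ∨ i = 1 ∨ i = 2 ∨ i = 3 := by
    exact (by decide : ∀ i : Fin 5, i ≠ 4 → i = 0 ∨ i = 1 ∨ i = 2 ∨ i = 3) i h3
  rcases no_other_cross h (hq 0 1 (by decide)) (hq 2 3 (by decide)) hc (hq i j h1) (hq k l h2)
    (by rcases hi with rfl | rfl | rfl | rfl <;> simp) hx with ⟨a, b⟩ | ⟨a, b⟩
  · exact h4 ⟨key _ _ _ _ a, key _ _ _ _ b⟩
  · exact h5 ⟨key _ _ _ _ a, key _ _ _ _ b⟩

/-- normalised crossing gives the nested triangle facts, first half. -/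
theorem kite_half (h : IsICPlanarDrawing G ρ) {q : Fin 5 → V} (hq : IsK5 G q)
    (hc : Crosses ρ s(q 0, q 1) s(q 2, q 3))
    (s1 : 0 < orient (ρ (q 0)) (ρ (q 1)) (ρ (q 4)) * orient (ρ (q 0)) (ρ (q 1)) (ρ (q 3))) :
    InT (ρ (q 0)) (ρ (q 1)) (ρ (q 4)) (ρ (q 3)) := by
  have hs := h.1
  have A := fun (i j : Fin 5) (hij : i ≠ j) => hq i j hij
  have N := fun (i j : Fin 5) (hij : i ≠ j) => hq.ne hij
  have X := k5_index_no_cross h hq hc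
  have T : ∀ i j k : Fin 5, i ≠ j → j ≠ k → i ≠ k → orient (ρ (q i)) (ρ (q j)) (ρ (q k)) ≠ 0 :=
    fun _ _ _ h1 h2 h3 => tri_orient_ne hs (hq _ _ h1) (hq _ _ h2) (hq _ _ h3)
  have o1 : orient (ρ (q 0)) (ρ (q 1)) (ρ (q 2)) * orient (ρ (q 0)) (ρ (q 1)) (ρ (q 3)) < 0 :=
    orient_of_cross hc.2 (T 0 1 2 (by decide) (by decide) (by decide))
  rcases four_points (T 0 1 4 (by decide) (by decide) (by decide)) (T 0 1 3 (by decide) (by decide) (by decide))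
    (T 0 4 3 (by decide) (by decide) (by decide)) (T 1 4 3 (by decide) (by decide) (by decide)) with k | k | k | k | k | k | k
  · exact (X 0 1 4 3 (by decide) (crosses_of (N _ _ (by decide)) (N _ _ (by decide)) (N _ _ (by decide)) (N _ _ (by decide)) k)).elim
  · exact (X 0 4 1 3 (by decide) (crosses_of (N _ _ (by decide)) (N _ _ (by decide)) (N _ _ (by decide)) (N _ _ (by decide)) k)).elim
  · exact (X 0 3 1 4 (by decide) (crosses_of (N _ _ (by decide)) (N _ _ (by decide)) (N _ _ (by decide)) (N _ _ (by decide)) k)).elim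
  · exact k
  · exfalso
    have hB := propagate (q := q 2) hs (A 0 1 (by decide)) (A 1 3 (by decide)) (A 3 0 (by decide)) (A 4 2 (by decide))
      (N _ _ (by decide)) (N _ _ (by decide)) (N _ _ (by decide))
      (fun hh => X 0 1 2 4 (by decide) (by rw [Sym2.eq_swap (a := q 2)]; exact crosses_symm hh))
      (fun hh => X 1 3 2 4 (by decide) (by rw [Sym2.eq_swap (a := q 2)]; exact crosses_symm hh))
      (fun hh => X 3 0 2 4 (by decide) (by rw [Sym2.eq_swap (a := q 2)]; exact crosses_symm hh)) k
    linarith [hB.same_side]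
  · exfalso
    have := k.sep
    linarith [mul_comm (orient (ρ (q 0)) (ρ (q 1)) (ρ (q 4))) (orient (ρ (q 0)) (ρ (q 1)) (ρ (q 3)))]
  · exfalso
    have := k.sep
    rw [orient_swap (ρ (q 0)), orient_swap (ρ (q 0))] at this
    linarith

theorem kite_full (h : IsICPlanarDrawing G ρ) {q : Fin 5 → V} (hq : IsK5 G q)
    (hc : Crosses ρ s(q 0, q 1) s(q 2, q 3))
    (in3 : InT (ρ (q 0)) (ρ (q 1)) (ρ (q 4)) (ρ (q 3)))
    (in4 : InT (ρ (q 2)) (ρ (q 3)) (ρ (q 4)) (ρ (q 1))) :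
    InT (ρ (q 0)) (ρ (q 2)) (ρ (q 4)) (ρ (q 1)) := by
  have hs := h.1
  have A := fun (i j : Fin 5) (hij : i ≠ j) => hq i j hij
  have N := fun (i j : Fin 5) (hij : i ≠ j) => hq.ne hij
  have X := k5_index_no_cross h hq hc
  have T : ∀ i j k : Fin 5, i ≠ j → j ≠ k → i ≠ k → orient (ρ (q i)) (ρ (q j)) (ρ (q k)) ≠ 0 :=
    fun _ _ _ h1 h2 h3 => tri_orient_ne hs (hq _ _ h1) (hq _ _ h2) (hq _ _ h3)
  have o1 : orient (ρ (q 0)) (ρ (q 1)) (ρ (q 2)) * orient (ρ (q 0)) (ρ (q 1)) (ρ (q 3)) < 0 :=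
    orient_of_cross hc.2 (T 0 1 2 (by decide) (by decide) (by decide))
  have s3 := in3.same_side
  -- `q 2` and `q 4` are on different sides of the line through `q 0`, `q 1`
  have o2 : ¬ 0 < orient (ρ (q 0)) (ρ (q 1)) (ρ (q 2)) * orient (ρ (q 0)) (ρ (q 1)) (ρ (q 4)) := by
    intro hh
    generalize orient (ρ (q 0)) (ρ (q 1)) (ρ (q 2)) = u at *
    generalize orient (ρ (q 0)) (ρ (q 1)) (ρ (q 3)) = v at *
    generalize orient (ρ (q 0)) (ρ (q 1)) (ρ (q 4)) = w at *
    have := mul_pos hh s3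
    nlinarith [mul_neg_of_neg_of_pos o1 (by positivity : 0 < w^2 + 1), mul_self_nonneg w]
  rcases four_points (T 0 2 4 (by decide) (by decide) (by decide)) (T 0 2 1 (by decide) (by decide) (by decide))
    (T 0 4 1 (by decide) (by decide) (by decide)) (T 2 4 1 (by decide) (by decide) (by decide)) with k | k | k | k | k | k | k
  · exact (X 0 2 4 1 (by decide) (crosses_of (N _ _ (by decide)) (N _ _ (by decide)) (N _ _ (by decide)) (N _ _ (by decide)) k)).elim
  · exact (X 0 4 2 1 (by decide) (crosses_of (N _ _ (by decide)) (N _ _ (by decide)) (N _ _ (by decide)) (N _ _ (by decide)) k)).elim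
  · exact (X 0 1 2 4 (by decide) (crosses_of (N _ _ (by decide)) (N _ _ (by decide)) (N _ _ (by decide)) (N _ _ (by decide)) k)).elim
  · exact k
  · exfalso
    have := k.rot.rot.swap.same_side
    rw [mul_comm] at this
    exact o2 this
  · exfalso
    have := k.rot.rot.swap.same_side
    exact o2 this
  · exfalso
    have hB := propagate (q := q 3) hs (A 2 4 (by decide)) (A 4 1 (by decide)) (A 1 2 (by decide)) (A 0 3 (by decide))
      (N _ _ (by decide)) (N _ _ (by decide)) (N _ _ (by decide))
      (X 0 3 2 4 (by decide)) (X 0 3 4 1 (by decide)) (X 0 3 1 2 (by decide)) k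
    exact in4.swap.excl hB.rot.rot

theorem exists_perm5 (i j k l : Fin 5) (h1 : i ≠ j) (h2 : i ≠ k) (h3 : i ≠ l) (h4 : j ≠ k) (h5 : j ≠ l)
    (h6 : k ≠ l) : ∃ σ : Equiv.Perm (Fin 5), σ 0 = i ∧ σ 1 = j ∧ σ 2 = k ∧ σ 3 = l := by
  obtain ⟨m, m1, m2, m3, m4⟩ : ∃ m : Fin 5, m ≠ i ∧ m ≠ j ∧ m ≠ k ∧ m ≠ l :=
    (by decide : ∀ i j k l : Fin 5, ∃ m : Fin 5, m ≠ i ∧ m ≠ j ∧ m ≠ k ∧ m ≠ l) i j k l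
  have hinj : Function.Injective (![i, j, k, l, m] : Fin 5 → Fin 5) := by
    intro a b hab
    fin_cases a <;> fin_cases b <;> simp_all
  exact ⟨Equiv.ofBijective _ (Finite.injective_iff_bijective.1 hinj), rfl, rfl, rfl, rfl⟩

theorem kite_of_sides (h : IsICPlanarDrawing G ρ) {q : Fin 5 → V} (hq : IsK5 G q)
    (hc : Crosses ρ s(q 0, q 1) s(q 2, q 3))
    (s1 : 0 < orient (ρ (q 0)) (ρ (q 1)) (ρ (q 4)) * orient (ρ (q 0)) (ρ (q 1)) (ρ (q 3)))
    (s2 : 0 < orient (ρ (q 2)) (ρ (q 3)) (ρ (q 4)) * orient (ρ (q 2)) (ρ (q 3)) (ρ (q 1))) :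
    IsKite G ρ q := by
  obtain ⟨σ, e0, e1, e2, e3⟩ := exists_perm5 2 3 0 1 (by decide) (by decide) (by decide) (by decide) (by decide) (by decide)
  have e4 : σ 4 = 4 := by
    have k0 : σ 4 ≠ σ 0 := σ.injective.ne (by decide)
    have k1 : σ 4 ≠ σ 1 := σ.injective.ne (by decide)
    have k2 : σ 4 ≠ σ 2 := σ.injective.ne (by decide)
    have k3 : σ 4 ≠ σ 3 := σ.injective.ne (by decide)
    rw [e0] at k0; rw [e1] at k1; rw [e2] at k2; rw [e3] at k3
    generalize σ 4 = z at *
    revert k0 k1 k2 k3; clear e0 e1 e2 e3; revert z; decide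
  have hc' : Crosses ρ s((q ∘ σ) 0, (q ∘ σ) 1) s((q ∘ σ) 2, (q ∘ σ) 3) := by
    simp only [Function.comp, e0, e1, e2, e3]; exact crosses_symm hc
  have in3 := kite_half h hq hc s1
  have in4 := kite_half h (hq.perm σ) hc' (by simp only [Function.comp, e0, e1, e4, e3]; exact s2)
  have in1 := kite_full h hq hc in3 (by simpa only [Function.comp, e0, e1, e4, e3] using in4)
  have in2 := kite_full h (hq.perm σ) hc' in4 (by simpa only [Function.comp, e2, e1, e4, e3] using in3)
  simp only [Function.comp, e0, e1, e2, e3, e4] at in4 in2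
  exact ⟨hq, hc, in1, in2.swap, in3, in4⟩

theorem exists_kite (h : IsICPlanarDrawing G ρ) {q : Fin 5 → V} (hq : IsK5 G q) :
    ∃ σ : Equiv.Perm (Fin 5), IsKite G ρ (q ∘ σ) := by
  obtain ⟨i, j, k, l, hij, hkl, hx⟩ := k5_cross h.1 hq
  have n1 : i ≠ k := fun e => hx.1 (q i) (Sym2.mem_mk_left _ _) (e ▸ Sym2.mem_mk_left _ _)
  have n2 : i ≠ l := fun e => hx.1 (q i) (Sym2.mem_mk_left _ _) (e ▸ Sym2.mem_mk_right _ _)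
  have n3 : j ≠ k := fun e => hx.1 (q j) (Sym2.mem_mk_right _ _) (e ▸ Sym2.mem_mk_left _ _)
  have n4 : j ≠ l := fun e => hx.1 (q j) (Sym2.mem_mk_right _ _) (e ▸ Sym2.mem_mk_right _ _)
  obtain ⟨σ, e0, e1, e2, e3⟩ := exists_perm5 i j k l hij n1 n2 n3 n4 hkl
  have hq1 := hq.perm σ
  have hc : Crosses ρ s((q ∘ σ) 0, (q ∘ σ) 1) s((q ∘ σ) 2, (q ∘ σ) 3) := by
    simp only [Function.comp, e0, e1, e2, e3]; exact hx
  have T : ∀ i j k : Fin 5, i ≠ j → j ≠ k → i ≠ k → orient (ρ ((q ∘ σ) i)) (ρ ((q ∘ σ) j)) (ρ ((q ∘ σ) k)) ≠ 0 :=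
    fun _ _ _ h1 h2 h3 => tri_orient_ne h.1 (hq1 _ _ h1) (hq1 _ _ h2) (hq1 _ _ h3)
  have o1 := orient_of_cross hc.2 (T 0 1 2 (by decide) (by decide) (by decide))
  have o2 := orient_of_cross (crosses_symm hc).2 (T 2 3 0 (by decide) (by decide) (by decide))
  have t1 := T 0 1 4 (by decide) (by decide) (by decide)
  have t2 := T 2 3 4 (by decide) (by decide) (by decide)
  have sgn : ∀ u v w : ℝ, u * v < 0 → w ≠ 0 → 0 < w * u ∨ 0 < w * v := by
    intro u v w huv hw
    rcases mul_neg_iff.1 huv with ⟨a, b⟩ | ⟨a, b⟩ <;> rcases lt_or_gt_of_ne hw with c | c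
    · right; exact mul_pos_of_neg_of_neg c b
    · left; exact mul_pos c a
    · left; exact mul_pos_of_neg_of_neg c a
    · right; exact mul_pos c b
  have sw : ∀ τ : Equiv.Perm (Fin 5), (q ∘ σ) ∘ τ = q ∘ (τ.trans σ) := fun τ => rfl
  have f1 : ∀ i j : Fin 5, ∀ z w : ℝ × ℝ, 0 < orient (ρ ((q ∘ σ) i)) (ρ ((q ∘ σ) j)) z * orient (ρ ((q ∘ σ) i)) (ρ ((q ∘ σ) j)) w →
      0 < orient (ρ ((q ∘ σ) j)) (ρ ((q ∘ σ) i)) z * orient (ρ ((q ∘ σ) j)) (ρ ((q ∘ σ) i)) w := by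
    intro i j z w hh
    rw [orient_swap (ρ ((q ∘ σ) i)), orient_swap (ρ ((q ∘ σ) i)) _ w]; linarith
  rcases sgn _ _ _ o1 t1 with a | a <;> rcases sgn _ _ _ o2 t2 with b | b
  · refine ⟨((Equiv.swap 0 1).trans (Equiv.swap 2 3)).trans σ, ?_⟩
    rw [← sw]
    refine kite_of_sides h (hq1.perm _) ?_ ?_ ?_
    · show Crosses ρ s((q ∘ σ) 1, (q ∘ σ) 0) s((q ∘ σ) 3, (q ∘ σ) 2)
      rw [Sym2.eq_swap (a := (q ∘ σ) 1), Sym2.eq_swap (a := (q ∘ σ) 3)]; exact hc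
    · exact f1 _ _ _ _ a
    · exact f1 _ _ _ _ b
  · refine ⟨(Equiv.swap 2 3).trans σ, ?_⟩
    rw [← sw]
    refine kite_of_sides h (hq1.perm _) ?_ ?_ ?_
    · show Crosses ρ s((q ∘ σ) 0, (q ∘ σ) 1) s((q ∘ σ) 3, (q ∘ σ) 2)
      rw [Sym2.eq_swap (a := (q ∘ σ) 3)]; exact hc
    · exact a
    · exact f1 _ _ _ _ b
  · refine ⟨(Equiv.swap 0 1).trans σ, ?_⟩
    rw [← sw]
    refine kite_of_sides h (hq1.perm _) ?_ ?_ ?_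
    · show Crosses ρ s((q ∘ σ) 1, (q ∘ σ) 0) s((q ∘ σ) 2, (q ∘ σ) 3)
      rw [Sym2.eq_swap (a := (q ∘ σ) 1)]; exact hc
    · exact f1 _ _ _ _ a
    · exact b
  · exact ⟨σ, kite_of_sides h hq1 hc a b⟩

end Kite

section Kite2
variable {V : Type} {G : SimpleGraph V} {ρ : V → ℝ × ℝ}

theorem IsKite.no_cross (h : IsICPlanarDrawing G ρ) {q : Fin 5 → V} (hk : IsKite G ρ q) {u w : V}
    (huw : G.Adj u w) (hu : ∀ l, u ≠ q l) {a b : Fin 5} (hab : a ≠ b) : ¬ Crosses ρ s(u, w) s(q a, q b) := by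
  have key : ∀ a b : Fin 5, a ≠ b → a ≠ 4 → ¬ Crosses ρ s(u, w) s(q a, q b) := by
    intro a b hab ha hx
    have hi : a = 0 ∨ a = 1 ∨ a = 2 ∨ a = 3 :=
      (by decide : ∀ i : Fin 5, i ≠ 4 → i = 0 ∨ i = 1 ∨ i = 2 ∨ i = 3) a ha
    rcases no_other_cross h (hk.k5 0 1 (by decide)) (hk.k5 2 3 (by decide)) hk.cr (hk.k5 a b hab) huw
      (by rcases hi with rfl | rfl | rfl | rfl <;> simp) (crosses_symm hx) with ⟨_, e⟩ | ⟨_, e⟩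
    · rw [Sym2.eq_iff] at e
      rcases e with e | e
      · exact hu _ e.1
      · exact hu _ e.1
    · rw [Sym2.eq_iff] at e
      rcases e with e | e
      · exact hu _ e.1
      · exact hu _ e.1
  by_cases ha : a = 4
  · have hb : b ≠ 4 := fun hb => hab (ha.trans hb.symm)
    rw [Sym2.eq_swap (a := q a)]
    exact key b a hab.symm hb
  · exact key a b hab ha

theorem IsKite.prop (h : IsICPlanarDrawing G ρ) {q : Fin 5 → V} (hk : IsKite G ρ q) {u w : V}
    (huw : G.Adj u w) (hu : ∀ l, u ≠ q l) {i j k : Fin 5} (hij : i ≠ j) (hjk : j ≠ k) (hik : k ≠ i)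
    (h1 : w ≠ q i) (h2 : w ≠ q j) (h3 : w ≠ q k) :
    InT (ρ (q i)) (ρ (q j)) (ρ (q k)) (ρ u) ↔ InT (ρ (q i)) (ρ (q j)) (ρ (q k)) (ρ w) := by
  constructor
  · exact propagate h.1 (hk.k5 _ _ hij) (hk.k5 _ _ hjk) (hk.k5 _ _ hik) huw h1 h2 h3
      (hk.no_cross h huw hu hij) (hk.no_cross h huw hu hjk) (hk.no_cross h huw hu hik)
  · have e : s(w, u) = s(u, w) := Sym2.eq_swap
    exact propagate h.1 (hk.k5 _ _ hij) (hk.k5 _ _ hjk) (hk.k5 _ _ hik) huw.symm (hu _) (hu _) (hu _)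
      (e ▸ hk.no_cross h huw hu hij) (e ▸ hk.no_cross h huw hu hjk) (e ▸ hk.no_cross h huw hu hik)

/-- Two vertices lie in the same triangles spanned by the five points. -/
def SameStatus (ρ : V → ℝ × ℝ) (q : Fin 5 → V) (u w : V) : Prop :=
  ∀ i j k : Fin 5, i ≠ j → j ≠ k → k ≠ i →
    (InT (ρ (q i)) (ρ (q j)) (ρ (q k)) (ρ u) ↔ InT (ρ (q i)) (ρ (q j)) (ρ (q k)) (ρ w))

theorem SameStatus.symm {q : Fin 5 → V} {u w : V} (h : SameStatus ρ q u w) : SameStatus ρ q w u :=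
  fun i j k a b c => (h i j k a b c).symm

theorem SameStatus.trans {q : Fin 5 → V} {u w z : V} (h : SameStatus ρ q u w) (h' : SameStatus ρ q w z) :
    SameStatus ρ q u z :=
  fun i j k a b c => (h i j k a b c).trans (h' i j k a b c)

theorem SameStatus.refl {q : Fin 5 → V} (u : V) : SameStatus ρ q u u := fun _ _ _ _ _ _ => Iff.rfl

theorem SameStatus.perm {q : Fin 5 → V} {u w : V} (h : SameStatus ρ q u w) (σ : Equiv.Perm (Fin 5)) :
    SameStatus ρ (q ∘ σ) u w :=
  fun _ _ _ a b c => h _ _ _ (σ.injective.ne a) (σ.injective.ne b) (σ.injective.ne c)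

theorem IsKite.status (h : IsICPlanarDrawing G ρ) {q : Fin 5 → V} (hk : IsKite G ρ q) {u w : V}
    (huw : G.Adj u w) (hu : ∀ l, u ≠ q l) (hw : ∀ l, w ≠ q l) : SameStatus ρ q u w :=
  fun _ _ _ a b c => hk.prop h huw hu a b c (hw _) (hw _) (hw _)

theorem IsKite.flip {q : Fin 5 → V} (hk : IsKite G ρ q) :
    IsKite G ρ (q ∘ ((Equiv.swap 0 2).trans (Equiv.swap 1 3) : Equiv.Perm (Fin 5))) := by
  refine ⟨hk.k5.perm _, ?_, ?_, ?_, ?_, ?_⟩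
  · exact crosses_symm hk.cr
  · exact hk.in2.swap
  · exact hk.in1.swap
  · exact hk.in4
  · exact hk.in3

theorem IsKite.diag (h : IsICPlanarDrawing G ρ) {q : Fin 5 → V} (hk : IsKite G ρ q) {s1 s2 : V}
    (hs : SameStatus ρ q s1 s2) (h1 : ∀ l, s1 ≠ q l) (h2 : ∀ l, s2 ≠ q l)
    (a1 : G.Adj s1 (q 0)) (a2 : G.Adj s2 (q 1)) : False := by
  have N := fun (i j : Fin 5) (hij : i ≠ j) => hk.k5.ne hij
  have n1 : ¬ InT (ρ (q 3)) (ρ (q 2)) (ρ (q 4)) (ρ s1) := by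
    rw [hk.prop h a1 h1 (by decide) (by decide) (by decide) (N _ _ (by decide)) (N _ _ (by decide)) (N _ _ (by decide))]
    exact hk.in2.excl
  have n2 : ¬ InT (ρ (q 3)) (ρ (q 0)) (ρ (q 2)) (ρ s2) := by
    rw [hk.prop h a2 h2 (by decide) (by decide) (by decide) (N _ _ (by decide)) (N _ _ (by decide)) (N _ _ (by decide))]
    intro hh
    have s := hh.rot.rot.same_side
    have o := orient_of_cross (crosses_symm hk.cr).2 (tri_orient_ne h.1 (hk.k5 2 3 (by decide)) (hk.k5 3 0 (by decide)) (hk.k5 2 0 (by decide)))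
    linarith [mul_comm (orient (ρ (q 2)) (ρ (q 3)) (ρ (q 0))) (orient (ρ (q 2)) (ρ (q 3)) (ρ (q 1)))]
  have n3 : ¬ InT (ρ (q 3)) (ρ (q 4)) (ρ (q 0)) (ρ s2) := by
    rw [hk.prop h a2 h2 (by decide) (by decide) (by decide) (N _ _ (by decide)) (N _ _ (by decide)) (N _ _ (by decide))]
    exact hk.in3.rot.excl
  have hin : InT (ρ (q 0)) (ρ (q 2)) (ρ (q 4)) (ρ s2) := by
    rw [hk.prop h a2 h2 (by decide) (by decide) (by decide) (N _ _ (by decide)) (N _ _ (by decide)) (N _ _ (by decide))]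
    exact hk.in1
  rcases hk.in2.partition hin (h.1.inj.ne (h2 _))
    (adj_not_mem h.1 (hk.k5 3 0 (by decide)) (h2 _) (h2 _)) (adj_not_mem h.1 (hk.k5 3 2 (by decide)) (h2 _) (h2 _))
    (adj_not_mem h.1 (hk.k5 3 4 (by decide)) (h2 _) (h2 _)) with k | k | k
  · exact n2 k
  · exact n1 ((hs 3 2 4 (by decide) (by decide) (by decide)).2 k)
  · exact n3 k

theorem IsKite.inner (h : IsICPlanarDrawing G ρ) {q : Fin 5 → V} (hk : IsKite G ρ q) {R : V}
    (hR : ∀ l, R ≠ q l) (a1 : G.Adj R (q 1)) (a3 : G.Adj R (q 3)) (a4 : G.Adj R (q 4)) :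
    InT (ρ (q 1)) (ρ (q 3)) (ρ (q 4)) (ρ R) := by
  have N := fun (i j : Fin 5) (hij : i ≠ j) => hk.k5.ne hij
  have hin : InT (ρ (q 0)) (ρ (q 1)) (ρ (q 4)) (ρ R) := by
    rw [hk.prop h a3 hR (by decide) (by decide) (by decide) (N _ _ (by decide)) (N _ _ (by decide)) (N _ _ (by decide))]
    exact hk.in3
  rcases hk.in3.partition hin (h.1.inj.ne (hR _))
    (adj_not_mem h.1 (hk.k5 3 0 (by decide)) (hR _) (hR _)) (adj_not_mem h.1 (hk.k5 3 1 (by decide)) (hR _) (hR _))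
    (adj_not_mem h.1 (hk.k5 3 4 (by decide)) (hR _) (hR _)) with k | k | k
  · exfalso
    rw [hk.prop h a4 hR (by decide) (by decide) (by decide) (N _ _ (by decide)) (N _ _ (by decide)) (N _ _ (by decide))] at k
    exact hk.in3.rot.rot.excl k
  · exact k.swap
  · exfalso
    rw [hk.prop h a1 hR (by decide) (by decide) (by decide) (N _ _ (by decide)) (N _ _ (by decide)) (N _ _ (by decide))] at k
    exact hk.in3.rot.excl k

end Kite2

/-- Two identical chains of `m + 1` levels of four vertices (`0, 1, 2, 3` stand for `a, b, x, y`). -/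
structure Chains {V : Type} (G : SimpleGraph V) (m : ℕ) (v : Bool → ℕ → Fin 4 → V) : Prop where
  one_le : 1 ≤ m
  inj : ∀ s i r s' i' r', i ≤ m → i' ≤ m → v s i r = v s' i' r' → s = s' ∧ i = i' ∧ r = r'
  k4 : ∀ s i r r', i ≤ m → r ≠ r' → G.Adj (v s i r) (v s i r')
  up : ∀ s i r, i + 1 ≤ m → G.Adj (v s i 0) (v s (i + 1) r)
  bx : ∀ s i r, i + 1 ≤ m → (r = 2 ∨ r = 3) → G.Adj (v s i 1) (v s (i + 1) r)
  ay : ∀ s i, i + 2 ≤ m → G.Adj (v s i 0) (v s (i + 2) 3)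
  sx : ∀ s, G.Adj (v s 0 2) (v s 1 2)
  sy : ∀ s, G.Adj (v s 0 3) (v s 1 3)
  ga : ∀ s, G.Adj (v s m 0) (v (!s) m 0)
  gb : ∀ s, G.Adj (v s m 1) (v (!s) m 1)
  gc : ∀ s i, i + 1 = m → G.Adj (v s i 0) (v (!s) i 0)

section Chain
variable {V : Type} {G : SimpleGraph V} {ρ : V → ℝ × ℝ} {m : ℕ} {v : Bool → ℕ → Fin 4 → V}

/-- The five pairwise adjacent vertices at level `i + 1`. -/
def quint (v : Bool → ℕ → Fin 4 → V) (s : Bool) (i : ℕ) : Fin 5 → V :=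
  ![v s (i+1) 0, v s (i+1) 1, v s (i+1) 2, v s (i+1) 3, v s i 0]

theorem Chains.k5 (hC : Chains G m v) (s : Bool) {i : ℕ} (hi : i + 1 ≤ m) : IsK5 G (quint v s i) := by
  intro a b hab
  have k4 := fun r r' => hC.k4 s (i+1) r r' hi
  have up := fun r => hC.up s i r hi
  fin_cases a <;> fin_cases b <;> first
    | exact absurd rfl hab
    | exact k4 _ _ (by decide)
    | exact up _
    | exact (up _).symm

theorem Chains.out_chain (hC : Chains G m v) (s : Bool) {i : ℕ} (hi : i + 1 ≤ m) (t : Bool) (j : ℕ) (r : Fin 4)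
    (hj : j ≤ m) (hne : t ≠ s ∨ (j ≠ i + 1 ∧ (j ≠ i ∨ r ≠ 0))) (l : Fin 5) : v t j r ≠ quint v s i l := by
  intro e
  have key : ∀ i' r', i' ≤ m → v t j r = v s i' r' → t = s ∧ j = i' ∧ r = r' := fun i' r' h' e' => hC.inj _ _ _ _ _ _ hj h' e'
  fin_cases l
  · obtain ⟨h1, h2, h3⟩ := key (i+1) 0 hi e; tauto
  · obtain ⟨h1, h2, h3⟩ := key (i+1) 1 hi e; tauto
  · obtain ⟨h1, h2, h3⟩ := key (i+1) 2 hi e; tauto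
  · obtain ⟨h1, h2, h3⟩ := key (i+1) 3 hi e; tauto
  · obtain ⟨h1, h2, h3⟩ := key i 0 (by omega) e; tauto

theorem Chains.status (hC : Chains G m v) (h : IsICPlanarDrawing G ρ) {q : Fin 5 → V} (hk : IsKite G ρ q)
    (t : Bool) (j0 : ℕ) (hout : ∀ j r, j0 ≤ j → j ≤ m → ∀ l, v t j r ≠ q l) :
    ∀ n j r, j + n = m → j0 ≤ j → SameStatus ρ q (v t j r) (v t m 0) := by
  have lev : ∀ j r, j0 ≤ j → j ≤ m → SameStatus ρ q (v t j r) (v t j 0) := by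
    intro j r h1 h2
    by_cases hr : r = 0
    · subst hr; exact SameStatus.refl _
    · exact hk.status h (hC.k4 t j r 0 h2 hr) (hout _ _ h1 h2) (hout _ _ h1 h2)
  intro n
  induction n with
  | zero =>
    intro j r h1 h2
    have : j = m := by omega
    subst this
    exact lev _ _ h2 le_rfl
  | succ n ih =>
    intro j r h1 h2
    have s1 := lev j r h2 (by omega)
    have s2 := hk.status h (hC.up t j 0 (by omega)) (hout _ _ h2 (by omega)) (hout (j+1) 0 (by omega) (by omega))
    exact s1.trans (s2.trans (ih (j+1) 0 (by omega) (by omega)))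

theorem Chains.status_other (hC : Chains G m v) (h : IsICPlanarDrawing G ρ) {s : Bool} {i : ℕ} (hi : i + 1 ≤ m)
    {σ : Equiv.Perm (Fin 5)} (hk : IsKite G ρ (quint v s i ∘ σ)) (j : ℕ) (r : Fin 4) (hj : j ≤ m) :
    SameStatus ρ (quint v s i ∘ σ) (v (!s) j r) (v (!s) m 0) :=
  hC.status h hk (!s) 0 (fun _ _ _ hj' _ => hC.out_chain s hi _ _ _ hj' (Or.inl (by simp)) _) (m - j) j r (by omega) (by omega)

/-- All outer triangles of the chain `s` avoid the other chain. -/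
def GoodChain (ρ : V → ℝ × ℝ) (G : SimpleGraph V) (m : ℕ) (v : Bool → ℕ → Fin 4 → V) (s : Bool) : Prop :=
  ∀ i, i + 1 ≤ m → ∀ σ : Equiv.Perm (Fin 5), IsKite G ρ (quint v s i ∘ σ) →
    ¬ InT (ρ ((quint v s i ∘ σ) 0)) (ρ ((quint v s i ∘ σ) 2)) (ρ ((quint v s i ∘ σ) 4)) (ρ (v (!s) m 0))

theorem quint_mem (v : Bool → ℕ → Fin 4 → V) (s : Bool) (i : ℕ) (l : Fin 5) :
    ∃ j r, j ≤ i + 1 ∧ quint v s i l = v s j r := by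
  fin_cases l
  · exact ⟨i+1, 0, le_rfl, rfl⟩
  · exact ⟨i+1, 1, le_rfl, rfl⟩
  · exact ⟨i+1, 2, le_rfl, rfl⟩
  · exact ⟨i+1, 3, le_rfl, rfl⟩
  · exact ⟨i, 0, by omega, rfl⟩

theorem Chains.exists_good (hC : Chains G m v) (h : IsICPlanarDrawing G ρ) : ∃ s, GoodChain ρ G m v s := by
  by_contra hcon
  push Not at hcon
  have key : ∀ s, ∃ i, i + 1 ≤ m ∧ ∃ σ : Equiv.Perm (Fin 5), ∀ j r, j ≤ m →
      InT (ρ ((quint v s i ∘ σ) 0)) (ρ ((quint v s i ∘ σ) 2)) (ρ ((quint v s i ∘ σ) 4)) (ρ (v (!s) j r)) := by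
    intro s
    have := hcon s
    unfold GoodChain at this
    push Not at this
    obtain ⟨i, hi, σ, hk, hin⟩ := this
    exact ⟨i, hi, σ, fun j r hj => (hC.status_other h hi hk j r hj 0 2 4 (by decide) (by decide) (by decide)).2 hin⟩
  obtain ⟨i, hi, σ, k1⟩ := key true
  obtain ⟨i', hi', σ', k2⟩ := key false
  have m1 : ∀ l, InT (ρ ((quint v true i ∘ σ) 0)) (ρ ((quint v true i ∘ σ) 2)) (ρ ((quint v true i ∘ σ) 4))
      (ρ ((quint v false i' ∘ σ') l)) := by
    intro l
    obtain ⟨j, r, hj, e⟩ := quint_mem v false i' (σ' l)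
    have := k1 j r (by omega)
    simp only [Function.comp, e] at this ⊢
    exact this
  have m2 : InT (ρ ((quint v false i' ∘ σ') 0)) (ρ ((quint v false i' ∘ σ') 2)) (ρ ((quint v false i' ∘ σ') 4))
      (ρ ((quint v true i ∘ σ) 0)) := by
    obtain ⟨j, r, hj, e⟩ := quint_mem v true i (σ 0)
    have := k2 j r (by omega)
    simp only [Function.comp, e] at this ⊢
    exact this
  exact (InT.trans (m1 0) (m1 2) (m1 4) m2).ne_left rfl

set_option synthInstance.maxHeartbeats 400000 in
set_option synthInstance.maxSize 4000 in
set_option maxRecDepth 20000 in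
theorem perm5_aux : ∀ b d a c e : Fin 5,
    ((b = 2 ∨ b = 3 ∨ b = 4) ∧ (d = 2 ∨ d = 3 ∨ d = 4) ∧ b ≠ d ∧
    ¬ ((a = 2 ∨ a = 3 ∨ a = 4) ∧ (b = 2 ∨ b = 3 ∨ b = 4)) ∧
    ¬ ((c = 2 ∨ c = 3 ∨ c = 4) ∧ (d = 2 ∨ d = 3 ∨ d = 4)) ∧
    ¬ ((a = 0 ∨ a = 1 ∨ a = 4) ∧ (b = 0 ∨ b = 1 ∨ b = 4)) ∧
    ¬ ((c = 0 ∨ c = 1 ∨ c = 4) ∧ (d = 0 ∨ d = 1 ∨ d = 4)) ∧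
    a ≠ b ∧ a ≠ c ∧ a ≠ d ∧ a ≠ e ∧ b ≠ c ∧ b ≠ e ∧ c ≠ d ∧ c ≠ e ∧ d ≠ e) →
    e = 4 ∧ ((a = 0 ∧ c = 1) ∨ (a = 1 ∧ c = 0)) ∧ ((b = 2 ∧ d = 3) ∨ (b = 3 ∧ d = 2)) := by decide

theorem Chains.level (hC : Chains G m v) (h : IsICPlanarDrawing G ρ) {s : Bool} (hg : GoodChain ρ G m v s)
    {i : ℕ} (hi : i + 1 ≤ m) : ∃ r r' : Fin 4, ((r = 2 ∧ r' = 3) ∨ (r = 3 ∧ r' = 2)) ∧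
      IsKite G ρ ![v s (i+1) 0, v s (i+1) r, v s (i+1) 1, v s (i+1) r', v s i 0] := by
  obtain ⟨σ, hk⟩ := exists_kite h (hC.k5 s hi)
  have hz := hg i hi σ hk
  have out := fun t j r (hj : j ≤ m) hne l => hC.out_chain s hi t j r hj hne (σ l)
  -- outer neighbours
  obtain ⟨S, hSo, hSs, hSa⟩ : ∃ S : Fin 5 → V, (∀ l n, S l ≠ (quint v s i ∘ σ) n) ∧
      (∀ l, SameStatus ρ (quint v s i ∘ σ) (S l) (v (!s) m 0)) ∧
      (∀ l, (l = 0 ∨ l = 1 ∨ l = 4) → G.Adj (S l) (quint v s i l)) := by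
    by_cases hm : i + 1 = m
    · have i0 : i ≤ m := by omega
      refine ⟨![v (!s) m 0, v (!s) m 1, v (!s) m 0, v (!s) m 0, v (!s) i 0], ?_, ?_, ?_⟩
      · intro l
        fin_cases l
        · exact out _ _ _ le_rfl (Or.inl (by simp))
        · exact out _ _ _ le_rfl (Or.inl (by simp))
        · exact out _ _ _ le_rfl (Or.inl (by simp))
        · exact out _ _ _ le_rfl (Or.inl (by simp))
        · exact out _ _ _ i0 (Or.inl (by simp))
      · intro l
        fin_cases l
        · exact hC.status_other h hi hk _ _ le_rfl
        · exact hC.status_other h hi hk _ _ le_rfl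
        · exact hC.status_other h hi hk _ _ le_rfl
        · exact hC.status_other h hi hk _ _ le_rfl
        · exact hC.status_other h hi hk _ _ i0
      · rintro l (rfl | rfl | rfl)
        · show G.Adj (v (!s) m 0) (v s (i+1) 0)
          rw [hm]; exact (hC.ga s).symm
        · show G.Adj (v (!s) m 1) (v s (i+1) 1)
          rw [hm]; exact (hC.gb s).symm
        · exact (hC.gc s i hm).symm
    · have ho : ∀ j r, i + 2 ≤ j → j ≤ m → ∀ l, v s j r ≠ (quint v s i ∘ σ) l := by
        intro j r h1 h2
        exact out _ _ _ h2 (Or.inr ⟨by omega, Or.inl (by omega)⟩)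
      refine ⟨fun _ => v s (i+2) 3, fun _ => ho _ _ le_rfl (by omega), ?_, ?_⟩
      · intro _
        have s1 := hC.status h hk s (i+2) ho (m - (i+2)) (i+2) 3 (by omega) le_rfl
        have s2 := hk.status h (hC.ga s) (ho m 0 (by omega) le_rfl) (out _ _ _ le_rfl (Or.inl (by simp)))
        exact s1.trans s2
      · rintro l (rfl | rfl | rfl)
        · exact (hC.up s (i+1) 3 (by omega)).symm
        · exact (hC.bx s (i+1) 3 (by omega) (Or.inr rfl)).symm
        · exact (hC.ay s i (by omega)).symm
  -- inner neighbour
  have hR : ∀ n, v s i 1 ≠ (quint v s i ∘ σ) n :=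
    out s i 1 (by omega) (Or.inr ⟨by omega, Or.inr (by decide)⟩)
  have hRa : ∀ l : Fin 5, (l = 2 ∨ l = 3 ∨ l = 4) → G.Adj (v s i 1) (quint v s i l) := by
    rintro l (rfl | rfl | rfl)
    · exact hC.bx s i 2 hi (Or.inl rfl)
    · exact hC.bx s i 3 hi (Or.inr rfl)
    · exact hC.k4 s i 1 0 (by omega) (by decide)
  have dR1 : ¬ ((σ 0 = 2 ∨ σ 0 = 3 ∨ σ 0 = 4) ∧ (σ 1 = 2 ∨ σ 1 = 3 ∨ σ 1 = 4)) := fun hh =>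
    hk.diag h (SameStatus.refl (v s i 1)) hR hR (hRa _ hh.1) (hRa _ hh.2)
  have dR2 : ¬ ((σ 2 = 2 ∨ σ 2 = 3 ∨ σ 2 = 4) ∧ (σ 3 = 2 ∨ σ 3 = 3 ∨ σ 3 = 4)) := fun hh =>
    hk.flip.diag h (SameStatus.refl (v s i 1)) (fun _ => hR _) (fun _ => hR _) (hRa _ hh.1) (hRa _ hh.2)
  have ss : ∀ l l', SameStatus ρ (quint v s i ∘ σ) (S l) (S l') := fun l l' => (hSs l).trans (hSs l').symm
  have dS1 : ¬ ((σ 0 = 0 ∨ σ 0 = 1 ∨ σ 0 = 4) ∧ (σ 1 = 0 ∨ σ 1 = 1 ∨ σ 1 = 4)) := fun hh =>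
    hk.diag h (ss (σ 0) (σ 1)) (hSo _) (hSo _) (hSa _ hh.1) (hSa _ hh.2)
  have dS2 : ¬ ((σ 2 = 0 ∨ σ 2 = 1 ∨ σ 2 = 4) ∧ (σ 3 = 0 ∨ σ 3 = 1 ∨ σ 3 = 4)) := fun hh =>
    hk.flip.diag h ((ss (σ 2) (σ 3)).perm _) (fun _ => hSo _ _) (fun _ => hSo _ _) (hSa _ hh.1) (hSa _ hh.2)
  have N := fun (i j : Fin 5) (hij : i ≠ j) => hk.k5.ne hij
  have b1 : ¬ (σ 1 = 0 ∨ σ 1 = 1 ∨ σ 1 = 4) := by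
    intro hh
    apply hz
    rw [← hSs (σ 1) 0 2 4 (by decide) (by decide) (by decide),
      hk.prop h (hSa _ hh) (hSo _) (by decide) (by decide) (by decide) (N 1 _ (by decide)) (N 1 _ (by decide)) (N 1 _ (by decide))]
    exact hk.in1
  have b3 : ¬ (σ 3 = 0 ∨ σ 3 = 1 ∨ σ 3 = 4) := by
    intro hh
    apply hz
    rw [← hSs (σ 3) 0 2 4 (by decide) (by decide) (by decide),
      hk.prop h (hSa _ hh) (hSo _) (by decide) (by decide) (by decide) (N 3 _ (by decide)) (N 3 _ (by decide)) (N 3 _ (by decide))]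
    exact hk.in2
  have five : ∀ z : Fin 5, ¬ (z = 0 ∨ z = 1 ∨ z = 4) → z = 2 ∨ z = 3 ∨ z = 4 := by decide
  have D := fun (i j : Fin 5) (hij : i ≠ j) => σ.injective.ne hij
  obtain ⟨e4, e02, e13⟩ := perm5_aux (σ 1) (σ 3) (σ 0) (σ 2) (σ 4) ⟨five _ b1, five _ b3, D _ _ (by decide), dR1, dR2, dS1, dS2,
    D _ _ (by decide), D _ _ (by decide), D _ _ (by decide), D _ _ (by decide), D _ _ (by decide), D _ _ (by decide), D _ _ (by decide), D _ _ (by decide), D _ _ (by decide)⟩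
  have fin : ∀ (q q' : Fin 5 → V), q 0 = q' 0 → q 1 = q' 1 → q 2 = q' 2 → q 3 = q' 3 → q 4 = q' 4 → IsKite G ρ q → IsKite G ρ q' := by
    intro q q' h0 h1 h2 h3 h4 hq
    have : q = q' := by funext l; fin_cases l <;> assumption
    rwa [← this]
  have E : ∀ l a, σ l = a → (quint v s i ∘ σ) l = quint v s i a := fun l a e => by simp [e]
  rcases e02 with ⟨c0, c2⟩ | ⟨c0, c2⟩ <;> rcases e13 with ⟨c1, c3⟩ | ⟨c1, c3⟩
  · exact ⟨2, 3, Or.inl ⟨rfl, rfl⟩, fin _ _ (E _ _ c0) (E _ _ c1) (E _ _ c2) (E _ _ c3) (E _ _ e4) hk⟩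
  · exact ⟨3, 2, Or.inr ⟨rfl, rfl⟩, fin _ _ (E _ _ c0) (E _ _ c1) (E _ _ c2) (E _ _ c3) (E _ _ e4) hk⟩
  · exact ⟨3, 2, Or.inr ⟨rfl, rfl⟩, fin (_ ∘ ((Equiv.swap 0 2).trans (Equiv.swap 1 3) : Equiv.Perm (Fin 5))) _ (E 2 _ c2) (E 3 _ c3) (E 0 _ c0) (E 1 _ c1) (E 4 _ e4) hk.flip⟩
  · exact ⟨2, 3, Or.inl ⟨rfl, rfl⟩, fin (_ ∘ ((Equiv.swap 0 2).trans (Equiv.swap 1 3) : Equiv.Perm (Fin 5))) _ (E 2 _ c2) (E 3 _ c3) (E 0 _ c0) (E 1 _ c1) (E 4 _ e4) hk.flip⟩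

end Chain

section Chain2
variable {V : Type} {G : SimpleGraph V} {ρ : V → ℝ × ℝ} {m : ℕ} {v : Bool → ℕ → Fin 4 → V}

theorem Chains.inner (hC : Chains G m v) (h : IsICPlanarDrawing G ρ) {s : Bool} {i : ℕ} (hi : i + 1 ≤ m)
    {r r' : Fin 4} (hr : (r = 2 ∧ r' = 3) ∨ (r = 3 ∧ r' = 2))
    (hk : IsKite G ρ ![v s (i+1) 0, v s (i+1) r, v s (i+1) 1, v s (i+1) r', v s i 0]) :
    InT (ρ (v s (i+1) r)) (ρ (v s (i+1) r')) (ρ (v s i 0)) (ρ (v s i 1)) := by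
  have h1 : r = 2 ∨ r = 3 := by tauto
  have h2 : r' = 2 ∨ r' = 3 := by tauto
  refine hk.inner h ?_ (hC.bx s i r hi h1) (hC.bx s i r' hi h2) (hC.k4 s i 1 0 (by omega) (by decide))
  have key : ∀ i' r', i' ≤ m → v s i 1 = v s i' r' → i = i' ∧ 1 = r' := fun i' r' h' e' => (hC.inj _ _ _ _ _ _ (by omega) h' e').2
  intro l e
  fin_cases l
  · have := key (i+1) _ hi e; omega
  · have := key (i+1) _ hi e; omega
  · have := key (i+1) _ hi e; omega
  · have := key (i+1) _ hi e; omega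
  · have := (key i _ (by omega) e).2; exact absurd this (by decide)

theorem Chains.inner2 (hC : Chains G m v) (h : IsICPlanarDrawing G ρ) {s : Bool} {i : ℕ} (hi : i + 2 ≤ m)
    {r r' : Fin 4} (hr : (r = 2 ∧ r' = 3) ∨ (r = 3 ∧ r' = 2))
    (hk : IsKite G ρ ![v s (i+2) 0, v s (i+2) r, v s (i+2) 1, v s (i+2) r', v s (i+1) 0]) :
    InT (ρ (v s (i+2) r)) (ρ (v s (i+2) r')) (ρ (v s (i+1) 0)) (ρ (v s i 0)) := by
  have h1 := hC.inner h (i := i+1) hi hr hk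
  have n : ∀ i' r' i'' r'', i' ≤ m → i'' ≤ m → (i' ≠ i'' ∨ r' ≠ r'') → v s i' r' ≠ v s i'' r'' := by
    intro i' r' i'' r'' a b c e
    have := hC.inj _ _ _ _ _ _ a b e
    tauto
  refine (hk.prop h (u := v s (i+1) 1) (w := v s i 0) (i := 1) (j := 3) (k := 4) (hC.up s i 1 (by omega)).symm ?_ (by decide) (by decide) (by decide)
    (n _ _ (i+2) _ (by omega) hi (Or.inl (by omega))) (n _ _ (i+2) _ (by omega) hi (Or.inl (by omega)))
    (n _ _ (i+1) _ (by omega) (by omega) (Or.inl (by omega)))).1 h1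
  intro l
  fin_cases l
  · exact n _ _ (i+2) _ (by omega) hi (Or.inl (by omega))
  · exact n _ _ (i+2) _ (by omega) hi (Or.inl (by omega))
  · exact n _ _ (i+2) _ (by omega) hi (Or.inl (by omega))
  · exact n _ _ (i+2) _ (by omega) hi (Or.inl (by omega))
  · exact n _ _ (i+1) _ (by omega) (by omega) (Or.inr (by decide))

theorem Chains.base (hC : Chains G m v) (h : IsICPlanarDrawing G ρ) {s : Bool}
    {r r' : Fin 4} (hr : (r = 2 ∧ r' = 3) ∨ (r = 3 ∧ r' = 2))
    (hk : IsKite G ρ ![v s 1 0, v s 1 r, v s 1 1, v s 1 r', v s 0 0]) :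
    InT (ρ (v s 0 1)) (ρ (v s 0 0)) (ρ (v s 1 r)) (ρ (v s 0 r)) ∧
    InT (ρ (v s 0 1)) (ρ (v s 1 r')) (ρ (v s 0 0)) (ρ (v s 0 r')) ∧
    Crosses ρ s(v s 0 0, v s 0 1) s(v s 0 r, v s 0 r') := by
  have hm := hC.one_le
  have hb := hC.inner h hm hr hk
  have n : ∀ i' r' i'' r'', i' ≤ 1 → i'' ≤ 1 → (i' ≠ i'' ∨ r' ≠ r'') → v s i' r' ≠ v s i'' r'' := by
    intro i' r' i'' r'' a b c e
    have := hC.inj _ _ _ _ _ _ (by omega) (by omega) e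
    tauto
  have r0 : r ≠ 0 ∧ r ≠ 1 := by rcases hr with ⟨rfl, rfl⟩ | ⟨rfl, rfl⟩ <;> decide
  have r0' : r' ≠ 0 ∧ r' ≠ 1 := by rcases hr with ⟨rfl, rfl⟩ | ⟨rfl, rfl⟩ <;> decide
  have rr : r ≠ r' := by rcases hr with ⟨rfl, rfl⟩ | ⟨rfl, rfl⟩ <;> decide
  have ax : G.Adj (v s 0 r) (v s 1 r) := by
    rcases hr with ⟨rfl, rfl⟩ | ⟨rfl, rfl⟩
    · exact hC.sx s
    · exact hC.sy s
  have ay : G.Adj (v s 0 r') (v s 1 r') := by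
    rcases hr with ⟨rfl, rfl⟩ | ⟨rfl, rfl⟩
    · exact hC.sy s
    · exact hC.sx s
  have bX : G.Adj (v s 0 1) (v s 1 r) := hC.bx s 0 r hm (by tauto)
  have bY : G.Adj (v s 0 1) (v s 1 r') := hC.bx s 0 r' hm (by tauto)
  have out : ∀ t : Fin 4, t ≠ 0 → ∀ l, v s 0 t ≠ (![v s 1 0, v s 1 r, v s 1 1, v s 1 r', v s 0 0] : Fin 5 → V) l := by
    intro t ht l
    fin_cases l
    · exact n 0 t 1 _ (by omega) (by omega) (Or.inl (by omega))
    · exact n 0 t 1 _ (by omega) (by omega) (Or.inl (by omega))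
    · exact n 0 t 1 _ (by omega) (by omega) (Or.inl (by omega))
    · exact n 0 t 1 _ (by omega) (by omega) (Or.inl (by omega))
    · exact n 0 t 0 0 (by omega) (by omega) (Or.inr ht)
  -- edges between an inner vertex and `X` or `Y` are not crossed
  have U : ∀ t : Fin 4, t ≠ 0 → ∀ w : Fin 4, (w = r ∨ w = r') → G.Adj (v s 0 t) (v s 1 w) →
      ∀ p q, G.Adj p q → ¬ Crosses ρ s(v s 1 w, v s 0 t) s(p, q) := by
    intro t ht w hw hadj p q hpq hx
    have := no_other_cross h (hk.k5 0 1 (by decide)) (hk.k5 2 3 (by decide)) hk.cr hadj.symm hpq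
      (by rcases hw with rfl | rfl
          · right; left; rfl
          · right; right; right; rfl) hx
    have o := out t ht
    rcases this with ⟨e, _⟩ | ⟨e, _⟩
    · rw [Sym2.eq_iff] at e
      rcases e with e | e
      · exact o 1 e.2
      · exact o 0 e.2
    · rw [Sym2.eq_iff] at e
      rcases e with e | e
      · exact o 3 e.2
      · exact o 2 e.2
  have U1 : ∀ t : Fin 4, t ≠ 0 → ∀ w : Fin 4, (w = r ∨ w = r') → G.Adj (v s 0 t) (v s 1 w) →
      ∀ p q, G.Adj p q → ¬ Crosses ρ s(p, q) s(v s 1 w, v s 0 t) :=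
    fun t ht w hw ha p q hpq hx => U t ht w hw ha p q hpq (crosses_symm hx)
  have U2 : ∀ t : Fin 4, t ≠ 0 → ∀ w : Fin 4, (w = r ∨ w = r') → G.Adj (v s 0 t) (v s 1 w) →
      ∀ p q, G.Adj p q → ¬ Crosses ρ s(p, q) s(v s 0 t, v s 1 w) := by
    intro t ht w hw ha p q hpq hx
    rw [Sym2.eq_swap (a := v s 0 t)] at hx
    exact U1 t ht w hw ha p q hpq hx
  have U3 : ∀ t : Fin 4, t ≠ 0 → ∀ w : Fin 4, (w = r ∨ w = r') → G.Adj (v s 0 t) (v s 1 w) →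
      ∀ p q, G.Adj p q → ¬ Crosses ρ s(v s 0 t, v s 1 w) s(p, q) :=
    fun t ht w hw ha p q hpq hx => U2 t ht w hw ha p q hpq (crosses_symm hx)
  have N1 := r0.1
  have N2 := r0'.1
  have cX : G.Adj (v s 0 0) (v s 1 r) := hC.up s 0 r hm
  have cY : G.Adj (v s 0 0) (v s 1 r') := hC.up s 0 r' hm
  have XY : G.Adj (v s 1 r) (v s 1 r') := hC.k4 s 1 r r' hm rr
  have K := fun a b (hab : a ≠ b) => hC.k4 s 0 a b (by omega) hab
  have ne01 := fun a b => n 0 a 1 b (by omega) (by omega) (Or.inl (by omega))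
  have ne10 := fun a b => n 1 a 0 b (by omega) (by omega) (Or.inl (by omega))
  have ne0 := fun a b hab => n 0 a 0 b (by omega) (by omega) (Or.inr hab)
  have ne1 := fun a b hab => n 1 a 1 b (by omega) (by omega) (Or.inr hab)
  have inn : ∀ t, t ≠ 0 → t ≠ 1 → InT (ρ (v s 1 r)) (ρ (v s 1 r')) (ρ (v s 0 0)) (ρ (v s 0 t)) := by
    intro t ht ht'
    exact (hk.prop h (u := v s 0 1) (w := v s 0 t) (i := 1) (j := 3) (k := 4) (K _ _ ht'.symm) (out 1 (by decide))
      (by decide) (by decide) (by decide) (ne01 _ _) (ne01 _ _) (ne0 _ _ ht)).1 hb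
  -- locate `x_0`
  have p1 : InT (ρ (v s 0 1)) (ρ (v s 0 0)) (ρ (v s 1 r)) (ρ (v s 0 r)) := by
    rcases hb.partition (inn r r0.1 r0.2) (h.1.inj.ne (ne0 _ _ r0.2))
      (adj_not_mem h.1 bX (ne0 _ _ r0.2) (ne01 _ _)) (adj_not_mem h.1 bY (ne0 _ _ r0.2) (ne01 _ _))
      (adj_not_mem h.1 (K 1 0 (by decide)) (ne0 _ _ r0.2) (ne0 _ _ N1)) with k | k | k
    · exfalso
      have := propagate (q := v s 0 0) h.1 bX XY bY.symm (K r 0 N1) (ne0 _ _ (by decide)) (ne01 _ _) (ne01 _ _)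
        (U2 1 (by decide) r (Or.inl rfl) bX _ _ (K r 0 N1))
        (hk.no_cross h (K r 0 N1) (out r N1) (a := 1) (b := 3) (by decide))
        (U1 1 (by decide) r' (Or.inr rfl) bY _ _ (K r 0 N1)) k
      exact hb.rot.rot.excl this
    · exfalso
      have := propagate (q := v s 1 r) h.1 bY cY.symm (K 0 1 (by decide)) ax (ne10 _ _) (ne1 _ _ rr) (ne10 _ _)
        (U3 r N1 r (Or.inl rfl) ax _ _ bY) (U3 r N1 r (Or.inl rfl) ax _ _ cY.symm)
        (U3 r N1 r (Or.inl rfl) ax _ _ (K 0 1 (by decide))) k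
      exact hb.excl this
    · exact k
  have p2 : InT (ρ (v s 0 1)) (ρ (v s 1 r')) (ρ (v s 0 0)) (ρ (v s 0 r')) := by
    rcases hb.partition (inn r' r0'.1 r0'.2) (h.1.inj.ne (ne0 _ _ r0'.2))
      (adj_not_mem h.1 bX (ne0 _ _ r0'.2) (ne01 _ _)) (adj_not_mem h.1 bY (ne0 _ _ r0'.2) (ne01 _ _))
      (adj_not_mem h.1 (K 1 0 (by decide)) (ne0 _ _ r0'.2) (ne0 _ _ N2)) with k | k | k
    · exfalso
      have := propagate (q := v s 0 0) h.1 bX XY bY.symm (K r' 0 N2) (ne0 _ _ (by decide)) (ne01 _ _) (ne01 _ _)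
        (U2 1 (by decide) r (Or.inl rfl) bX _ _ (K r' 0 N2))
        (hk.no_cross h (K r' 0 N2) (out r' N2) (a := 1) (b := 3) (by decide))
        (U1 1 (by decide) r' (Or.inr rfl) bY _ _ (K r' 0 N2)) k
      exact hb.rot.rot.excl this
    · exact k
    · exfalso
      have := propagate (q := v s 1 r') h.1 (K 1 0 (by decide)) cX bX.symm ay (ne10 _ _) (ne10 _ _) (ne1 _ _ rr.symm)
        (U3 r' N2 r' (Or.inr rfl) ay _ _ (K 1 0 (by decide))) (U3 r' N2 r' (Or.inr rfl) ay _ _ cX)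
        (U3 r' N2 r' (Or.inr rfl) ay _ _ bX.symm) k
      exact hb.rot.excl this
  refine ⟨p1, p2, ?_⟩
  by_contra hx
  have := propagate (q := v s 0 r') h.1 (K 1 0 (by decide)) cX bX.symm (K r r' rr) (ne0 _ _ r0'.2) (ne0 _ _ N2) (ne01 _ _)
    (fun hh => hx (by rw [Sym2.eq_swap (a := v s 0 0)]; exact crosses_symm hh))
    (hk.no_cross h (K r r' rr) (out r N1) (a := 4) (b := 1) (by decide))
    (U1 1 (by decide) r (Or.inl rfl) bX _ _ (K r r' rr)) p1
  have a1 := this.same_side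
  have a2 := p2.rot.rot.swap.same_side
  have a3 : orient (ρ (v s 0 0)) (ρ (v s 0 1)) (ρ (v s 1 r)) * orient (ρ (v s 0 0)) (ρ (v s 0 1)) (ρ (v s 1 r')) < 0 :=
    hb.rot.rot.sep
  rw [orient_swap (ρ (v s 0 1)), orient_swap (ρ (v s 0 1)) (ρ (v s 0 0)) (ρ (v s 1 r'))] at a3
  generalize orient (ρ (v s 0 1)) (ρ (v s 0 0)) (ρ (v s 1 r)) = e1 at *
  generalize orient (ρ (v s 0 1)) (ρ (v s 0 0)) (ρ (v s 1 r')) = e2 at *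
  generalize orient (ρ (v s 0 1)) (ρ (v s 0 0)) (ρ (v s 0 r')) = e3 at *
  nlinarith [mul_pos a1 a2, mul_self_nonneg e3, mul_nonneg (mul_self_nonneg e3) (neg_nonneg.2 a3.le)]

end Chain2

/-- coordinates of `P` relative to `c` in the orthonormal frame given by `e1, e2, δ` -/
def fX (e1 e2 : ℝ) (c P : ℝ × ℝ) : ℝ := e1*(P.1-c.1)+e2*(P.2-c.2)

/-- second coordinate in the frame -/
def fY (e1 e2 δ : ℝ) (c P : ℝ × ℝ) : ℝ := δ*(e1*(P.2-c.2)-e2*(P.1-c.1))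

theorem frame_orient {e1 e2 δ : ℝ} (he : e1^2+e2^2 = 1) (hd : δ^2 = 1) (c P Q R : ℝ × ℝ) :
    orient P Q R = δ*((fX e1 e2 c Q-fX e1 e2 c P)*(fY e1 e2 δ c R-fY e1 e2 δ c P)
      - (fY e1 e2 δ c Q-fY e1 e2 δ c P)*(fX e1 e2 c R-fX e1 e2 c P)) := by
  have : δ*((fX e1 e2 c Q-fX e1 e2 c P)*(fY e1 e2 δ c R-fY e1 e2 δ c P)
      - (fY e1 e2 δ c Q-fY e1 e2 δ c P)*(fX e1 e2 c R-fX e1 e2 c P)) = δ^2*(e1^2+e2^2)*orient P Q R := by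
    simp only [fX, fY, orient]; ring
  rw [this, he, hd]; ring

/-- dot product of `P - R` and `Q - R` -/
def dotp (R P Q : ℝ × ℝ) : ℝ := (P.1-R.1)*(Q.1-R.1)+(P.2-R.2)*(Q.2-R.2)

theorem frame_dot {e1 e2 δ : ℝ} (he : e1^2+e2^2 = 1) (hd : δ^2 = 1) (c R P Q : ℝ × ℝ) :
    dotp R P Q = (fX e1 e2 c P-fX e1 e2 c R)*(fX e1 e2 c Q-fX e1 e2 c R)
      + (fY e1 e2 δ c P-fY e1 e2 δ c R)*(fY e1 e2 δ c Q-fY e1 e2 δ c R) := by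
  have : (fX e1 e2 c P-fX e1 e2 c R)*(fX e1 e2 c Q-fX e1 e2 c R)
      + (fY e1 e2 δ c P-fY e1 e2 δ c R)*(fY e1 e2 δ c Q-fY e1 e2 δ c R) =
      e1^2*((P.1-R.1)*(Q.1-R.1)) + e2^2*((P.2-R.2)*(Q.2-R.2)) + e1*e2*((P.1-R.1)*(Q.2-R.2)+(P.2-R.2)*(Q.1-R.1))
      + δ^2*(e1^2*((P.2-R.2)*(Q.2-R.2)) + e2^2*((P.1-R.1)*(Q.1-R.1)) - e1*e2*((P.1-R.1)*(Q.2-R.2)+(P.2-R.2)*(Q.1-R.1))) := by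
    simp only [fX, fY]; ring
  rw [this, hd]
  have : (1:ℝ) = e1^2+e2^2 := he.symm
  simp only [dotp]
  linear_combination (-(P.1-R.1)*(Q.1-R.1) - (P.2-R.2)*(Q.2-R.2))*he

/-- a geometric kite -/
structure GKite (A X B Y c : ℝ × ℝ) : Prop where
  cr : (openSegment ℝ A X ∩ openSegment ℝ B Y).Nonempty
  perp : (X.1-A.1)*(Y.1-B.1)+(X.2-A.2)*(Y.2-B.2) = 0
  in3 : InT A X c Y
  in4 : InT B Y c X

theorem GKite.frame {A X B Y c : ℝ × ℝ} (h : GKite A X B Y c) :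
    ∃ e1 e2 δ r s u v A1 B2 : ℝ, e1^2+e2^2 = 1 ∧ δ^2 = 1 ∧
      fX e1 e2 c X = r ∧ fY e1 e2 δ c X = v ∧ fX e1 e2 c Y = u ∧ fY e1 e2 δ c Y = s ∧
      fX e1 e2 c A = A1 ∧ fY e1 e2 δ c A = v ∧ fX e1 e2 c B = u ∧ fY e1 e2 δ c B = B2 ∧
      0 < r ∧ 0 < s ∧ r < u ∧ s < v ∧ u < A1 ∧ v < B2 ∧ u*v < A1*s ∧ u*v < B2*r := by
  obtain ⟨hcr, hperp, h3, h4⟩ := h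
  have o1 : orient A X Y ≠ 0 := by rcases h3 with h | h; exacts [h.1.ne', h.1.ne]
  have o2 : orient B Y X ≠ 0 := by rcases h4 with h | h; exacts [h.1.ne', h.1.ne]
  have c1 : orient A X Y * orient A X B < 0 := orient_of_cross (by rw [openSegment_symm ℝ Y B]; exact hcr) o1
  have c2 : orient B Y X * orient B Y A < 0 := orient_of_cross (by rw [openSegment_symm ℝ X A, Set.inter_comm]; exact hcr) o2
  have hAX : 0 < (A.1-X.1)^2+(A.2-X.2)^2 := by
    by_contra hn
    have q1 : A.1-X.1 = 0 := by nlinarith [sq_nonneg (A.1-X.1), sq_nonneg (A.2-X.2)]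
    have q2 : A.2-X.2 = 0 := by nlinarith [sq_nonneg (A.1-X.1), sq_nonneg (A.2-X.2)]
    apply o1
    have q1' : X.1-A.1 = 0 := by linarith
    have q2' : X.2-A.2 = 0 := by linarith
    simp only [orient]; rw [q1', q2']; ring
  obtain ⟨L, hL0, hL⟩ : ∃ L : ℝ, 0 < L ∧ L^2 = (A.1-X.1)^2+(A.2-X.2)^2 :=
    ⟨√((A.1-X.1)^2+(A.2-X.2)^2), Real.sqrt_pos.2 hAX, Real.sq_sqrt hAX.le⟩
  obtain ⟨e1, he1⟩ : ∃ e1, e1*L = A.1-X.1 := ⟨(A.1-X.1)/L, by field_simp⟩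
  obtain ⟨e2, he2⟩ : ∃ e2, e2*L = A.2-X.2 := ⟨(A.2-X.2)/L, by field_simp⟩
  have he : e1^2+e2^2 = 1 := by
    rw [← he1, ← he2] at hL
    have : L^2*(e1^2+e2^2-1) = 0 := by linarith
    have := (mul_eq_zero.1 this).resolve_left (by positivity)
    linarith
  obtain ⟨δ, hd, hδ⟩ : ∃ δ : ℝ, δ^2 = 1 ∧ 0 ≤ δ*(e1*(B.2-Y.2)-e2*(B.1-Y.1)) := by
    rcases le_total 0 (e1*(B.2-Y.2)-e2*(B.1-Y.1)) with h | h
    · exact ⟨1, by norm_num, by linarith⟩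
    · exact ⟨-1, by norm_num, by linarith⟩
  have xyA : fY e1 e2 δ c A = fY e1 e2 δ c X := by
    have : e1*(A.2-X.2)-e2*(A.1-X.1) = 0 := by rw [← he1, ← he2]; ring
    simp only [fY]; linear_combination δ*this
  have xB : fX e1 e2 c B = fX e1 e2 c Y := by
    have : L*(e1*(B.1-Y.1)+e2*(B.2-Y.2)) = 0 := by
      linear_combination (B.1-Y.1)*he1+(B.2-Y.2)*he2+hperp
    have := (mul_eq_zero.1 this).resolve_left hL0.ne'
    simp only [fX]; linear_combination this
  have xA : fX e1 e2 c X < fX e1 e2 c A := by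
    have : fX e1 e2 c A - fX e1 e2 c X = L*(e1^2+e2^2) := by
      simp only [fX]; linear_combination -e1*he1-e2*he2
    rw [he] at this; linarith
  have yB : fY e1 e2 δ c Y ≤ fY e1 e2 δ c B := by
    have : fY e1 e2 δ c B - fY e1 e2 δ c Y = δ*(e1*(B.2-Y.2)-e2*(B.1-Y.1)) := by
      simp only [fY]; ring
    linarith
  have cX : fX e1 e2 c c = 0 := by simp [fX]
  have cY : fY e1 e2 δ c c = 0 := by simp [fY]
  have fo := frame_orient he hd c
  have hdd : δ*δ = 1 := by rw [← sq]; exact hd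
  have k3 : (orient A X Y * orient A X B) = (fX e1 e2 c X-fX e1 e2 c A)^2*((fY e1 e2 δ c Y-fY e1 e2 δ c X)*(fY e1 e2 δ c B-fY e1 e2 δ c X)) := by
    rw [fo A X Y, fo A X B, xyA]
    linear_combination (fX e1 e2 c X-fX e1 e2 c A)^2*((fY e1 e2 δ c Y-fY e1 e2 δ c X)*(fY e1 e2 δ c B-fY e1 e2 δ c X))*hd
  have k4 : (orient B Y X * orient B Y A) = (fY e1 e2 δ c Y-fY e1 e2 δ c B)^2*((fX e1 e2 c X-fX e1 e2 c Y)*(fX e1 e2 c A-fX e1 e2 c Y)) := by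
    rw [fo B Y X, fo B Y A, xB]
    linear_combination (fY e1 e2 δ c Y-fY e1 e2 δ c B)^2*((fX e1 e2 c X-fX e1 e2 c Y)*(fX e1 e2 c A-fX e1 e2 c Y))*hd
  rw [k3] at c1
  rw [k4] at c2
  have d1 := neg_of_mul_neg_right c1 (sq_nonneg _)
  have d2 := neg_of_mul_neg_right c2 (sq_nonneg _)
  simp only [InT] at h3 h4
  rw [fo A X Y, fo X c Y, fo c A Y, xyA, cX, cY] at h3
  rw [fo B Y X, fo Y c X, fo c B X, xB, cX, cY] at h4
  refine ⟨e1, e2, δ, _, _, _, _, _, _, he, hd, rfl, rfl, rfl, rfl, rfl, xyA, xB, rfl, ?_⟩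
  generalize fX e1 e2 c X = r at *
  generalize fY e1 e2 δ c X = v at *
  generalize fX e1 e2 c Y = u at *
  generalize fY e1 e2 δ c Y = s at *
  generalize fX e1 e2 c A = A1 at *
  generalize fY e1 e2 δ c B = B2 at *
  clear fo k3 k4 c1 c2
  have sv : s < v := by nlinarith
  have vB : v < B2 := by nlinarith
  have ru : r < u := by nlinarith
  have uA : u < A1 := by nlinarith
  have dd : δ = 1 ∨ δ = -1 := by
    have : (δ-1)*(δ+1) = 0 := by linarith
    rcases mul_eq_zero.1 this with h | h
    · left; linarith
    · right; linarith
  have P1 : 0 < (A1-r)*(v-s) := mul_pos (by linarith) (by linarith)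
  have P2 : 0 < (B2-s)*(u-r) := mul_pos (by linarith) (by linarith)
  have g3 : 0 < u*v-r*s ∧ 0 < A1*s-u*v := by
    rcases dd with rfl | rfl <;> rcases h3 with h | h <;> constructor <;> linarith [h.1, h.2.1, h.2.2]
  have g4 : 0 < u*v-r*s ∧ 0 < B2*r-u*v := by
    rcases dd with rfl | rfl <;> rcases h4 with h | h <;> constructor <;> linarith [h.1, h.2.1, h.2.2]
  have s0 : 0 < s := by
    have : 0 < (A1-r)*s := by linarith [g3.1, g3.2]
    exact pos_of_mul_pos_right this (by linarith)
  have r0 : 0 < r := by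
    have : 0 < (B2-s)*r := by linarith [g4.1, g4.2]
    exact pos_of_mul_pos_right this (by linarith)
  refine ⟨r0, s0, ru, sv, uA, vB, by linarith, by linarith⟩

/-- the potential of the angle at `R` spanned by `P`, `Q` is at least `M` -/
def BigP (M : ℝ) (R P Q : ℝ × ℝ) : Prop :=
  0 < dotp R P Q ∧ 4*M*dotp R P Q ≤ |orient R P Q| * (dotp R P P + dotp R Q Q)

theorem BigP.swap {M : ℝ} {R P Q : ℝ × ℝ} (h : BigP M R P Q) : BigP M R Q P := by
  have e1 : dotp R Q P = dotp R P Q := by simp only [dotp]; ring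
  have e2 : orient R Q P = - orient R P Q := by simp only [orient]; ring
  unfold BigP at *
  rw [e1, e2, abs_neg, add_comm (dotp R Q Q)]
  exact h

theorem bigP_mono_pos {M : ℝ} {A X Y P Q : ℝ × ℝ} (hk : 0 < orient A X Y) (hP : InT X Y A P) (hQ : InT X Y A Q)
    (hd : 0 < dotp A X Y)
    (hB : 0 < dotp A P Q → 4*M*dotp A P Q ≤ |orient A P Q| * (dotp A P P + dotp A Q Q)) : BigP M A X Y := by
  have sgn : ∀ Z, InT X Y A Z → 0 < orient X Y Z ∧ 0 < orient Y A Z ∧ 0 < orient A X Z := by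
    intro Z hZ
    have := orient_sum X Y A Z
    rw [orient_rot A X Y] at this
    rcases hZ with h | h
    · exact h
    · linarith [h.1, h.2.1, h.2.2]
  have p := sgn P hP
  have q := sgn Q hQ
  have sp := orient_sum X Y A P
  have sq := orient_sum X Y A Q
  rw [orient_rot A X Y] at sp sq
  have rP : orient Y A P = (P.1-A.1)*(Y.2-A.2)-(P.2-A.2)*(Y.1-A.1) := by simp only [orient]; ring
  have rQ : orient Y A Q = (Q.1-A.1)*(Y.2-A.2)-(Q.2-A.2)*(Y.1-A.1) := by simp only [orient]; ring
  have := big_mono_pos M (X.1-A.1) (X.2-A.2) (Y.1-A.1) (Y.2-A.2) (P.1-A.1) (P.2-A.2) (Q.1-A.1) (Q.2-A.2)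
    hd hk p.2.2 (by rw [← rP]; exact p.2.1) (by rw [← rP]; simp only [orient] at *; linarith [p.1])
    q.2.2 (by rw [← rQ]; exact q.2.1) (by rw [← rQ]; simp only [orient] at *; linarith [q.1])
    (by
      intro h
      refine (hB h).trans (le_of_eq ?_)
      simp only [orient, dotp]; ring)
  refine ⟨this.1, this.2.trans (le_of_eq ?_)⟩
  simp only [orient, dotp]; ring

theorem bigP_mono {M : ℝ} {A X Y P Q : ℝ × ℝ} (hP : InT X Y A P) (hQ : InT X Y A Q)
    (hd : 0 < dotp A X Y)
    (hB : 0 < dotp A P Q → 4*M*dotp A P Q ≤ |orient A P Q| * (dotp A P P + dotp A Q Q)) : BigP M A X Y := by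
  rcases lt_trichotomy (orient A X Y) 0 with h | h | h
  · have e1 : dotp A Y X = dotp A X Y := by simp only [dotp]; ring
    have e2 : orient A Y X = - orient A X Y := by simp only [orient]; ring
    exact (bigP_mono_pos (by linarith) hP.swap hQ.swap (by rw [e1]; exact hd) hB).swap
  · exfalso
    have := orient_sum X Y A P
    rw [orient_rot A X Y, h] at this
    rcases hP with h | h <;> linarith [h.1, h.2.1, h.2.2]
  · exact bigP_mono_pos h hP hQ hd hB

theorem abs_delta {δ x : ℝ} (hd : δ^2 = 1) : |δ*x| = |x| := by
  rw [abs_mul]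
  have : |δ| = 1 := by
    rw [← sq_abs] at hd
    have h0 := abs_nonneg δ
    nlinarith
  rw [this, one_mul]

theorem GKite.dot_pos {A X B Y c : ℝ × ℝ} (h : GKite A X B Y c) : 0 < dotp c X Y := by
  obtain ⟨e1, e2, δ, r, s, u, v, A1, B2, he, hd, xX, yX, xY, yY, xA, yA, xB, yB, r0, s0, ru, sv, uA, vB, h1, h2⟩ := h.frame
  have cX : fX e1 e2 c c = 0 := by simp [fX]
  have cY : fY e1 e2 δ c c = 0 := by simp [fY]
  rw [frame_dot he hd c, xX, xY, yX, yY, cX, cY]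
  have : 0 < u := by linarith
  have : 0 < v := by linarith
  have : 0 < r*u+v*s := by positivity
  linarith

theorem GKite.step {M : ℝ} {A X B Y c : ℝ × ℝ} (h : GKite A X B Y c) (hB : BigP M c X Y)
    (hD : 0 < dotp A B c) :
    4*(2*M)*dotp A B c ≤ |orient A B c| * (dotp A B B + dotp A c c) := by
  obtain ⟨e1, e2, δ, r, s, u, v, A1, B2, he, hd, xX, yX, xY, yY, xA, yA, xB, yB, r0, s0, ru, sv, uA, vB, h1, h2⟩ := h.frame
  have cX : fX e1 e2 c c = 0 := by simp [fX]
  have cY : fY e1 e2 δ c c = 0 := by simp [fY]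
  obtain ⟨-, hB⟩ := hB
  rw [frame_dot he hd c, frame_dot he hd c c X X, frame_dot he hd c c Y Y, frame_orient he hd c, abs_delta hd,
    xX, xY, yX, yY, cX, cY] at hB
  rw [frame_dot he hd c, xA, yA, xB, yB, cX, cY] at hD
  rw [frame_dot he hd c, frame_dot he hd c A B B, frame_dot he hd c A c c, frame_orient he hd c, abs_delta hd,
    xA, yA, xB, yB, cX, cY]
  have u0 : 0 < u := by linarith
  have v0 : 0 < v := by linarith
  have k1 : r*s < u*v := by nlinarith
  have k2 : u*v < A1*B2 := by nlinarith
  have E1 : |(r - 0) * (s - 0) - (v - 0) * (u - 0)| = u*v-r*s := by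
    rw [abs_of_neg (by linarith)]; ring
  have E2 : |(u - A1) * (0 - v) - (B2 - v) * (0 - A1)| = A1*B2-u*v := by
    rw [abs_of_pos (by linarith)]; ring
  rw [E1] at hB
  rw [E2]
  have st := step_ineq r s u v A1 B2 r0 s0 ru sv uA vB h1.le h2.le (by linarith)
  have D0 : 0 < A1*(A1-u)-v*(B2-v) := by linarith
  have P0 : 0 < r*u+s*v := by positivity
  have e1 : (u - A1) * (0 - A1) + (B2 - v) * (0 - v) = A1*(A1-u)-v*(B2-v) := by ring
  rw [e1]
  have key : 4*(2*M)*(A1*(A1-u)-v*(B2-v))*(r*u+s*v) ≤ ((A1*B2-u*v)*(2*(A1*(A1-u)-v*(B2-v))+u^2+B2^2))*(r*u+s*v) := by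
    refine le_trans ?_ st
    have := mul_le_mul_of_nonneg_right hB D0.le
    linarith
  have := le_of_mul_le_mul_right key P0
  refine this.trans (le_of_eq ?_)
  ring

theorem GKite.final {M : ℝ} {A X B Y c : ℝ × ℝ} (h : GKite A X B Y c) (hB : BigP M c X Y) :
    2*M ≤ |orient A B c| := by
  obtain ⟨e1, e2, δ, r, s, u, v, A1, B2, he, hd, xX, yX, xY, yY, xA, yA, xB, yB, r0, s0, ru, sv, uA, vB, h1, h2⟩ := h.frame
  have cX : fX e1 e2 c c = 0 := by simp [fX]
  have cY : fY e1 e2 δ c c = 0 := by simp [fY]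
  obtain ⟨-, hB⟩ := hB
  rw [frame_dot he hd c, frame_dot he hd c c X X, frame_dot he hd c c Y Y, frame_orient he hd c, abs_delta hd,
    xX, xY, yX, yY, cX, cY] at hB
  rw [frame_orient he hd c, abs_delta hd,
    xA, yA, xB, yB, cX, cY]
  have u0 : 0 < u := by linarith
  have v0 : 0 < v := by linarith
  have k1 : r*s < u*v := by nlinarith
  have k2 : u*v < A1*B2 := by nlinarith
  have E1 : |(r - 0) * (s - 0) - (v - 0) * (u - 0)| = u*v-r*s := by
    rw [abs_of_neg (by linarith)]; ring
  have E2 : |(u - A1) * (0 - v) - (B2 - v) * (0 - A1)| = A1*B2-u*v := by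
    rw [abs_of_pos (by linarith)]; ring
  rw [E1] at hB
  rw [E2]
  have P0 : 0 < r*u+s*v := by positivity
  have R0 : 0 < r*s := by positivity
  -- `rs (A1 B2 - uv) ≥ uv (uv - rs)`
  have m1 : u*v*(u*v-r*s) ≤ (A1*B2-u*v)*(r*s) := by
    have : (u*v)*(u*v) ≤ (A1*s)*(B2*r) :=
      mul_le_mul h1.le h2.le (by positivity) (le_trans (by positivity) h1.le)
    linarith
  have m2 : r*s*(r^2+u^2+v^2+s^2) ≤ 2*(u*v)*(r*u+s*v) := by
    have a1 : r*s*r^2 ≤ u*v*(r*u) := by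
      have : r*s*r^2 = (r*r)*(r*s) := by ring
      rw [this]; calc _ ≤ (u*r)*(u*v) := by gcongr
        _ = _ := by ring
    have a2 : r*s*u^2 ≤ u*v*(r*u) := by
      have : r*s*u^2 = (u*r)*(u*s) := by ring
      rw [this]; calc _ ≤ (u*r)*(u*v) := by gcongr
        _ = _ := by ring
    have a3 : r*s*v^2 ≤ u*v*(s*v) := by
      have : r*s*v^2 = (s*v)*(r*v) := by ring
      rw [this]; calc _ ≤ (s*v)*(u*v) := by gcongr
        _ = _ := by ring
    have a4 : r*s*s^2 ≤ u*v*(s*v) := by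
      have : r*s*s^2 = (s*s)*(r*s) := by ring
      rw [this]; calc _ ≤ (s*v)*(u*v) := by gcongr
        _ = _ := by ring
    linarith
  have m3 : (u*v-r*s)*(r^2+u^2+v^2+s^2)*(r*s) ≤ 2*(A1*B2-u*v)*(r*u+s*v)*(r*s) := by
    have b1 := mul_le_mul_of_nonneg_left m2 (by linarith : 0 ≤ u*v-r*s)
    have b2 := mul_le_mul_of_nonneg_right m1 P0.le
    linarith
  have m4 := le_of_mul_le_mul_right m3 R0
  have m5 : (2*M)*(r*u+s*v) ≤ (A1*B2-u*v)*(r*u+s*v) := by linarith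
  have := le_of_mul_le_mul_right m5 P0
  linarith

theorem base_geo {c b X Y n1 n2 : ℝ × ℝ} (hcr : (openSegment ℝ c b ∩ openSegment ℝ n1 n2).Nonempty)
    (hperp : (b.1-c.1)*(n2.1-n1.1)+(b.2-c.2)*(n2.2-n1.2) = 0)
    (i1 : InT b c X n1) (i2 : InT b Y c n2) (i3 : InT X Y c b) (hdot : 0 < dotp c X Y)
    (l1 : 1 ≤ dotp c b b) (l2 : 1 ≤ dotp n1 n2 n2) (l3 : 1 ≤ dotp b n1 n1) (l4 : 1 ≤ dotp b n2 n2)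
    (l5 : 1 ≤ dotp b X X) (l6 : 1 ≤ dotp b Y Y) : BigP 2 c X Y := by
  have hbc : 0 < (b.1-c.1)^2+(b.2-c.2)^2 := by
    simp only [dotp] at l1; linarith
  obtain ⟨L, hL0, hL⟩ : ∃ L : ℝ, 0 < L ∧ L^2 = (b.1-c.1)^2+(b.2-c.2)^2 :=
    ⟨√((b.1-c.1)^2+(b.2-c.2)^2), Real.sqrt_pos.2 hbc, Real.sq_sqrt hbc.le⟩
  obtain ⟨e1, he1⟩ : ∃ e1, e1*L = b.1-c.1 := ⟨(b.1-c.1)/L, by field_simp⟩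
  obtain ⟨e2, he2⟩ : ∃ e2, e2*L = b.2-c.2 := ⟨(b.2-c.2)/L, by field_simp⟩
  have he : e1^2+e2^2 = 1 := by
    rw [← he1, ← he2] at hL
    have : L^2*(e1^2+e2^2-1) = 0 := by linarith
    have := (mul_eq_zero.1 this).resolve_left (by positivity)
    linarith
  obtain ⟨δ, hd, hδ⟩ : ∃ δ : ℝ, δ^2 = 1 ∧ 0 ≤ fY e1 e2 δ c n1 := by
    rcases le_total 0 (fY e1 e2 1 c n1) with h | h
    · exact ⟨1, by norm_num, h⟩
    · exact ⟨-1, by norm_num, by simp only [fY] at *; linarith⟩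
  have cX : fX e1 e2 c c = 0 := by simp [fX]
  have cY : fY e1 e2 δ c c = 0 := by simp [fY]
  have bX : fX e1 e2 c b = L := by
    simp only [fX]; linear_combination -e1*he1-e2*he2+L*he
  have bY : fY e1 e2 δ c b = 0 := by
    simp only [fY]; linear_combination -δ*e1*he2+δ*e2*he1
  have nX : fX e1 e2 c n2 = fX e1 e2 c n1 := by
    have : L*(e1*(n2.1-n1.1)+e2*(n2.2-n1.2)) = 0 := by
      linear_combination (n2.1-n1.1)*he1+(n2.2-n1.2)*he2+hperp
    have := (mul_eq_zero.1 this).resolve_left hL0.ne'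
    simp only [fX]; linear_combination this
  obtain ⟨Z, hZ1, hZ2⟩ := hcr
  obtain ⟨t, t0, t1, tx, ty⟩ := exists_of_mem_openSegment hZ1
  obtain ⟨τ, τ0, τ1, sx, sy⟩ := exists_of_mem_openSegment hZ2
  have z1 : fX e1 e2 c Z = t*L := by
    rw [← bX]; simp only [fX]; rw [tx, ty]; ring
  have z2 : fY e1 e2 δ c Z = 0 := by
    have : fY e1 e2 δ c Z = t*fY e1 e2 δ c b := by
      simp only [fY]; rw [tx, ty]; ring
    rw [this, bY, mul_zero]
  have z3 : fX e1 e2 c Z = fX e1 e2 c n1 := by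
    have : fX e1 e2 c Z = fX e1 e2 c n1 + τ*(fX e1 e2 c n2 - fX e1 e2 c n1) := by
      simp only [fX]; rw [sx, sy]; ring
    rw [this, nX]; ring
  have z4 : fY e1 e2 δ c n1 + τ*(fY e1 e2 δ c n2 - fY e1 e2 δ c n1) = 0 := by
    rw [← z2]; simp only [fY]; rw [sx, sy]; ring
  have z5 : fX e1 e2 c n1 = t*L := by rw [← z3, z1]
  have fo := frame_orient he hd c
  have fd := frame_dot he hd c
  have s1 := i1.same_side
  have s2 := i2.rot.rot.same_side
  rw [fd] at l1 l2 l3 l4 l5 l6 hdot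
  rw [InT, fo b c n1, fo c X n1, fo X b n1] at i1
  rw [InT, fo b Y n2, fo Y c n2, fo c b n2] at i2
  rw [InT, fo X Y b, fo Y c b, fo c X b] at i3
  rw [fo b c n1, fo b c X] at s1
  rw [fo c b n2, fo c b Y] at s2
  unfold BigP
  rw [fd c X Y, fd c X X, fd c Y Y, fo c X Y, abs_delta hd]
  simp only [nX, cX, cY, bX, bY, z5] at i1 i2 i3 s1 s2 l1 l2 l3 l4 l5 l6 hdot ⊢
  clear fo fd z1 z2 z3 hperp tx ty sx sy hZ1 hZ2 nX z5
  generalize fX e1 e2 c X = x1 at *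
  generalize fY e1 e2 δ c X = x2 at *
  generalize fX e1 e2 c Y = y1 at *
  generalize fY e1 e2 δ c Y = y2 at *
  generalize fY e1 e2 δ c n1 = w1 at *
  generalize fY e1 e2 δ c n2 = w2 at *
  clear he1 he2 bX bY cX cY hbc hL he
  obtain ⟨q, rfl⟩ : ∃ q, y2 = -q := ⟨-y2, by ring⟩
  obtain ⟨w2, rfl⟩ : ∃ q, w2 = -q := ⟨-w2, by ring⟩
  have dd : δ = 1 ∨ δ = -1 := by
    have : (δ-1)*(δ+1) = 0 := by linarith
    rcases mul_eq_zero.1 this with h | h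
    · left; linarith
    · right; linarith
  have w10 : w1 ≠ 0 := by
    rintro rfl
    rcases i1 with h | h <;> · have := h.1; simp at this
  have w1p : 0 < w1 := lt_of_le_of_ne hδ w10.symm
  have w2p : 0 < w2 := by
    have : τ*w2 = (1-τ)*w1 := by linarith
    have : 0 < τ*w2 := by rw [this]; exact mul_pos (by linarith) w1p
    exact pos_of_mul_pos_right this τ0.le
  have hs1 : L*w1*(L*x2) > 0 := by
    have : δ*δ = 1 := by linarith
    calc L*w1*(L*x2) = (δ*δ)*(L*w1*(L*x2)) := by rw [this]; ring
      _ > 0 := by linarith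
  have hs2 : L*w2*(L*q) > 0 := by
    have : δ*δ = 1 := by linarith
    calc L*w2*(L*q) = (δ*δ)*(L*w2*(L*q)) := by rw [this]; ring
      _ > 0 := by linarith
  have x2p : 0 < x2 := by
    have := pos_of_mul_pos_right hs1 (by positivity)
    exact pos_of_mul_pos_right this (by positivity)
  have qp : 0 < q := by
    have := pos_of_mul_pos_right hs2 (by positivity)
    exact pos_of_mul_pos_right this (by positivity)
  have P1 : 0 < L*w1 := by positivity
  have P2 : 0 < L*w2 := by positivity
  have P3 : 0 < L*q := by positivity
  have N1 : w1*x1 ≤ (t*L)*x2 := by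
    rcases dd with rfl | rfl <;> rcases i1 with h | h <;> linarith [h.1, h.2.1]
  have N2 : w2*y1 ≤ (t*L)*q := by
    rcases dd with rfl | rfl <;> rcases i2 with h | h <;> linarith [h.2.2, h.2.1]
  have T : L*(q+x2) ≤ y1*x2+q*x1 := by
    rcases dd with rfl | rfl <;> rcases i3 with h | h <;> linarith [h.1, h.2.1]
  clear i1 i2 i3 s1 s2 hs1 hs2 dd
  have D : 0 < x1*y1-x2*q := by linarith
  have xq : 0 < x2*q := by positivity
  have x1p : 0 < x1 := by
    by_contra hn
    push Not at hn
    have : y1 ≤ 0 := by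
      by_contra hy
      push Not at hy
      linarith [mul_nonneg (neg_nonneg.2 hn) hy.le]
    have : 0 < L*(q+x2) := by positivity
    linarith [mul_nonneg (neg_nonneg.2 hn) qp.le, mul_nonneg (neg_nonneg.2 ‹y1 ≤ 0›) x2p.le]
  have y1p : 0 < y1 := by
    have : 0 < x1*y1 := by linarith
    exact pos_of_mul_pos_right this x1p.le
  have eL : t*L+(1-t)*L = L := by ring
  have L1 : 1 ≤ L := by nlinarith
  have W : 1 ≤ w1+w2 := by nlinarith
  have := base_full (t*L) ((1-t)*L) w1 w2 x1 x2 y1 q (by rw [eL]; exact L1) (by positivity) (mul_pos (by linarith) hL0)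
    w1p w2p W (by linarith) (by linarith) (by rw [eL]; linarith) (by rw [eL]; linarith) x1p y1p x2p qp N1 N2 (by rw [eL]; exact T) D
  refine ⟨by linarith, ?_⟩
  have E : |(x1 - 0) * (-q - 0) - (x2 - 0) * (y1 - 0)| = y1*x2+q*x1 := by
    have : 0 < x1*q := by positivity
    have : 0 < x2*y1 := by positivity
    rw [abs_of_neg (by linarith)]; ring
  rw [E]
  linarith

theorem orient_le_box {P Q R : ℝ × ℝ} {l W d H : ℝ} (p1 : l ≤ P.1) (p2 : P.1 ≤ l+W) (p3 : d ≤ P.2) (p4 : P.2 ≤ d+H)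
    (q1 : l ≤ Q.1) (q2 : Q.1 ≤ l+W) (q3 : d ≤ Q.2) (q4 : Q.2 ≤ d+H)
    (r1 : l ≤ R.1) (r2 : R.1 ≤ l+W) (r3 : d ≤ R.2) (r4 : R.2 ≤ d+H) : orient P Q R ≤ W*H := by
  have W0 : 0 ≤ W := by linarith
  have key : ∀ x c : ℝ, l ≤ x → x ≤ l+W → (x-l)*c ≤ W*max c 0 := by
    intro x c h1 h2
    rcases le_total c 0 with h | h
    · rw [max_eq_right h]; nlinarith
    · rw [max_eq_left h]; exact mul_le_mul_of_nonneg_right (by linarith) h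
  have k1 := key P.1 (Q.2-R.2) p1 p2
  have k2 := key Q.1 (R.2-P.2) q1 q2
  have k3 := key R.1 (P.2-Q.2) r1 r2
  have k4 : max (Q.2-R.2) 0 + max (R.2-P.2) 0 + max (P.2-Q.2) 0 ≤ H := by
    rcases max_cases (Q.2-R.2) 0 with h | h <;> rcases max_cases (R.2-P.2) 0 with h' | h' <;>
      rcases max_cases (P.2-Q.2) 0 with h'' | h'' <;> rw [h.1, h'.1, h''.1] <;> linarith [h.2, h'.2, h''.2]
  have k5 := mul_le_mul_of_nonneg_left k4 W0
  simp only [orient]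
  linarith

theorem abs_orient_le_box {V : Type} [Finite V] (ρ : V → ℝ × ℝ) (a b c : V) :
    |orient (ρ a) (ρ b) (ρ c)| ≤
      (sSup (Set.range fun v => (ρ v).1) - sInf (Set.range fun v => (ρ v).1)) *
      (sSup (Set.range fun v => (ρ v).2) - sInf (Set.range fun v => (ρ v).2)) := by
  have f1 := Set.finite_range fun v => (ρ v).1
  have f2 := Set.finite_range fun v => (ρ v).2
  have u1 : ∀ v, (ρ v).1 ≤ sSup (Set.range fun v => (ρ v).1) := fun v => le_csSup f1.bddAbove ⟨v, rfl⟩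
  have u2 : ∀ v, (ρ v).2 ≤ sSup (Set.range fun v => (ρ v).2) := fun v => le_csSup f2.bddAbove ⟨v, rfl⟩
  have l1 : ∀ v, sInf (Set.range fun v => (ρ v).1) ≤ (ρ v).1 := fun v => csInf_le f1.bddBelow ⟨v, rfl⟩
  have l2 : ∀ v, sInf (Set.range fun v => (ρ v).2) ≤ (ρ v).2 := fun v => csInf_le f2.bddBelow ⟨v, rfl⟩
  generalize sSup (Set.range fun v => (ρ v).1) = U1 at *
  generalize sSup (Set.range fun v => (ρ v).2) = U2 at *
  generalize sInf (Set.range fun v => (ρ v).1) = L1 at *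
  generalize sInf (Set.range fun v => (ρ v).2) = L2 at *
  have key : ∀ a b c, orient (ρ a) (ρ b) (ρ c) ≤ (U1-L1)*(U2-L2) := by
    intro a b c
    have e1 : L1+(U1-L1) = U1 := by ring
    have e2 : L2+(U2-L2) = U2 := by ring
    apply orient_le_box (l := L1) (d := L2) <;> first | exact l1 _ | exact l2 _ | (rw [e1]; exact u1 _) | (rw [e2]; exact u2 _)
  rw [abs_le']
  refine ⟨key a b c, ?_⟩
  rw [← orient_swap]
  exact key b a c

theorem pow_bound (k : ℕ) : (1.09 : ℝ)^(8*k) ≤ 2^k := by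
  rw [pow_mul]
  exact pow_le_pow_left₀ (by positivity) (by norm_num) k

section Lower
variable {V : Type} {G : SimpleGraph V} {ρ : V → ℝ × ℝ} {m : ℕ} {v : Bool → ℕ → Fin 4 → V}

theorem IsKite.gkite (hr : IsRACDrawing G ρ) {q : Fin 5 → V} (hk : IsKite G ρ q) :
    GKite (ρ (q 0)) (ρ (q 1)) (ρ (q 2)) (ρ (q 3)) (ρ (q 4)) :=
  ⟨hk.cr.2, hr _ (hk.k5 0 1 (by decide)) _ (hk.k5 2 3 (by decide)) hk.cr _ _ _ _ rfl rfl, hk.in3, hk.in4⟩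

theorem len_sq (hl : ∀ u v : V, G.Adj u v → 1 ≤ Real.sqrt (((ρ u).1 - (ρ v).1) ^ 2 + ((ρ u).2 - (ρ v).2) ^ 2))
    {a b : V} (h : G.Adj a b) : 1 ≤ dotp (ρ a) (ρ b) (ρ b) := by
  have := hl a b h
  rw [Real.one_le_sqrt] at this
  simp only [dotp]
  linarith

theorem Chains.lower [Finite V] (hC : Chains G m v) (h : IsICPlanarDrawing G ρ) (hr : IsRACDrawing G ρ)
    (hl : ∀ u v : V, G.Adj u v → 1 ≤ Real.sqrt (((ρ u).1 - (ρ v).1) ^ 2 + ((ρ u).2 - (ρ v).2) ^ 2)) :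
    (2:ℝ)^(m+1) ≤ (sSup (Set.range fun v => (ρ v).1) - sInf (Set.range fun v => (ρ v).1)) *
      (sSup (Set.range fun v => (ρ v).2) - sInf (Set.range fun v => (ρ v).2)) := by
  obtain ⟨s, hg⟩ := hC.exists_good h
  have lev := fun i hi => hC.level h hg (i := i) hi
  choose r r' hrr hk using lev
  have gk : ∀ i hi, GKite (ρ (v s (i+1) 0)) (ρ (v s (i+1) (r i hi))) (ρ (v s (i+1) 1)) (ρ (v s (i+1) (r' i hi))) (ρ (v s i 0)) :=
    fun i hi => (hk i hi).gkite hr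
  have big : ∀ i hi, BigP (2^(i+1)) (ρ (v s i 0)) (ρ (v s (i+1) (r i hi))) (ρ (v s (i+1) (r' i hi))) := by
    intro i
    induction i with
    | zero =>
      intro hi
      obtain ⟨b1, b2, b3⟩ := hC.base h (hrr 0 hi) (hk 0 hi)
      have r0 : r 0 hi ≠ 0 ∧ r 0 hi ≠ 1 := by rcases hrr 0 hi with ⟨e, -⟩ | ⟨e, -⟩ <;> rw [e] <;> decide
      have r0' : r' 0 hi ≠ 0 ∧ r' 0 hi ≠ 1 := by rcases hrr 0 hi with ⟨-, e⟩ | ⟨-, e⟩ <;> rw [e] <;> decide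
      have rr : r 0 hi ≠ r' 0 hi := by rcases hrr 0 hi with ⟨e', e⟩ | ⟨e', e⟩ <;> rw [e, e'] <;> decide
      have rb : r 0 hi = 2 ∨ r 0 hi = 3 := by rcases hrr 0 hi with ⟨e', e⟩ | ⟨e', e⟩ <;> simp [e']
      have rb' : r' 0 hi = 2 ∨ r' 0 hi = 3 := by rcases hrr 0 hi with ⟨e', e⟩ | ⟨e', e⟩ <;> simp [e]
      have K := fun a b => hC.k4 s 0 a b (Nat.zero_le _)
      rw [zero_add, pow_one]
      exact base_geo b3.2 (hr _ (K 0 1 (by decide)) _ (K _ _ rr) b3 _ _ _ _ rfl rfl) b1 b2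
        (hC.inner h hi (hrr 0 hi) (hk 0 hi)) (gk 0 hi).dot_pos (len_sq hl (K 0 1 (by decide))) (len_sq hl (K _ _ rr))
        (len_sq hl (K _ _ r0.2.symm)) (len_sq hl (K _ _ r0'.2.symm)) (len_sq hl (hC.bx s 0 _ hi rb)) (len_sq hl (hC.bx s 0 _ hi rb'))
    | succ i ih =>
      intro hi
      have hi' : i + 1 ≤ m := by omega
      refine bigP_mono (hC.inner h hi (hrr _ hi) (hk _ hi)) (hC.inner2 h hi (hrr _ hi) (hk _ hi)) (gk _ hi).dot_pos ?_
      intro hD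
      have := (gk i hi').step (ih hi') hD
      rw [pow_succ (2:ℝ) (i+1), mul_comm ((2:ℝ)^(i+1)) 2]
      exact this
  have hm := hC.one_le
  obtain ⟨n, rfl⟩ : ∃ n, m = n + 1 := ⟨m-1, by omega⟩
  have := (gk n le_rfl).final (big n le_rfl)
  rw [pow_succ, mul_comm]
  exact this.trans (abs_orient_le_box ρ _ _ _)

end Lower

theorem area_half (a b x y : ℝ) (a0 : 0 < a) (x0 : 0 < x) (y0 : 0 < y) (h2 : 1 ≤ x^2+y^2) (h3 : 1 ≤ a^2+y^2)
    (h6 : 1 ≤ b+y) (hy : y ≤ 3/5) : 2 ≤ (a+x)*(b+y)+x*y := by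
  have y2 : y^2 ≤ 9/25 := by
    calc y^2 ≤ (3/5)^2 := by gcongr
      _ = _ := by norm_num
  have y3 : y^3 ≤ 27/125 := by
    calc y^3 ≤ (3/5)^3 := by gcongr
      _ = _ := by norm_num
  obtain ⟨w, w0, hw⟩ : ∃ w : ℝ, 0 ≤ w ∧ w^2 = 1-y^2 := ⟨√(1-y^2), Real.sqrt_nonneg _, Real.sq_sqrt (by linarith)⟩
  have k1 : w ≤ x := (pow_le_pow_iff_left₀ w0 x0.le two_ne_zero).1 (by linarith)
  have k2 : w ≤ a := (pow_le_pow_iff_left₀ w0 a0.le two_ne_zero).1 (by linarith)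
  have k4 : 2 ≤ (2+y)*w := by
    refine (pow_le_pow_iff_left₀ (by norm_num) (by positivity) two_ne_zero).1 ?_
    have e : ((2+y)*w)^2 = (2+y)^2*(1-y^2) := by rw [mul_pow, hw]
    rw [e]
    have : 0 ≤ y*(4-3*y-4*y^2-y^3) := mul_nonneg y0.le (by linarith)
    linarith
  have k5 : w*y ≤ x*y := mul_le_mul_of_nonneg_right k1 y0.le
  have k6 : (a+x)*1 ≤ (a+x)*(b+y) := mul_le_mul_of_nonneg_left h6 (by linarith)
  linarith

theorem le_of_one_le_sq {a y p q : ℝ} (a0 : 0 < a) (y0 : 0 < y) (hy : y ≤ q) (h : 1 ≤ a^2+y^2) (hpq : p^2+q^2 = 1) (hp : 0 ≤ p) : p ≤ a := by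
  have : y^2 ≤ q^2 := by gcongr
  exact (pow_le_pow_iff_left₀ hp a0.le two_ne_zero).1 (by linarith)

theorem area_half2 (a b x y : ℝ) (a0 : 0 < a) (y0 : 0 < y) (h3 : 1 ≤ a^2+y^2)
    (h6 : 1 ≤ b+y) (hy : 3/5 ≤ y) (hy' : y ≤ 4/5) (hx : 4/5 ≤ x) : 2 ≤ (a+x)*(b+y)+x*y := by
  have ha : 3/5 ≤ a := le_of_one_le_sq a0 y0 hy' h3 (by norm_num) (by norm_num)
  have h7 : 6/5 ≤ a + 4/5*y := by
    by_contra hc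
    push Not at hc
    have h8 : a^2 < (6/5-4/5*y)^2 := by
      have : a < 6/5-4/5*y := by linarith
      gcongr
    nlinarith [mul_nonneg (sub_nonneg.2 hy) (sub_nonneg.2 hy')]
  have k6 : (a+x)*1 ≤ (a+x)*(b+y) := mul_le_mul_of_nonneg_left h6 (by linarith)
  have k7 : 4/5*y ≤ x*y := mul_le_mul_of_nonneg_right hx y0.le
  linarith

theorem area_one (a b x y : ℝ) (a0 : 0 < a) (b0 : 0 < b) (x0 : 0 < x) (y0 : 0 < y)
    (h1 : 1 ≤ a^2+b^2) (h2 : 1 ≤ x^2+y^2) (h3 : 1 ≤ a^2+y^2) (h4 : 1 ≤ b^2+x^2) (h5 : 1 ≤ a+x) (h6 : 1 ≤ b+y) :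
    2 ≤ (a+x)*(b+y)+x*y := by
  by_cases hy : y ≤ 3/5
  · exact area_half a b x y a0 x0 y0 h2 h3 h6 hy
  by_cases hx : x ≤ 3/5
  · have := area_half b a y x b0 y0 x0 (by linarith) (by linarith) (by linarith) hx
    linarith
  push Not at hx hy
  rcases le_total (4/5) x with hx' | hx' <;> rcases le_total (4/5) y with hy' | hy'
  · have h7 : 1 ≤ a+b := by
      refine (pow_le_pow_iff_left₀ zero_le_one (by linarith) two_ne_zero).1 ?_
      have := mul_pos a0 b0
      linarith
    have e1 : (4/5)*b ≤ x*b := mul_le_mul_of_nonneg_right hx' b0.le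
    have e2 : (4/5)*a ≤ y*a := mul_le_mul_of_nonneg_right hy' a0.le
    have e3 : (4/5)*(4/5) ≤ x*y := mul_le_mul hx' hy' (by norm_num) x0.le
    have := mul_pos a0 b0
    linarith
  · exact area_half2 a b x y a0 y0 h3 h6 hy.le hy' hx'
  · have := area_half2 b a y x b0 x0 (by linarith) (by linarith) hx.le hx' hy'
    linarith
  · have ha : 3/5 ≤ a := le_of_one_le_sq a0 y0 hy' h3 (by norm_num) (by norm_num)
    have hb : 3/5 ≤ b := le_of_one_le_sq b0 x0 hx' h4 (by norm_num) (by norm_num)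
    have hx2 : x^2 ≤ (4/5)^2 := by gcongr
    have hy2 : y^2 ≤ (4/5)^2 := by gcongr
    have hxy : 12/25 ≤ x*y := by
      refine (pow_le_pow_iff_left₀ (by norm_num) (by positivity) two_ne_zero).1 ?_
      rw [mul_pow]
      have h7 := mul_nonneg (by linarith : 0 ≤ x^2-9/25) (by linarith : 0 ≤ y^2-9/25)
      linarith
    have hs : 7/5 ≤ x+y := by
      refine (pow_le_pow_iff_left₀ (by norm_num) (by linarith) two_ne_zero).1 ?_
      linarith
    have e1 : (3/5)*(3/5) ≤ a*b := mul_le_mul ha hb (by norm_num) a0.le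
    have e2 : (3/5)*y ≤ a*y := mul_le_mul_of_nonneg_right ha y0.le
    have e3 : x*(3/5) ≤ x*b := mul_le_mul_of_nonneg_left hb x0.le
    linarith

theorem GKite.one {A X B Y c : ℝ × ℝ} (h : GKite A X B Y c) (h1 : 1 ≤ dotp A B B) (h2 : 1 ≤ dotp X Y Y)
    (h3 : 1 ≤ dotp A Y Y) (h4 : 1 ≤ dotp B X X) (h5 : 1 ≤ dotp A X X) (h6 : 1 ≤ dotp B Y Y) :
    2 ≤ |orient A B c| := by
  obtain ⟨e1, e2, δ, r, s, u, v, A1, B2, he, hd, xX, yX, xY, yY, xA, yA, xB, yB, r0, s0, ru, sv, uA, vB, l1, l2⟩ := h.frame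
  have cX : fX e1 e2 c c = 0 := by simp [fX]
  have cY : fY e1 e2 δ c c = 0 := by simp [fY]
  rw [frame_dot he hd c, xA, yA, xB, yB] at h1
  rw [frame_dot he hd c, xX, yX, xY, yY] at h2
  rw [frame_dot he hd c, xA, yA, xY, yY] at h3
  rw [frame_dot he hd c, xX, yX, xB, yB] at h4
  rw [frame_dot he hd c, xX, yX, xA, yA] at h5
  rw [frame_dot he hd c, xY, yY, xB, yB] at h6
  rw [frame_orient he hd c, abs_delta hd, xA, yA, xB, yB, cX, cY]
  have h7 : 1 ≤ (A1-u)+(u-r) := by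
    refine (pow_le_pow_iff_left₀ zero_le_one (by linarith) two_ne_zero).1 ?_
    linarith
  have h8 : 1 ≤ (B2-v)+(v-s) := by
    refine (pow_le_pow_iff_left₀ zero_le_one (by linarith) two_ne_zero).1 ?_
    linarith
  have key := area_one (A1-u) (B2-v) (u-r) (v-s) (by linarith) (by linarith) (by linarith) (by linarith)
    (by linarith) (by linarith) (by linarith) (by linarith) h7 h8
  have k2 := mul_pos (sub_pos.2 ru) s0
  have k3 := mul_pos (sub_pos.2 sv) r0
  refine le_trans ?_ (le_abs_self _)
  linarith

theorem k5_lower {V : Type} [Finite V] {G : SimpleGraph V} {ρ : V → ℝ × ℝ} {q : Fin 5 → V} (hq : IsK5 G q)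
    (h : IsICPlanarDrawing G ρ) (hr : IsRACDrawing G ρ)
    (hl : ∀ u v : V, G.Adj u v → 1 ≤ Real.sqrt (((ρ u).1 - (ρ v).1) ^ 2 + ((ρ u).2 - (ρ v).2) ^ 2)) :
    2 ≤ (sSup (Set.range fun v => (ρ v).1) - sInf (Set.range fun v => (ρ v).1)) *
      (sSup (Set.range fun v => (ρ v).2) - sInf (Set.range fun v => (ρ v).2)) := by
  obtain ⟨σ, hk⟩ := exists_kite h hq
  have L := fun i j hij => len_sq hl (hk.k5 i j hij)
  exact ((hk.gkite hr).one (L _ _ (by decide)) (L _ _ (by decide)) (L _ _ (by decide)) (L _ _ (by decide))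
    (L _ _ (by decide)) (L _ _ (by decide))).trans (abs_orient_le_box ρ _ _ _)

/-- Reduction of IC-planarity to a directed edge relation with an explicit list of crossing pairs. -/
theorem ic_of {V K : Type} {G : SimpleGraph V} {ρ : V → ℝ × ℝ} (R : V → V → Prop)
    (hG : ∀ u w, G.Adj u w → R u w ∨ R w u) (hinj : Function.Injective ρ)
    (hN : ∀ u w v, R u w → v ≠ u → v ≠ w → ρ v ∉ openSegment ℝ (ρ u) (ρ w))
    (χ : K → Bool → Sym2 V)
    (hC : ∀ u w u' w', R u w → R u' w' → u ≠ u' → u ≠ w' → w ≠ u' → w ≠ w' →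
      ∀ z, z ∈ openSegment ℝ (ρ u) (ρ w) → z ∈ openSegment ℝ (ρ u') (ρ w') →
      ∃ κ b, s(u, w) = χ κ b ∧ s(u', w') = χ κ (!b))
    (hX : ∀ κ b κ' b' v, v ∈ χ κ b → v ∈ χ κ' b' → κ = κ' ∧ b = b')
    (hS : ∀ κ, (edgeSeg ρ (χ κ true) ∩ edgeSeg ρ (χ κ false)).Subsingleton) : IsICPlanarDrawing G ρ := by
  have rep : ∀ e ∈ G.edgeSet, ∃ u w, e = s(u, w) ∧ R u w := by
    intro e he
    induction e using Sym2.ind with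
    | _ u w =>
      rcases hG u w he with h | h
      · exact ⟨u, w, rfl, h⟩
      · exact ⟨w, u, Sym2.eq_swap, h⟩
  have cr : ∀ e ∈ G.edgeSet, ∀ f ∈ G.edgeSet, Crosses ρ e f → ∃ κ b, e = χ κ b ∧ f = χ κ (!b) := by
    intro e he f hf hc
    obtain ⟨u, w, rfl, h1⟩ := rep e he
    obtain ⟨u', w', rfl, h2⟩ := rep f hf
    obtain ⟨hd, z, hz1, hz2⟩ := hc
    have d1 := hd u (by simp)
    have d2 := hd w (by simp)
    simp only [Sym2.mem_iff, not_or] at d1 d2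
    exact hC u w u' w' h1 h2 d1.1 d1.2 d2.1 d2.2 z hz1 hz2
  refine ⟨⟨hinj, ?_, ?_⟩, ?_, ?_⟩
  · intro e he v hv
    obtain ⟨u, w, rfl, h1⟩ := rep e he
    simp only [Sym2.mem_iff, not_or] at hv
    exact hN u w v h1 hv.1 hv.2
  · intro e he f hf hd
    by_cases hne : (edgeSeg ρ e ∩ edgeSeg ρ f).Nonempty
    · obtain ⟨κ, b, rfl, rfl⟩ := cr e he f hf ⟨hd, hne⟩
      cases b
      · rw [Set.inter_comm]; exact hS κ
      · exact hS κ
    · rw [Set.not_nonempty_iff_eq_empty.1 hne]; exact Set.subsingleton_empty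
  · intro e he f hf g hg c1 c2
    obtain ⟨κ, b, rfl, rfl⟩ := cr e he f hf c1
    obtain ⟨κ', b', h1, rfl⟩ := cr _ he g hg c2
    obtain ⟨v, hv⟩ : ∃ v, v ∈ χ κ b := ⟨_, Sym2.out_fst_mem _⟩
    obtain ⟨rfl, rfl⟩ := hX κ b κ' b' v hv (h1 ▸ hv)
    rfl
  · intro e he f hf ⟨e', he', c1⟩ ⟨f', hf', c2⟩ hne v hv hv'
    obtain ⟨κ, b, rfl, rfl⟩ := cr e he e' he' c1
    obtain ⟨κ', b', rfl, rfl⟩ := cr f hf f' hf' c2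
    obtain ⟨rfl, rfl⟩ := hX κ b κ' b' v hv hv'
    exact hne rfl

/-- Integer points as real points. -/
def rl (p : ℤ × ℤ) : ℝ × ℝ := ((p.1 : ℝ), (p.2 : ℝ))

/-- Integer orientation. -/
def io (p q r : ℤ × ℤ) : ℤ := (q.1-p.1)*(r.2-p.2)-(q.2-p.2)*(r.1-p.1)

theorem orient_rl (p q r : ℤ × ℤ) : orient (rl p) (rl q) (rl r) = (io p q r : ℤ) := by
  simp only [orient, rl, io]; push_cast; ring

/-- `r` and `s` weakly on one side of the line `pq`, not both on it. -/
def sepI (p q r s : ℤ × ℤ) : Prop :=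
  (0 ≤ io p q r ∧ 0 ≤ io p q s ∧ 0 < io p q r + io p q s) ∨ (io p q r ≤ 0 ∧ io p q s ≤ 0 ∧ io p q r + io p q s < 0)

instance (p q r s : ℤ × ℤ) : Decidable (sepI p q r s) := by unfold sepI; infer_instance

theorem orient_of_mem {P Q R S z : ℝ × ℝ} (h : z ∈ openSegment ℝ R S) :
    ∃ a b : ℝ, 0 < a ∧ 0 < b ∧ orient P Q z = a * orient P Q R + b * orient P Q S := by
  obtain ⟨a, b, a0, b0, hab, rfl⟩ := h
  refine ⟨a, b, a0, b0, ?_⟩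
  have : b = 1 - a := by linarith
  subst this
  simp only [orient, Prod.fst_add, Prod.snd_add, Prod.smul_fst, Prod.smul_snd, smul_eq_mul]
  ring

theorem orient_of_mem_self {P Q z : ℝ × ℝ} (h : z ∈ openSegment ℝ P Q) : orient P Q z = 0 := by
  obtain ⟨a, b, a0, b0, hab, rfl⟩ := h
  have : b = 1 - a := by linarith
  subst this
  simp only [orient, Prod.fst_add, Prod.snd_add, Prod.smul_fst, Prod.smul_snd, smul_eq_mul]
  ring

theorem sepI_disj {p q r s : ℤ × ℤ} (h : sepI p q r s) {z : ℝ × ℝ} (h1 : z ∈ openSegment ℝ (rl p) (rl q))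
    (h2 : z ∈ openSegment ℝ (rl r) (rl s)) : False := by
  obtain ⟨a, b, a0, b0, e⟩ := orient_of_mem (P := rl p) (Q := rl q) h2
  rw [orient_of_mem_self h1, orient_rl, orient_rl] at e
  rcases h with ⟨g1, g2, g3⟩ | ⟨g1, g2, g3⟩
  · have g1' : (0:ℝ) ≤ (io p q r : ℤ) := by exact_mod_cast g1
    have g2' : (0:ℝ) ≤ (io p q s : ℤ) := by exact_mod_cast g2
    have k1 := mul_nonneg a0.le g1'
    have k2 := mul_nonneg b0.le g2'
    have z1 := (mul_eq_zero.1 (by linarith : a * ((io p q r : ℤ) : ℝ) = 0)).resolve_left a0.ne'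
    have z2 := (mul_eq_zero.1 (by linarith : b * ((io p q s : ℤ) : ℝ) = 0)).resolve_left b0.ne'
    norm_cast at z1 z2
    omega
  · have g1' : ((io p q r : ℤ) : ℝ) ≤ 0 := by exact_mod_cast g1
    have g2' : ((io p q s : ℤ) : ℝ) ≤ 0 := by exact_mod_cast g2
    have k1 := mul_nonneg a0.le (neg_nonneg.2 g1')
    have k2 := mul_nonneg b0.le (neg_nonneg.2 g2')
    have z1 := (mul_eq_zero.1 (by linarith : a * ((io p q r : ℤ) : ℝ) = 0)).resolve_left a0.ne'
    have z2 := (mul_eq_zero.1 (by linarith : b * ((io p q s : ℤ) : ℝ) = 0)).resolve_left b0.ne'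
    norm_cast at z1 z2
    omega

theorem io_not_mem {p q r : ℤ × ℤ} (h : io p q r ≠ 0) : rl r ∉ openSegment ℝ (rl p) (rl q) := by
  intro hm
  have := orient_of_mem_self hm
  rw [orient_rl] at this
  exact h (by exact_mod_cast this)

theorem io_subsingleton {p q r s : ℤ × ℤ} (h : io p q r ≠ io p q s) :
    (openSegment ℝ (rl p) (rl q) ∩ openSegment ℝ (rl r) (rl s)).Subsingleton := by
  have h' : orient (rl p) (rl q) (rl r) ≠ orient (rl p) (rl q) (rl s) := by
    rw [orient_rl, orient_rl]; exact_mod_cast h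
  have key : ∀ z, z ∈ openSegment ℝ (rl p) (rl q) ∩ openSegment ℝ (rl r) (rl s) → ∃ t : ℝ, z = (1-t) • rl r + t • rl s ∧
      t * (orient (rl p) (rl q) (rl r) - orient (rl p) (rl q) (rl s)) = orient (rl p) (rl q) (rl r) := by
    rintro z ⟨h1, h2⟩
    have := orient_of_mem_self h1
    obtain ⟨a, b, a0, b0, hab, rfl⟩ := h2
    have : a = 1 - b := by linarith
    subst this
    refine ⟨b, rfl, ?_⟩
    simp only [orient, Prod.fst_add, Prod.snd_add, Prod.smul_fst, Prod.smul_snd, smul_eq_mul] at *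
    linarith
  intro z hz z' hz'
  obtain ⟨t, e1, e2⟩ := key z hz
  obtain ⟨t', e1', e2'⟩ := key z' hz'
  have : t = t' := mul_right_cancel₀ (sub_ne_zero.2 h') (e2.trans e2'.symm)
  rw [e1, e1', this]

/-- Vertices of a chain: depth and role. -/
abbrev Cv := ℕ × Fin 4

/-- The affine contraction. -/
noncomputable def Lf (p : ℝ × ℝ) : ℝ × ℝ := (3 - p.1/8 + p.2/24, 2 - p.1/12 + p.2/12)

theorem Lf_comb {a b : ℝ} (h : a + b = 1) (p q : ℝ × ℝ) : Lf (a • p + b • q) = a • Lf p + b • Lf q := by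
  have : b = 1 - a := by linarith
  subst this
  ext <;> simp only [Lf, Prod.fst_add, Prod.snd_add, Prod.smul_fst, Prod.smul_snd, smul_eq_mul] <;> ring

theorem Lf_inj : Function.Injective Lf := by
  intro p q h
  simp only [Lf, Prod.mk.injEq] at h
  ext <;> linarith [h.1, h.2]

theorem Lf_mem {p q z : ℝ × ℝ} : z ∈ openSegment ℝ (Lf p) (Lf q) ↔ ∃ w, w ∈ openSegment ℝ p q ∧ z = Lf w := by
  constructor
  · rintro ⟨a, b, a0, b0, hab, rfl⟩
    exact ⟨a • p + b • q, ⟨a, b, a0, b0, hab, rfl⟩, (Lf_comb hab p q).symm⟩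
  · rintro ⟨w, ⟨a, b, a0, b0, hab, rfl⟩, rfl⟩
    exact ⟨a, b, a0, b0, hab, (Lf_comb hab p q).symm⟩

/-- Shift of a vertex by one level. -/
def sv (u : Cv) : Cv := (u.1+1, u.2)

/-- Shift of an edge. -/
def se (e : Cv × Cv) : Cv × Cv := (sv e.1, sv e.2)

theorem sv_inj {u w : Cv} (h : sv u = sv w) : u = w := by
  simp only [sv, Prod.mk.injEq, Nat.add_right_cancel_iff] at h
  exact Prod.ext h.1 h.2

/-- The edges of the last two levels. -/
def baseE : List (Cv × Cv) :=
  [((0,0),(0,1)), ((0,0),(0,2)), ((0,0),(0,3)), ((0,1),(0,2)), ((0,1),(0,3)), ((0,2),(0,3)),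
   ((1,0),(1,1)), ((1,0),(1,2)), ((1,0),(1,3)), ((1,1),(1,2)), ((1,1),(1,3)), ((1,2),(1,3)),
   ((0,0),(1,0)), ((0,1),(1,0)), ((0,2),(1,0)), ((0,3),(1,0)), ((0,2),(1,1)), ((0,3),(1,1)),
   ((0,2),(1,2)), ((0,3),(1,3))]

/-- The edges starting at depth zero. -/
def topE : List (Cv × Cv) :=
  [((0,0),(0,1)), ((0,0),(0,2)), ((0,0),(0,3)), ((0,1),(0,2)), ((0,1),(0,3)), ((0,2),(0,3)),
   ((0,0),(1,0)), ((0,1),(1,0)), ((0,2),(1,0)), ((0,3),(1,0)), ((0,2),(1,1)), ((0,3),(1,1)),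
   ((0,3),(2,0))]

/-- All edges of a chain with `n + 2` levels. -/
def EL : ℕ → List (Cv × Cv)
  | 0 => baseE
  | n+1 => topE ++ (EL n).map se

/-- Integer positions used in the base case. -/
def bp (u : Cv) : ℤ × ℤ :=
  if u.1 = 0 then ![(24,0), (0,24), (2,8), (8,2)] u.2 else ![(0,0), (4,4), (2,4), (4,2)] u.2

/-- Integer positions of the vertices of top edges. -/
def tp (u : Cv) : ℤ × ℤ :=
  if u.1 = 0 then ![(24,0), (0,24), (2,8), (8,2)] u.2 else if u.1 = 1 then ![(0,0), (4,4), (2,4), (4,2)] u.2 else (3,2)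

/-- Positions of a chain with `n + 2` levels. -/
noncomputable def PL : ℕ → Cv → ℝ × ℝ
  | 0, u => rl (bp u)
  | _+1, (0, r) => rl (tp (0, r))
  | n+1, (t+1, r) => Lf (PL n (t, r))

theorem PL_sv (n : ℕ) (u : Cv) : PL (n+1) (sv u) = Lf (PL n u) := rfl

theorem PL_zero (n : ℕ) (r : Fin 4) : PL n (0, r) = rl (tp (0, r)) := by cases n <;> rfl

theorem PL_one (n : ℕ) {r : Fin 4} (hr : r = 0 ∨ r = 1) : PL n (1, r) = rl (tp (1, r)) := by
  cases n with
  | zero => rfl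
  | succ n =>
    change Lf (PL n (0, r)) = _
    rw [PL_zero]
    rcases hr with rfl | rfl <;> simp [Lf, rl, tp] <;> norm_num

theorem PL_two (n : ℕ) : PL (n+1) (2, 0) = rl (tp (2, 0)) := by
  change Lf (PL n (1, 0)) = _
  rw [PL_one _ (Or.inl rfl)]
  simp [Lf, rl, tp]

/-- The crossing edges at depth `t`. -/
def kt (n t : ℕ) (b : Bool) : Cv × Cv :=
  if t = n+1 then (if b then ((t,0),(t,1)) else ((t,2),(t,3))) else (if b then ((t,0),(t,2)) else ((t,1),(t,3)))

theorem kt_succ (n t : ℕ) (b : Bool) : kt (n+1) (t+1) b = se (kt n t b) := by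
  simp only [kt, Nat.add_right_cancel_iff]
  split_ifs <;> rfl

/-- The segment of an edge. -/
def sg (n : ℕ) (e : Cv × Cv) : Set (ℝ × ℝ) := openSegment ℝ (PL n e.1) (PL n e.2)

theorem sg_se {n : ℕ} {e : Cv × Cv} {z : ℝ × ℝ} : z ∈ sg (n+1) (se e) ↔ ∃ w, w ∈ sg n e ∧ z = Lf w := Lf_mem

/-- The triangle. -/
def InTri (p : ℝ × ℝ) : Prop := 0 ≤ p.1 ∧ 0 ≤ p.2 ∧ p.1 + p.2 ≤ 24

theorem InTri.seg {p q z : ℝ × ℝ} (hp : InTri p) (hq : InTri q) (hz : z ∈ openSegment ℝ p q) : InTri z := by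
  obtain ⟨a, b, a0, b0, hab, rfl⟩ := hz
  obtain ⟨p1, p2, p3⟩ := hp
  obtain ⟨q1, q2, q3⟩ := hq
  simp only [InTri, Prod.fst_add, Prod.snd_add, Prod.smul_fst, Prod.smul_snd, smul_eq_mul]
  refine ⟨by positivity, by positivity, ?_⟩
  have := mul_le_mul_of_nonneg_left p3 a0.le
  have := mul_le_mul_of_nonneg_left q3 b0.le
  have : b = 1 - a := by linarith
  subst this
  linarith

theorem InTri.Lf {p : ℝ × ℝ} (hp : InTri p) : InTri (Lf p) := by
  obtain ⟨p1, p2, p3⟩ := hp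
  simp only [InTri, _root_.Lf]
  refine ⟨?_, ?_, ?_⟩ <;> linarith

/-- Properties of the chain drawing. -/
structure Good (n : ℕ) : Prop where
  tri : ∀ u : Cv, u.1 ≤ n+1 → InTri (PL n u)
  dep : ∀ e ∈ EL n, e.1.1 ≤ n+1 ∧ e.2.1 ≤ n+1
  inj : ∀ u w : Cv, u.1 ≤ n+1 → w.1 ≤ n+1 → PL n u = PL n w → u = w
  nv : ∀ e ∈ EL n, ∀ u : Cv, u.1 ≤ n+1 → u ≠ e.1 → u ≠ e.2 → PL n u ∉ sg n e
  cr : ∀ e ∈ EL n, ∀ f ∈ EL n, e.1 ≠ f.1 → e.1 ≠ f.2 → e.2 ≠ f.1 → e.2 ≠ f.2 →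
    ∀ z, z ∈ sg n e → z ∈ sg n f → ∃ t b, t ≤ n+1 ∧ e = kt n t b ∧ f = kt n t (!b)
  once : ∀ t, t ≤ n+1 → (sg n (kt n t true) ∩ sg n (kt n t false)).Subsingleton

theorem bp_tri (u : Cv) : InTri (rl (bp u)) := by
  obtain ⟨t, r⟩ := u
  by_cases ht : t = 0 <;> fin_cases r <;> simp [InTri, rl, bp, ht] <;> norm_num

theorem rl_inj {p q : ℤ × ℤ} (h : rl p = rl q) : p = q := by
  simp only [rl, Prod.mk.injEq, Int.cast_inj] at h
  exact Prod.ext h.1 h.2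

theorem good_zero : Good 0 := by
  have fin : ∀ u : Cv, u.1 ≤ 0+1 → u ∈ ([(0,0),(0,1),(0,2),(0,3),(1,0),(1,1),(1,2),(1,3)] : List Cv) := by
    rintro ⟨t, r⟩ ht
    have : t = 0 ∨ t = 1 := by simp at ht; omega
    rcases this with rfl | rfl <;> fin_cases r <;> decide
  refine ⟨fun u _ => bp_tri u, by decide, ?_, ?_, ?_, ?_⟩
  · intro u w hu hw h
    have := rl_inj h
    have key : ∀ u ∈ ([(0,0),(0,1),(0,2),(0,3),(1,0),(1,1),(1,2),(1,3)] : List Cv),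
      ∀ w ∈ ([(0,0),(0,1),(0,2),(0,3),(1,0),(1,1),(1,2),(1,3)] : List Cv), bp u = bp w → u = w := by decide
    exact key u (fin u hu) w (fin w hw) this
  · intro e he u hu h1 h2
    have key : ∀ e ∈ baseE, ∀ u ∈ ([(0,0),(0,1),(0,2),(0,3),(1,0),(1,1),(1,2),(1,3)] : List Cv),
      u ≠ e.1 → u ≠ e.2 → io (bp e.1) (bp e.2) (bp u) ≠ 0 := by decide
    exact io_not_mem (key e he u (fin u hu) h1 h2)
  · intro e he f hf h1 h2 h3 h4 z z1 z2
    have key : ∀ e ∈ baseE, ∀ f ∈ baseE, e.1 ≠ f.1 → e.1 ≠ f.2 → e.2 ≠ f.1 → e.2 ≠ f.2 →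
      sepI (bp e.1) (bp e.2) (bp f.1) (bp f.2) ∨ sepI (bp f.1) (bp f.2) (bp e.1) (bp e.2) ∨
        (e = kt 0 0 true ∧ f = kt 0 0 false) ∨ (e = kt 0 0 false ∧ f = kt 0 0 true) ∨
        (e = kt 0 1 true ∧ f = kt 0 1 false) ∨ (e = kt 0 1 false ∧ f = kt 0 1 true) := by decide +kernel
    rcases key e he f hf h1 h2 h3 h4 with h | h | h | h | h | h
    · exact (sepI_disj h z1 z2).elim
    · exact (sepI_disj h z2 z1).elim
    · exact ⟨0, true, by omega, h⟩
    · exact ⟨0, false, by omega, h⟩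
    · exact ⟨1, true, by omega, h⟩
    · exact ⟨1, false, by omega, h⟩
  · intro t ht
    have : t = 0 ∨ t = 1 := by omega
    rcases this with rfl | rfl <;> exact io_subsingleton (by decide)

theorem topE_PL (n : ℕ) : ∀ e ∈ topE, PL (n+1) e.1 = rl (tp e.1) ∧ PL (n+1) e.2 = rl (tp e.2) := by
  have key : ∀ e ∈ topE, e.1.1 = 0 ∧ (e.2.1 = 0 ∨ (e.2.1 = 1 ∧ (e.2.2 = 0 ∨ e.2.2 = 1)) ∨ e.2 = (2,0)) := by decide
  rintro ⟨⟨t, r⟩, u⟩ he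
  obtain ⟨h1, h2⟩ := key _ he
  simp only at h1 h2
  subst h1
  refine ⟨PL_zero _ _, ?_⟩
  obtain ⟨t', r'⟩ := u
  rcases h2 with h2 | ⟨h2, h3⟩ | h2
  · simp only at h2; subst h2; exact PL_zero _ _
  · simp only at h2; subst h2; exact PL_one _ h3
  · rw [h2]; exact PL_two _

/-- Image of the three corners. -/
theorem orient_Lf (P Q p : ℝ × ℝ) : 24 * orient P Q (Lf p) =
    p.1 * orient P Q (0, 0) + p.2 * orient P Q (4, 4) + (24 - p.1 - p.2) * orient P Q (3, 2) := by
  simp only [orient, Lf]; ring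

/-- Directed lines separating the top edges from the image of the triangle. -/
def sepLines : List ((ℤ × ℤ) × (ℤ × ℤ)) :=
  [((9,0),(0,9)), ((0,0),(8,3)), ((1,2),(0,0)), ((8,0),(0,8)), ((3,2),(4,3))]

theorem top_disj (n : ℕ) {e : Cv × Cv} (he : e ∈ topE) {p : ℝ × ℝ} (hp : InTri p) : Lf p ∉ sg (n+1) e := by
  intro hm
  obtain ⟨h1, h2⟩ := topE_PL n e he
  rw [sg, h1, h2] at hm
  have key : ∀ e ∈ topE, ∃ l ∈ sepLines, 0 ≤ io l.1 l.2 (0,0) ∧ 0 ≤ io l.1 l.2 (4,4) ∧ 0 ≤ io l.1 l.2 (3,2) ∧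
    io l.1 l.2 (tp e.1) ≤ 0 ∧ io l.1 l.2 (tp e.2) ≤ 0 ∧ io l.1 l.2 (tp e.1) + io l.1 l.2 (tp e.2) < 0 := by decide
  obtain ⟨l, -, c1, c2, c3, g1, g2, g3⟩ := key e he
  obtain ⟨a, b, a0, b0, eq⟩ := orient_of_mem (P := rl l.1) (Q := rl l.2) hm
  have eq2 := orient_Lf (rl l.1) (rl l.2) p
  have r1 : ((0, 0) : ℝ × ℝ) = rl (0,0) := by simp [rl]
  have r2 : ((4, 4) : ℝ × ℝ) = rl (4,4) := by simp [rl]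
  have r3 : ((3, 2) : ℝ × ℝ) = rl (3,2) := by simp [rl]
  rw [r1, r2, r3, orient_rl, orient_rl, orient_rl] at eq2
  rw [orient_rl, orient_rl] at eq
  have c1' : (0:ℝ) ≤ (io l.1 l.2 (0,0) : ℤ) := by exact_mod_cast c1
  have c2' : (0:ℝ) ≤ (io l.1 l.2 (4,4) : ℤ) := by exact_mod_cast c2
  have c3' : (0:ℝ) ≤ (io l.1 l.2 (3,2) : ℤ) := by exact_mod_cast c3
  have g1' : ((io l.1 l.2 (tp e.1) : ℤ) : ℝ) ≤ 0 := by exact_mod_cast g1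
  have g2' : ((io l.1 l.2 (tp e.2) : ℤ) : ℝ) ≤ 0 := by exact_mod_cast g2
  obtain ⟨p1, p2, p3⟩ := hp
  have m1 := mul_nonneg p1 c1'
  have m2 := mul_nonneg p2 c2'
  have m3 := mul_nonneg (by linarith : 0 ≤ 24 - p.1 - p.2) c3'
  have k1 := mul_nonneg a0.le (neg_nonneg.2 g1')
  have k2 := mul_nonneg b0.le (neg_nonneg.2 g2')
  have z1 := (mul_eq_zero.1 (by linarith : a * ((io l.1 l.2 (tp e.1) : ℤ) : ℝ) = 0)).resolve_left a0.ne'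
  have z2 := (mul_eq_zero.1 (by linarith : b * ((io l.1 l.2 (tp e.2) : ℤ) : ℝ) = 0)).resolve_left b0.ne'
  norm_cast at z1 z2
  omega

theorem zero_not_Lf (r : Fin 4) {p : ℝ × ℝ} (hp : InTri p) (n : ℕ) : PL n (0, r) ≠ Lf p := by
  rw [PL_zero]
  intro h
  obtain ⟨p1, p2, p3⟩ := hp
  have h1 := congrArg Prod.fst h
  have h2 := congrArg Prod.snd h
  fin_cases r <;> simp [rl, tp, Lf] at h1 h2 <;> linarith

theorem cv_cases (u : Cv) : (∃ r, u = (0, r)) ∨ ∃ w, u = sv w := by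
  obtain ⟨_ | t, r⟩ := u
  · exact Or.inl ⟨r, rfl⟩
  · exact Or.inr ⟨(t, r), rfl⟩

theorem sv_le {w : Cv} {n : ℕ} (h : (sv w).1 ≤ n+1+1) : w.1 ≤ n+1 := by
  simp only [sv] at h; omega

theorem Good.sgTri {n : ℕ} (g : Good n) {e : Cv × Cv} (he : e ∈ EL n) {z : ℝ × ℝ} (hz : z ∈ sg n e) : InTri z :=
  (g.tri _ (g.dep e he).1).seg (g.tri _ (g.dep e he).2) hz

set_option synthInstance.maxHeartbeats 400000 in
set_option synthInstance.maxSize 1000 in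
theorem top_pairs : ∀ e ∈ topE, ∀ f ∈ topE, e.1 ≠ f.1 → e.1 ≠ f.2 → e.2 ≠ f.1 → e.2 ≠ f.2 →
        sepI (tp e.1) (tp e.2) (tp f.1) (tp f.2) ∨ sepI (tp f.1) (tp f.2) (tp e.1) (tp e.2) ∨
        (e = kt 0 0 true ∧ f = kt 0 0 false) ∨ (e = kt 0 0 false ∧ f = kt 0 0 true) := by decide +kernel

theorem Good.succ {n : ℕ} (g : Good n) : Good (n+1) := by
  have mem : ∀ e ∈ EL (n+1), e ∈ topE ∨ ∃ e' ∈ EL n, e = se e' := by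
    intro e he
    rcases List.mem_append.1 he with h | h
    · exact Or.inl h
    · obtain ⟨e', h1, h2⟩ := List.mem_map.1 h
      exact Or.inr ⟨e', h1, h2.symm⟩
  have q0 : ∀ r : Fin 4, InTri (PL (n+1) (0, r)) := by
    intro r; rw [PL_zero]; exact bp_tri (0, r)
  refine ⟨?_, ?_, ?_, ?_, ?_, ?_⟩
  · intro u hu
    rcases cv_cases u with ⟨r, rfl⟩ | ⟨w, rfl⟩
    · exact q0 r
    · rw [PL_sv]; exact (g.tri w (sv_le hu)).Lf
  · intro e he
    rcases mem e he with h | ⟨e', h1, rfl⟩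
    · have key : ∀ e ∈ topE, e.1.1 ≤ 2 ∧ e.2.1 ≤ 2 := by decide
      have := key e h
      omega
    · have := g.dep e' h1
      simp only [se, sv]
      omega
  · intro u w hu hw h
    rcases cv_cases u with ⟨r, rfl⟩ | ⟨u, rfl⟩ <;> rcases cv_cases w with ⟨r', rfl⟩ | ⟨w, rfl⟩
    · rw [PL_zero, PL_zero] at h
      have := rl_inj h
      revert this
      clear h hu hw
      revert r r'
      decide
    · exact absurd h (zero_not_Lf r (g.tri w (sv_le hw)) _)
    · exact absurd h.symm (zero_not_Lf r' (g.tri u (sv_le hu)) _)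
    · rw [PL_sv, PL_sv] at h
      rw [g.inj u w (sv_le hu) (sv_le hw) (Lf_inj h)]
  · intro e he u hu h1 h2 hm
    rcases mem e he with h | ⟨e', h, rfl⟩ <;> rcases cv_cases u with ⟨r, rfl⟩ | ⟨u, rfl⟩
    · obtain ⟨p1, p2⟩ := topE_PL n e h
      have key : ∀ e ∈ topE, ∀ r : Fin 4, (0, r) ≠ e.1 → (0, r) ≠ e.2 → io (tp e.1) (tp e.2) (tp (0, r)) ≠ 0 := by decide
      rw [sg, p1, p2, PL_zero] at hm
      exact io_not_mem (key e h r h1 h2) hm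
    · exact top_disj n h (g.tri u (sv_le hu)) hm
    · obtain ⟨w, hw, eq⟩ := sg_se.1 hm
      exact zero_not_Lf r (g.sgTri h hw) _ eq
    · obtain ⟨w, hw, eq⟩ := sg_se.1 hm
      have eq := Lf_inj eq
      exact g.nv e' h u (sv_le hu) (fun x => h1 (congrArg sv x)) (fun x => h2 (congrArg sv x)) (eq ▸ hw)
  · intro e he f hf h1 h2 h3 h4 z z1 z2
    replace he := mem e he
    replace hf := mem f hf
    rcases he with he | ⟨e, he, rfl⟩ <;> rcases hf with hf | ⟨f, hf, rfl⟩
    · have z1' := z1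
      have z2' := z2
      rw [sg, (topE_PL n e he).1, (topE_PL n e he).2] at z1'
      rw [sg, (topE_PL n f hf).1, (topE_PL n f hf).2] at z2'
      rcases top_pairs e he f hf h1 h2 h3 h4 with h | h | h | h
      · exact (sepI_disj h z1' z2').elim
      · exact (sepI_disj h z2' z1').elim
      · exact ⟨0, true, by omega, h⟩
      · exact ⟨0, false, by omega, h⟩
    · obtain ⟨w, hw, rfl⟩ := sg_se.1 z2
      exact (top_disj n he (g.sgTri hf hw) z1).elim
    · obtain ⟨w, hw, rfl⟩ := sg_se.1 z1
      exact (top_disj n hf (g.sgTri he hw) z2).elim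
    · obtain ⟨w, hw, rfl⟩ := sg_se.1 z1
      obtain ⟨w', hw', eq⟩ := sg_se.1 z2
      have eq := Lf_inj eq
      subst eq
      obtain ⟨t, b, ht, rfl, rfl⟩ := g.cr e he f hf (fun x => h1 (congrArg sv x)) (fun x => h2 (congrArg sv x))
        (fun x => h3 (congrArg sv x)) (fun x => h4 (congrArg sv x)) w hw hw'
      exact ⟨t+1, b, by omega, (kt_succ _ _ _).symm, (kt_succ _ _ _).symm⟩
  · intro t ht
    cases t with
    | zero =>
      have k1 : kt (n+1) 0 true = ((0,0),(0,2)) := rfl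
      have k2 : kt (n+1) 0 false = ((0,1),(0,3)) := rfl
      rw [k1, k2, sg, sg, PL_zero, PL_zero, PL_zero, PL_zero]
      exact io_subsingleton (by decide)
    | succ t =>
      rw [kt_succ, kt_succ]
      rintro z ⟨z1, z2⟩ z' ⟨z1', z2'⟩
      obtain ⟨w, hw, rfl⟩ := sg_se.1 z1
      obtain ⟨w', hw', rfl⟩ := sg_se.1 z1'
      obtain ⟨x, hx, eq⟩ := sg_se.1 z2
      obtain ⟨x', hx', eq'⟩ := sg_se.1 z2'
      have eq := Lf_inj eq
      have eq' := Lf_inj eq'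
      subst eq eq'
      rw [g.once t (by omega) ⟨hw, hx⟩ ⟨hw', hx'⟩]

theorem good (n : ℕ) : Good n := by
  induction n with
  | zero => exact good_zero
  | succ n ih => exact ih.succ

theorem EL_top {n : ℕ} {e : Cv × Cv} (h : e ∈ topE) : e ∈ EL (n+1) := List.mem_append.2 (Or.inl h)

theorem EL_se {n : ℕ} {e : Cv × Cv} (h : e ∈ EL n) : se e ∈ EL (n+1) :=
  List.mem_append.2 (Or.inr (List.mem_map.2 ⟨e, h, rfl⟩))

theorem k4_mem (r r' : Fin 4) (h : r ≠ r') : ∀ n t : ℕ, t ≤ n+1 → (((t,r),(t,r')) : Cv × Cv) ∈ EL n ∨ (((t,r'),(t,r)) : Cv × Cv) ∈ EL n := by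
  intro n
  induction n with
  | zero =>
    intro t ht
    have : t = 0 ∨ t = 1 := by omega
    change _ ∈ baseE ∨ _ ∈ baseE
    revert r r' h
    rcases this with rfl | rfl <;> decide
  | succ n ih =>
    intro t ht
    cases t with
    | zero =>
      have : (((0,r),(0,r')) : Cv × Cv) ∈ topE ∨ (((0,r'),(0,r)) : Cv × Cv) ∈ topE := by
        clear ih; revert r r' h; decide
      exact this.imp EL_top EL_top
    | succ t => exact (ih t (by omega)).imp EL_se EL_se

theorem up_mem (r : Fin 4) : ∀ n t : ℕ, t ≤ n → (((t,r),(t+1,0)) : Cv × Cv) ∈ EL n := by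
  intro n
  induction n with
  | zero =>
    intro t ht
    obtain rfl : t = 0 := by omega
    change _ ∈ baseE
    revert r; decide
  | succ n ih =>
    intro t ht
    cases t with
    | zero => refine EL_top ?_; clear ih; revert r; decide
    | succ t => exact EL_se (ih t (by omega))

theorem bx_mem (r : Fin 4) (hr : r = 2 ∨ r = 3) : ∀ n t : ℕ, t ≤ n → (((t,r),(t+1,1)) : Cv × Cv) ∈ EL n := by
  intro n
  induction n with
  | zero =>
    intro t ht
    obtain rfl : t = 0 := by omega
    change _ ∈ baseE
    revert r; decide
  | succ n ih =>
    intro t ht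
    cases t with
    | zero => refine EL_top ?_; clear ih; revert r; decide
    | succ t => exact EL_se (ih t (by omega))

theorem ay_mem : ∀ n t : ℕ, t + 1 ≤ n → (((t,3),(t+2,0)) : Cv × Cv) ∈ EL n := by
  intro n
  induction n with
  | zero => intro t ht; omega
  | succ n ih =>
    intro t ht
    cases t with
    | zero => exact EL_top (by decide)
    | succ t => exact EL_se (ih t (by omega))

theorem s_mem (r : Fin 4) (hr : r = 2 ∨ r = 3) : ∀ n : ℕ, (((n,r),(n+1,r)) : Cv × Cv) ∈ EL n := by
  intro n
  induction n with
  | zero => change _ ∈ baseE; revert r; decide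
  | succ n ih => exact EL_se ih

/-- Vertices of the graph: side, depth, role. -/
abbrev Vt (n : ℕ) := Bool × Fin (n+2) × Fin 4

/-- Position inside a chain. -/
def cd {n : ℕ} (u : Vt n) : Cv := (u.2.1.val, u.2.2)

/-- The glued vertices. -/
def glueL : List Cv := [(0,0), (0,1), (1,0)]

/-- Directed edges of the graph. -/
def GRel (n : ℕ) (u w : Vt n) : Prop :=
  (u.1 = w.1 ∧ (cd u, cd w) ∈ EL n) ∨ (u.1 = false ∧ w.1 = true ∧ cd u = cd w ∧ cd u ∈ glueL)

/-- The graph. -/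
def Gr (n : ℕ) : SimpleGraph (Vt n) := SimpleGraph.fromRel (GRel n)

/-- The vertex at a given level. -/
def vt (n : ℕ) (s : Bool) (i : ℕ) (r : Fin 4) : Vt n := (s, ⟨n+1-i, by omega⟩, r)

theorem cd_le {n : ℕ} (u : Vt n) : (cd u).1 ≤ n+1 := by
  have := u.2.1.isLt
  simp only [cd]; omega

theorem cd_inj {n : ℕ} {u w : Vt n} (h1 : u.1 = w.1) (h2 : cd u = cd w) : u = w := by
  simp only [cd, Prod.mk.injEq] at h2
  exact Prod.ext h1 (Prod.ext (Fin.ext h2.1) h2.2)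

theorem Gr_chain {n : ℕ} {s : Bool} {i i' : ℕ} {r r' : Fin 4} (h : ((n+1-i, r), (n+1-i', r')) ∈ EL n)
    (hne : i ≤ n+1 ∧ i' ≤ n+1 ∧ (i ≠ i' ∨ r ≠ r')) : (Gr n).Adj (vt n s i r) (vt n s i' r') := by
  refine (SimpleGraph.fromRel_adj _ _ _).2 ⟨?_, Or.inl (Or.inl ⟨rfl, h⟩)⟩
  intro e
  simp only [vt, Prod.mk.injEq, Fin.mk.injEq] at e
  rcases hne with ⟨h1, h2, h3 | h3⟩
  · omega
  · exact h3 e.2.2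

theorem Gr_glue {n : ℕ} (s : Bool) {i : ℕ} {r : Fin 4} (h : (n+1-i, r) ∈ glueL) :
    (Gr n).Adj (vt n s i r) (vt n (!s) i r) := by
  refine (SimpleGraph.fromRel_adj _ _ _).2 ⟨?_, ?_⟩
  · intro e
    have := congrArg Prod.fst e
    cases s <;> simp [vt] at this
  · cases s
    · exact Or.inl (Or.inr ⟨rfl, rfl, rfl, h⟩)
    · exact Or.inr (Or.inr ⟨rfl, rfl, rfl, h⟩)

theorem Gr_chains (n : ℕ) : Chains (Gr n) (n+1) (vt n) where
  one_le := by omega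
  inj := by
    intro s i r s' i' r' h h' e
    simp only [vt, Prod.mk.injEq, Fin.mk.injEq] at e
    exact ⟨e.1, by omega, e.2.2⟩
  k4 := by
    intro s i r r' hi hr
    rcases k4_mem r r' hr n (n+1-i) (by omega) with h | h
    · exact Gr_chain h ⟨hi, hi, Or.inr hr⟩
    · exact (Gr_chain h ⟨hi, hi, Or.inr hr.symm⟩).symm
  up := by
    intro s i r hi
    have h := up_mem r n (n+1-(i+1)) (by omega)
    rw [show n+1-(i+1)+1 = n+1-i by omega] at h
    exact (Gr_chain h ⟨by omega, by omega, Or.inl (by omega)⟩).symm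
  bx := by
    intro s i r hi hr
    have h := bx_mem r hr n (n+1-(i+1)) (by omega)
    rw [show n+1-(i+1)+1 = n+1-i by omega] at h
    exact (Gr_chain h ⟨by omega, by omega, Or.inl (by omega)⟩).symm
  ay := by
    intro s i hi
    have h := ay_mem n (n+1-(i+2)) (by omega)
    rw [show n+1-(i+2)+2 = n+1-i by omega] at h
    exact (Gr_chain h ⟨by omega, by omega, Or.inl (by omega)⟩).symm
  sx := by
    intro s
    have h := s_mem 2 (Or.inl rfl) n
    exact (Gr_chain (i := 1) (i' := 0) h ⟨by omega, by omega, Or.inl (by omega)⟩).symm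
  sy := by
    intro s
    have h := s_mem 3 (Or.inr rfl) n
    exact (Gr_chain (i := 1) (i' := 0) h ⟨by omega, by omega, Or.inl (by omega)⟩).symm
  ga := by
    intro s
    refine Gr_glue s ?_
    rw [Nat.sub_self]; decide
  gb := by
    intro s
    refine Gr_glue s ?_
    rw [Nat.sub_self]; decide
  gc := by
    intro s i hi
    refine Gr_glue s ?_
    rw [show n+1-i = 1 by omega]; decide

/-- Placement of the two sides. -/
noncomputable def sd (s : Bool) (p : ℝ × ℝ) : ℝ × ℝ :=
  (bif s then p.1+p.2+1 else -(p.1+p.2)-1, p.2-p.1)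

theorem sd_comb (s : Bool) {a b : ℝ} (h : a + b = 1) (p q : ℝ × ℝ) : sd s (a • p + b • q) = a • sd s p + b • sd s q := by
  have : b = 1 - a := by linarith
  subst this
  cases s <;> ext <;> simp only [sd, cond_true, cond_false, Prod.fst_add, Prod.snd_add, Prod.smul_fst, Prod.smul_snd, smul_eq_mul] <;> ring

theorem sd_inj (s : Bool) : Function.Injective (sd s) := by
  intro p q h
  cases s <;> simp only [sd, cond_true, cond_false, Prod.mk.injEq] at h <;> ext <;> linarith [h.1, h.2]

theorem sd_mem {s : Bool} {p q z : ℝ × ℝ} : z ∈ openSegment ℝ (sd s p) (sd s q) ↔ ∃ w, w ∈ openSegment ℝ p q ∧ z = sd s w := by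
  constructor
  · rintro ⟨a, b, a0, b0, hab, rfl⟩
    exact ⟨a • p + b • q, ⟨a, b, a0, b0, hab, rfl⟩, (sd_comb s hab p q).symm⟩
  · rintro ⟨w, ⟨a, b, a0, b0, hab, rfl⟩, rfl⟩
    exact ⟨a, b, a0, b0, hab, (sd_comb s hab p q).symm⟩

theorem sd_side {s s' : Bool} {p q : ℝ × ℝ} (hp : InTri p) (hq : InTri q) (h : sd s p = sd s' q) : s = s' := by
  obtain ⟨p1, p2, p3⟩ := hp
  obtain ⟨q1, q2, q3⟩ := hq
  have h1 := congrArg Prod.fst h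
  cases s <;> cases s' <;> simp only [sd, cond_true, cond_false] at h1 <;> first | rfl | (exfalso; linarith)

theorem glue_PL {n : ℕ} {g : Cv} (hg : g ∈ glueL) :
    PL n g = rl (tp g) ∧ (tp g = (24,0) ∨ tp g = (0,24) ∨ tp g = (0,0)) := by
  simp only [glueL, List.mem_cons, List.not_mem_nil, or_false] at hg
  rcases hg with rfl | rfl | rfl
  · exact ⟨PL_zero _ _, by decide⟩
  · exact ⟨PL_zero _ _, by decide⟩
  · exact ⟨PL_one _ (Or.inl rfl), by decide⟩

theorem glue_seg {g z : ℝ × ℝ} (hg : InTri g) (h : z ∈ openSegment ℝ (sd false g) (sd true g)) :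
    z.2 = g.2 - g.1 ∧ z.1 < g.1+g.2+1 ∧ -(g.1+g.2+1) < z.1 := by
  obtain ⟨a, b, a0, b0, hab, rfl⟩ := h
  obtain ⟨g1, g2, g3⟩ := hg
  have : b = 1 - a := by linarith
  subst this
  have k1 := mul_pos a0 (by linarith : 0 < g.1+g.2+1)
  have k2 := mul_pos b0 (by linarith : 0 < g.1+g.2+1)
  simp only [sd, cond_true, cond_false, Prod.fst_add, Prod.snd_add, Prod.smul_fst, Prod.smul_snd, smul_eq_mul]
  refine ⟨by ring, by linarith, by linarith⟩

theorem glue_disj {n : ℕ} {g : Cv} (hg : g ∈ glueL) {s : Bool} {w : ℝ × ℝ} (hw : InTri w)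
    (h : sd s w ∈ openSegment ℝ (sd false (PL n g)) (sd true (PL n g))) : False := by
  obtain ⟨e, hc⟩ := glue_PL (n := n) hg
  have hT : InTri (PL n g) := by
    rw [e]; rcases hc with hc | hc | hc <;> rw [hc] <;> simp [InTri, rl]
  obtain ⟨h1, h2, h3⟩ := glue_seg hT h
  obtain ⟨w1, w2, w3⟩ := hw
  rw [e] at h1 h2 h3
  rcases hc with hc | hc | hc <;> rw [hc] at h1 h2 h3 <;>
    cases s <;> simp [rl, sd] at h1 h2 h3 <;> linarith

/-- The drawing. -/
noncomputable def dr (n : ℕ) (u : Vt n) : ℝ × ℝ := sd u.1 (PL n (cd u))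

/-- The crossing edges of the drawing. -/
def xe (n : ℕ) (κ : Bool × Fin (n+2)) (b : Bool) : Sym2 (Vt n) :=
  s((κ.1, κ.2, (kt n κ.2 b).1.2), (κ.1, κ.2, (kt n κ.2 b).2.2))

theorem kt_depth (n t : ℕ) (b : Bool) : (kt n t b).1.1 = t ∧ (kt n t b).2.1 = t := by
  simp only [kt]; split_ifs <;> exact ⟨rfl, rfl⟩

theorem kt_role (n t : ℕ) (b b' : Bool) (r : Fin 4) (f1 : r = (kt n t b).1.2 ∨ r = (kt n t b).2.2)
    (f2 : r = (kt n t b').1.2 ∨ r = (kt n t b').2.2) : b = b' := by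
  by_cases h : t = n+1
  · simp only [kt, if_pos h] at f1 f2
    cases b <;> cases b' <;> first | rfl | (exfalso; simp at f1 f2; rcases f1 with rfl | rfl <;> simp at f2)
  · simp only [kt, if_neg h] at f1 f2
    cases b <;> cases b' <;> first | rfl | (exfalso; simp at f1 f2; rcases f1 with rfl | rfl <;> simp at f2)

theorem dr_ic (n : ℕ) : IsICPlanarDrawing (Gr n) (dr n) := by
  have g := good n
  have tri : ∀ u : Vt n, InTri (PL n (cd u)) := fun u => g.tri _ (cd_le u)
  have cs : ∀ u w : Vt n, u.1 = w.1 → (cd u, cd w) ∈ EL n → ∀ z, z ∈ openSegment ℝ (dr n u) (dr n w) →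
      ∃ x, x ∈ sg n (cd u, cd w) ∧ InTri x ∧ z = sd u.1 x := by
    intro u w h1 h2 z hz
    rw [dr, dr, ← h1] at hz
    obtain ⟨x, hx, rfl⟩ := sd_mem.1 hz
    exact ⟨x, hx, g.sgTri h2 hx, rfl⟩
  have gs : ∀ u w : Vt n, u.1 = false → w.1 = true → cd u = cd w → ∀ z, z ∈ openSegment ℝ (dr n u) (dr n w) →
      z ∈ openSegment ℝ (sd false (PL n (cd u))) (sd true (PL n (cd u))) := by
    intro u w h1 h2 h3 z hz
    rwa [dr, dr, ← h3, h1, h2] at hz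
  refine ic_of (GRel n) ?_ ?_ ?_ (xe n) ?_ ?_ ?_
  · intro u w h
    exact ((SimpleGraph.fromRel_adj _ _ _).1 h).2
  · intro u w h
    have h1 := sd_side (tri u) (tri w) h
    rw [dr, dr, h1] at h
    exact cd_inj h1 (g.inj _ _ (cd_le u) (cd_le w) (sd_inj _ h))
  · intro u w v hR n1 n2 hm
    rcases hR with ⟨h1, h2⟩ | ⟨h1, h2, h3, h4⟩
    · obtain ⟨x, hx, hxT, eq⟩ := cs u w h1 h2 _ hm
      have hs := sd_side (tri v) hxT eq
      rw [dr, hs] at eq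
      have eq := sd_inj _ eq
      refine g.nv _ h2 (cd v) (cd_le v) (fun e => n1 (cd_inj hs e)) (fun e => n2 (cd_inj (hs.trans h1) e)) ?_
      rw [eq]; exact hx
    · exact glue_disj h4 (tri v) (gs u w h1 h2 h3 _ hm)
  · intro u w u' w' hR hR' n1 n2 n3 n4 z z1 z2
    rcases hR with ⟨h1, h2⟩ | ⟨h1, h2, h3, h4⟩ <;> rcases hR' with ⟨h1', h2'⟩ | ⟨h1', h2', h3', h4'⟩
    · obtain ⟨x, hx, hxT, eq⟩ := cs u w h1 h2 _ z1
      obtain ⟨x', hx', hxT', eq'⟩ := cs u' w' h1' h2' _ z2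
      have hs := sd_side hxT hxT' (eq.symm.trans eq')
      have hxx : x = x' := by
        rw [← hs, eq] at eq'
        exact sd_inj _ eq'
      subst hxx
      obtain ⟨t, b, ht, k1, k2⟩ := g.cr _ h2 _ h2' (fun e => n1 (cd_inj hs e)) (fun e => n2 (cd_inj (hs.trans h1') e))
        (fun e => n3 (cd_inj (h1.symm.trans hs) e)) (fun e => n4 (cd_inj (h1.symm.trans (hs.trans h1')) e)) x hx hx'
      refine ⟨(u.1, ⟨t, by omega⟩), b, ?_, ?_⟩
      · have e1 : cd u = (kt n t b).1 := congrArg Prod.fst k1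
        have e2 : cd w = (kt n t b).2 := congrArg Prod.snd k1
        have d := kt_depth n t b
        simp only [xe]
        refine congrArg₂ (fun a b => s(a, b)) (cd_inj rfl ?_) (cd_inj h1.symm ?_)
        · rw [e1]; exact Prod.ext d.1 rfl
        · rw [e2]; exact Prod.ext d.2 rfl
      · have e1 : cd u' = (kt n t (!b)).1 := congrArg Prod.fst k2
        have e2 : cd w' = (kt n t (!b)).2 := congrArg Prod.snd k2
        have d := kt_depth n t (!b)
        simp only [xe]
        refine congrArg₂ (fun a b => s(a, b)) (cd_inj hs.symm ?_) (cd_inj (h1'.symm.trans hs.symm) ?_)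
        · rw [e1]; exact Prod.ext d.1 rfl
        · rw [e2]; exact Prod.ext d.2 rfl
    · obtain ⟨x, hx, hxT, rfl⟩ := cs u w h1 h2 _ z1
      exact (glue_disj h4' hxT (gs u' w' h1' h2' h3' _ z2)).elim
    · obtain ⟨x, hx, hxT, rfl⟩ := cs u' w' h1' h2' _ z2
      exact (glue_disj h4 hxT (gs u w h1 h2 h3 _ z1)).elim
    · exfalso
      have e1 := (glue_seg (tri u) (gs u w h1 h2 h3 _ z1)).1
      have e2 := (glue_seg (tri u') (gs u' w' h1' h2' h3' _ z2)).1
      have e3 := e1.symm.trans e2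
      rw [(glue_PL h4).1, (glue_PL h4').1] at e3
      have e4 : (tp (cd u)).2 - (tp (cd u)).1 = (tp (cd u')).2 - (tp (cd u')).1 := by
        simp only [rl] at e3; exact_mod_cast e3
      have key : ∀ a ∈ glueL, ∀ b ∈ glueL, (tp a).2 - (tp a).1 = (tp b).2 - (tp b).1 → a = b := by decide
      exact n1 (cd_inj (h1.trans h1'.symm) (key _ h4 _ h4' e4))
  · rintro ⟨s, t⟩ b ⟨s', t'⟩ b' v hv hv'
    simp only [xe, Sym2.mem_iff] at hv hv'
    have e1 : v.1 = s ∧ v.2.1 = t := by rcases hv with rfl | rfl <;> exact ⟨rfl, rfl⟩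
    have e2 : v.1 = s' ∧ v.2.1 = t' := by rcases hv' with rfl | rfl <;> exact ⟨rfl, rfl⟩
    obtain ⟨rfl, rfl⟩ := e1
    obtain ⟨rfl, rfl⟩ := e2
    refine ⟨rfl, ?_⟩
    have f1 : v.2.2 = (kt n v.2.1 b).1.2 ∨ v.2.2 = (kt n v.2.1 b).2.2 := hv.imp (fun h => congrArg (·.2.2) h) (fun h => congrArg (·.2.2) h)
    have f2 : v.2.2 = (kt n v.2.1 b').1.2 ∨ v.2.2 = (kt n v.2.1 b').2.2 := hv'.imp (fun h => congrArg (·.2.2) h) (fun h => congrArg (·.2.2) h)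
    exact kt_role _ _ _ _ _ f1 f2
  · rintro ⟨s, t⟩
    have key : ∀ b, edgeSeg (dr n) (xe n (s, t) b) = openSegment ℝ (sd s (PL n (kt n t b).1)) (sd s (PL n (kt n t b).2)) := by
      intro b
      have d := kt_depth n t b
      have d1 : ((t:ℕ), (kt n t b).1.2) = (kt n t b).1 := Prod.ext d.1.symm rfl
      have d2 : ((t:ℕ), (kt n t b).2.2) = (kt n t b).2 := Prod.ext d.2.symm rfl
      change openSegment ℝ (sd s (PL n ((t:ℕ), (kt n t b).1.2))) (sd s (PL n ((t:ℕ), (kt n t b).2.2))) = _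
      rw [d1, d2]
    rw [key, key]
    rintro z ⟨z1, z2⟩ z' ⟨z1', z2'⟩
    obtain ⟨w, hw, rfl⟩ := sd_mem.1 z1
    obtain ⟨w', hw', rfl⟩ := sd_mem.1 z1'
    obtain ⟨x, hx, eq⟩ := sd_mem.1 z2
    obtain ⟨x', hx', eq'⟩ := sd_mem.1 z2'
    have eq := sd_inj _ eq
    have eq' := sd_inj _ eq'
    subst eq eq'
    rw [g.once t (by omega) ⟨hw, hx⟩ ⟨hw', hx'⟩]

/-- Positions for the small case. -/
def sp : Fin 8 → ℤ × ℤ := ![(24,0), (0,24), (2,8), (8,2), (0,0), (100,101), (101,103), (102,107)]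

/-- Edges for the small case. -/
def sR (u w : Fin 8) : Prop := u < w ∧ w < 5

instance : DecidableRel sR := fun u w => by unfold sR; infer_instance

/-- The complete graph on five vertices with three isolated vertices. -/
def sG : SimpleGraph (Fin 8) := SimpleGraph.fromRel sR

/-- The two crossing edges. -/
def sx (_ : Unit) (b : Bool) : Sym2 (Fin 8) := if b then s(0, 2) else s(1, 3)

theorem sG_ic : IsICPlanarDrawing sG (fun u => rl (sp u)) := by
  refine ic_of sR ?_ ?_ ?_ sx ?_ ?_ ?_
  · intro u w h
    exact ((SimpleGraph.fromRel_adj _ _ _).1 h).2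
  · intro u w h
    have key : ∀ u w, sp u = sp w → u = w := by decide
    exact key _ _ (rl_inj h)
  · intro u w v h h1 h2
    have key : ∀ u w v, sR u w → v ≠ u → v ≠ w → io (sp u) (sp w) (sp v) ≠ 0 := by decide +kernel
    exact io_not_mem (key u w v h h1 h2)
  · intro u w u' w' h h' n1 n2 n3 n4 z z1 z2
    have key : ∀ u w, sR u w → ∀ u' w', sR u' w' → u ≠ u' → u ≠ w' → w ≠ u' → w ≠ w' →
      sepI (sp u) (sp w) (sp u') (sp w') ∨ sepI (sp u') (sp w') (sp u) (sp w) ∨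
      (u = 0 ∧ w = 2 ∧ u' = 1 ∧ w' = 3) ∨ (u' = 0 ∧ w' = 2 ∧ u = 1 ∧ w = 3) := by decide +kernel
    rcases key u w h u' w' h' n1 n2 n3 n4 with h | h | ⟨rfl, rfl, rfl, rfl⟩ | ⟨rfl, rfl, rfl, rfl⟩
    · exact (sepI_disj h z1 z2).elim
    · exact (sepI_disj h z2 z1).elim
    · exact ⟨(), true, rfl, rfl⟩
    · exact ⟨(), false, rfl, rfl⟩
  · intro κ b κ' b' v hv hv'
    refine ⟨rfl, ?_⟩
    cases κ; cases κ'
    revert b b' v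
    decide
  · intro κ
    exact io_subsingleton (p := sp 0) (q := sp 2) (r := sp 1) (s := sp 3) (by decide)

/-- IC-planar straight-line RAC drawings may require exponential area:
for every `k ≥ 1` there is an IC-planar graph with `8k` vertices such that every
IC-planar straight-line RAC drawing with all edges of length at least `1` has a
bounding box of area at least `1.09 ^ (8k)`. -/
theorem icplanar_rac_exponential_area : ∀ k : ℕ, 1 ≤ k →
    ∃ (V : Type) (inst : Fintype V) (G : SimpleGraph V),
      @Fintype.card V inst = 8 * k ∧
      (∃ ρ : V → ℝ × ℝ, IsICPlanarDrawing G ρ) ∧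
      ∀ ρ : V → ℝ × ℝ, IsICPlanarDrawing G ρ → IsRACDrawing G ρ →
        (∀ u v : V, G.Adj u v →
          1 ≤ Real.sqrt (((ρ u).1 - (ρ v).1) ^ 2 + ((ρ u).2 - (ρ v).2) ^ 2)) →
        (1.09 : ℝ) ^ (8 * k) ≤
          (sSup (Set.range fun v => (ρ v).1) - sInf (Set.range fun v => (ρ v).1)) *
          (sSup (Set.range fun v => (ρ v).2) - sInf (Set.range fun v => (ρ v).2)) := by
  intro k hk
  obtain ⟨_ | n, rfl⟩ : ∃ n, k = n + 1 := ⟨k - 1, by omega⟩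
  · refine ⟨Fin 8, inferInstance, sG, by simp, ⟨_, sG_ic⟩, ?_⟩
    intro ρ h hr hl
    have hq : IsK5 sG (fun i : Fin 5 => (i.castLE (by omega) : Fin 8)) := by
      have key : ∀ i j : Fin 5, i ≠ j → (i.castLE (by omega) : Fin 8) ≠ j.castLE (by omega) ∧
        (sR (i.castLE (by omega)) (j.castLE (by omega)) ∨ sR (j.castLE (by omega)) (i.castLE (by omega))) := by decide
      intro i j hij
      exact (SimpleGraph.fromRel_adj _ _ _).2 (key i j hij)
    refine ((pow_bound _).trans ?_).trans (k5_lower hq h hr hl)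
    norm_num
  · refine ⟨Vt n, inferInstance, Gr n, ?_, ⟨_, dr_ic n⟩, ?_⟩
    · simp only [Vt, Fintype.card_prod, Fintype.card_bool, Fintype.card_fin]; omega
    · intro ρ h hr hl
      exact (pow_bound _).trans ((Gr_chains n).lower h hr hl)
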